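/- Uniform ℓ²-Kazhdan constant: Let K be a field and Γ a finitely generated subgroup of GL_n(K) that is not virtually solvable. Then there exists ε > 0 such that for every finite symmetric generating set Σ of Γ with 1 ∈ Σ and every square-summable function f : Γ → ℂ (i.e. f ∈ ℓ²(Γ)), one has max_{s∈Σ} ‖s·f − f‖₂ ≥ ε·‖f‖₂, where (s·f)(x) = f(s⁻¹x) and ‖·‖₂ denotes the ℓ²(Γ) norm. In other words, the uniform ℓ²-Kazhdan constant κ_Γ = inf over finite symmetric generating sets of the optimal such ε is positive. -/

import Mathlib

open Matrix Pointwise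


namespace UKC

/-! ### Finitely additive means -/

/-- A finitely additive probability measure defined on all subsets. -/
structure IsMean {X : Type*} (m : Set X → ℝ) : Prop where
  nonneg : ∀ A, 0 ≤ m A
  univ : m Set.univ = 1
  union : ∀ A B, Disjoint A B → m (A ∪ B) = m A + m B

namespace IsMean
variable {X Y : Type*} {m : Set X → ℝ}

lemma mono (hm : IsMean m) {A B : Set X} (h : A ⊆ B) : m A ≤ m B := by
  have := hm.union A (B \ A) Set.disjoint_sdiff_right
  rw [Set.union_sdiff_cancel h] at this
  linarith [hm.nonneg (B \ A)]

lemma compl (hm : IsMean m) (A : Set X) : m A + m Aᶜ = 1 := by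
  rw [← hm.union A Aᶜ disjoint_compl_right, Set.union_compl_self, hm.univ]

lemma le_one (hm : IsMean m) (A : Set X) : m A ≤ 1 := by
  linarith [hm.compl A, hm.nonneg Aᶜ]

lemma empty (hm : IsMean m) : m ∅ = 0 := by
  have := hm.compl Set.univ
  rw [hm.univ, Set.compl_univ] at this
  linarith

lemma union_add_inter (hm : IsMean m) (A B : Set X) : m (A ∪ B) + m (A ∩ B) = m A + m B := by
  have h1 := hm.union (A \ B) B Set.disjoint_sdiff_left
  have h2 := hm.union (A \ B) (A ∩ B) (by
    rw [Set.disjoint_left]; rintro x hx hx'; exact hx.2 hx'.2)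
  rw [Set.sdiff_union_self] at h1
  rw [Set.sdiff_union_inter] at h2
  linarith

lemma union_le (hm : IsMean m) (A B : Set X) : m (A ∪ B) ≤ m A + m B := by
  linarith [hm.union_add_inter A B, hm.nonneg (A ∩ B)]

lemma map (hm : IsMean m) (f : X → Y) : IsMean (fun A => m (f ⁻¹' A)) where
  nonneg A := hm.nonneg _
  univ := by simpa using hm.univ
  union A B h := by
    show m (f ⁻¹' (A ∪ B)) = _
    rw [Set.preimage_union, hm.union _ _ (h.preimage f)]

lemma biUnion_le (hm : IsMean m) {ι : Type*} (s : Finset ι) (A : ι → Set X) :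
    m (⋃ a ∈ s, A a) ≤ ∑ a ∈ s, m (A a) := by
  classical
  induction s using Finset.induction_on with
  | empty => simp [hm.empty]
  | insert a s ha ih =>
    rw [Finset.set_biUnion_insert, Finset.sum_insert ha]
    linarith [hm.union_le (A a) (⋃ x ∈ s, A x)]

/-- If many sets have mass at least `c` and pairwise small intersections, there are few. -/
lemma card_bound (hm : IsMean m) {ι : Type*} (s : Finset ι) (A : ι → Set X) (c η : ℝ) (hη : 0 ≤ η)
    (h1 : ∀ a ∈ s, c ≤ m (A a)) (h2 : ∀ a ∈ s, ∀ b ∈ s, a ≠ b → m (A a ∩ A b) ≤ η) :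
    s.card * c ≤ m (⋃ a ∈ s, A a) + s.card * s.card * η := by
  classical
  induction s using Finset.induction_on with
  | empty => simp [hm.empty]
  | insert a s ha ih =>
    have ih' := ih (fun b hb => h1 b (Finset.mem_insert_of_mem hb))
      (fun b hb d hd => h2 b (Finset.mem_insert_of_mem hb) d (Finset.mem_insert_of_mem hd))
    rw [Finset.set_biUnion_insert, Finset.card_insert_of_notMem ha]
    have e := hm.union_add_inter (A a) (⋃ x ∈ s, A x)
    have h3 : m (A a ∩ ⋃ x ∈ s, A x) ≤ s.card * η := by
      rw [Set.inter_iUnion₂]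
      refine (hm.biUnion_le s _).trans ?_
      rw [← nsmul_eq_mul]
      refine Finset.sum_le_card_nsmul _ _ _ fun b hb => ?_
      exact h2 a (Finset.mem_insert_self _ _) b (Finset.mem_insert_of_mem hb)
        (fun h => ha (h ▸ hb))
    have h4 := h1 a (Finset.mem_insert_self _ _)
    push_cast
    nlinarith [mul_nonneg (Nat.cast_nonneg (α := ℝ) s.card) hη]

end IsMean

/-! ### Sup norm attached to an absolute value -/
section nv
variable {K : Type*} [Field K] (v : AbsoluteValue K ℝ) {n : ℕ}

/-- sup norm -/
noncomputable def nv (x : Fin n → K) : ℝ := ⨆ i, v (x i)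

lemma le_nv (x : Fin n → K) (i : Fin n) : v (x i) ≤ nv v x :=
  le_ciSup (f := fun i => v (x i)) (Set.finite_range _).bddAbove i

lemma nv_le {x : Fin n → K} {c : ℝ} (hc : 0 ≤ c) (h : ∀ i, v (x i) ≤ c) : nv v x ≤ c :=
  Real.iSup_le h hc

lemma nv_nonneg (x : Fin n → K) : 0 ≤ nv v x := Real.iSup_nonneg fun _ => v.nonneg _

lemma nv_smul (c : K) (x : Fin n → K) : nv v (c • x) = v c * nv v x := by
  simp only [nv, Pi.smul_apply, smul_eq_mul, map_mul]
  rw [Real.mul_iSup_of_nonneg (v.nonneg _)]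

lemma nv_eq_zero {x : Fin n → K} : nv v x = 0 ↔ x = 0 := by
  constructor
  · intro h
    funext i
    have := le_nv v x i
    rw [h] at this
    simpa using le_antisymm this (v.nonneg _)
  · rintro rfl
    apply le_antisymm (nv_le v le_rfl (by simp)) (nv_nonneg v _)

lemma nv_pos {x : Fin n → K} (hx : x ≠ 0) : 0 < nv v x :=
  lt_of_le_of_ne (nv_nonneg v x) fun h => hx ((nv_eq_zero v).1 h.symm)

lemma nv_add (x y : Fin n → K) : nv v (x + y) ≤ nv v x + nv v y :=
  nv_le v (add_nonneg (nv_nonneg v x) (nv_nonneg v y)) fun i =>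
    (v.add_le _ _).trans (add_le_add (le_nv v x i) (le_nv v y i))

lemma exists_nv (hn : 0 < n) (x : Fin n → K) : ∃ i, v (x i) = nv v x := by
  have : Nonempty (Fin n) := ⟨⟨0, hn⟩⟩
  exact exists_eq_ciSup_of_finite

lemma v_sum_le {ι : Type*} (s : Finset ι) (f : ι → K) : v (∑ i ∈ s, f i) ≤ ∑ i ∈ s, v (f i) := by
  classical
  induction s using Finset.induction_on with
  | empty => simp
  | insert a s ha ih =>
    rw [Finset.sum_insert ha, Finset.sum_insert ha]
    exact (v.add_le _ _).trans (by linarith)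

lemma v_dot_le (f x : Fin n → K) {c : ℝ} (hf : ∀ i, v (f i) ≤ c) :
    v (f ⬝ᵥ x) ≤ n * c * nv v x := by
  refine (v_sum_le v _ _).trans ?_
  have : ∀ i ∈ (Finset.univ : Finset (Fin n)), v (f i * x i) ≤ c * nv v x := fun i _ => by
    rw [map_mul]
    exact mul_le_mul (hf i) (le_nv v x i) (v.nonneg _) ((v.nonneg _).trans (hf i))
  refine (Finset.sum_le_card_nsmul _ _ _ this).trans ?_
  simp [mul_assoc]

lemma nv_mulVec_le (M : Matrix (Fin n) (Fin n) K) (x : Fin n → K) {c : ℝ} (hc : 0 ≤ c)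
    (hM : ∀ i k, v (M i k) ≤ c) : nv v (M *ᵥ x) ≤ n * c * nv v x :=
  nv_le v (by have := nv_nonneg v x; positivity) fun i => v_dot_le v (M i) x (hM i)

lemma v_det_le {ι : Type*} [Fintype ι] [DecidableEq ι] (M : Matrix ι ι K) {c : ℝ}
    (hM : ∀ i k, v (M i k) ≤ c) :
    v M.det ≤ (Fintype.card ι).factorial * c ^ Fintype.card ι := by
  rw [Matrix.det_apply]
  refine (v_sum_le v _ _).trans ?_
  have : ∀ σ ∈ (Finset.univ : Finset (Equiv.Perm ι)),
      v (Equiv.Perm.sign σ • ∏ i, M (σ i) i) ≤ c ^ Fintype.card ι := fun σ _ => by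
    have h1 : v (Equiv.Perm.sign σ • ∏ i, M (σ i) i) = v (∏ i, M (σ i) i) := by
      rcases Int.units_eq_one_or (Equiv.Perm.sign σ) with h | h <;> simp [h]
    rw [h1, map_prod]
    refine (Finset.prod_le_prod (fun i _ => v.nonneg _) (fun i _ => hM _ _)).trans ?_
    simp
  refine (Finset.sum_le_card_nsmul _ _ _ this).trans ?_
  simp [Fintype.card_perm]

end nv

end UKC


namespace UKC

/-! ### The ultraproduct-type residue field -/
section kappa
variable {K : Type*} [Field K] (v : AbsoluteValue K ℝ) (R : ℕ → ℝ) (hR : ∀ j, 2 ≤ R j)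

/-- the ultrafilter -/
noncomputable abbrev om : Ultrafilter ℕ := Filter.hyperfilter ℕ

lemma om_ge (k : ℕ) : ∀ᶠ j in (om : Filter ℕ), k ≤ j :=
  Nat.hyperfilter_le_atTop (Filter.eventually_ge_atTop k)

/-- moderately growing sequences -/
def BB : Subring (ℕ → K) where
  carrier := {x | ∃ k : ℕ, ∀ᶠ j in (om : Filter ℕ), v (x j) ≤ R j ^ k}
  mul_mem' := by
    rintro a b ⟨k, hk⟩ ⟨l, hl⟩
    refine ⟨k + l, ?_⟩
    filter_upwards [hk, hl] with j h1 h2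
    rw [Pi.mul_apply, map_mul, pow_add]
    exact mul_le_mul h1 h2 (v.nonneg _) (pow_nonneg (by linarith [hR j]) _)
  one_mem' := ⟨0, by simp⟩
  add_mem' := by
    rintro a b ⟨k, hk⟩ ⟨l, hl⟩
    refine ⟨k + l + 1, ?_⟩
    filter_upwards [hk, hl] with j h1 h2
    have h0 : (1 : ℝ) ≤ R j := by linarith [hR j]
    have e1 : R j ^ k ≤ R j ^ (k + l) := pow_le_pow_right₀ h0 (by omega)
    have e2 : R j ^ l ≤ R j ^ (k + l) := pow_le_pow_right₀ h0 (by omega)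
    rw [pow_succ]
    refine (v.add_le _ _).trans ?_
    have : 0 ≤ R j ^ (k + l) := by positivity
    nlinarith [hR j]
  zero_mem' := ⟨0, by simp⟩
  neg_mem' := by
    rintro a ⟨k, hk⟩
    exact ⟨k, by simpa using hk⟩

/-- rapidly decreasing sequences -/
def II : Ideal (BB v R hR) where
  carrier := {x | ∀ k : ℕ, ∀ᶠ j in (om : Filter ℕ), v (x.1 j) ≤ (R j ^ k)⁻¹}
  add_mem' := by
    intro a b ha hb k
    filter_upwards [ha (k + 1), hb (k + 1)] with j h1 h2
    have h0 : 0 < R j := by linarith [hR j]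
    have e : (R j ^ (k + 1))⁻¹ + (R j ^ (k + 1))⁻¹ ≤ (R j ^ k)⁻¹ := by
      rw [pow_succ, mul_inv]
      have : (R j)⁻¹ ≤ 2⁻¹ := inv_anti₀ (by norm_num) (hR j)
      have h3 : 0 ≤ (R j ^ k)⁻¹ := by positivity
      nlinarith
    exact (v.add_le _ _).trans (by linarith)
  zero_mem' := by
    intro k
    filter_upwards with j
    have h0 : 0 < R j := by linarith [hR j]
    simp only [ZeroMemClass.coe_zero, Pi.zero_apply, map_zero]
    positivity
  smul_mem' := by
    rintro ⟨c, l, hc⟩ x hx k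
    filter_upwards [hc, hx (k + l)] with j h1 h2
    have h0 : 0 < R j := by linarith [hR j]
    show v (c j * x.1 j) ≤ _
    rw [map_mul]
    refine (mul_le_mul h1 h2 (v.nonneg _) (by positivity)).trans (le_of_eq ?_)
    rw [pow_add]
    field_simp

lemma II_max : (II v R hR).IsMaximal := by
  rw [Ideal.isMaximal_iff]
  constructor
  · intro h
    have h1 := h 1
    obtain ⟨j, hj⟩ := h1.exists
    have h0 := hR j
    simp only [OneMemClass.coe_one, Pi.one_apply, map_one, pow_one] at hj
    have : (R j)⁻¹ ≤ 2⁻¹ := inv_anti₀ (by norm_num) (hR j)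
    norm_num at this
    linarith
  · intro J x hIJ hx hxJ
    have : ∃ k : ℕ, ∀ᶠ j in (om : Filter ℕ), (R j ^ k)⁻¹ < v (x.1 j) := by
      by_contra hcon
      push Not at hcon
      apply hx
      intro k
      exact hcon k
    obtain ⟨k, hk⟩ := this
    let y : BB v R hR := ⟨fun j => (x.1 j)⁻¹, k, by
      filter_upwards [hk] with j hj
      have h0 : 0 < R j := by linarith [hR j]
      rw [map_inv₀]
      exact inv_le_of_inv_le₀ (by positivity) hj.le⟩
    have h1 : y * x - 1 ∈ II v R hR := by
      intro l
      filter_upwards [hk] with j hj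
      have h0 : 0 < R j := by linarith [hR j]
      have hxj : x.1 j ≠ 0 := by
        intro h
        rw [h, map_zero] at hj
        have : 0 < (R j ^ k)⁻¹ := by positivity
        linarith
      show v ((x.1 j)⁻¹ * x.1 j - 1) ≤ _
      rw [inv_mul_cancel₀ hxj, sub_self, map_zero]
      positivity
    have h2 := J.sub_mem (J.mul_mem_left y hxJ) (hIJ h1)
    simpa using h2

/-- evaluation at `j` -/
def ev (j : ℕ) : BB v R hR →+* K := (Pi.evalRingHom (fun _ : ℕ => K) j).comp (BB v R hR).subtype

@[simp] lemma ev_apply (j : ℕ) (x : BB v R hR) : ev v R hR j x = x.1 j := rfl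

/-- the residue field -/
def kap : Type _ := BB v R hR ⧸ II v R hR

/-- field structure on the residue field -/
@[irreducible] noncomputable def kapField : Field (kap v R hR) :=
  @Ideal.Quotient.field _ _ (II v R hR) (II_max v R hR)

noncomputable instance : Field (kap v R hR) := kapField v R hR

/-- the residue map exists -/
lemma exists_phi : ∃ p : BB v R hR →+* kap v R hR, Function.Surjective p ∧ ∀ x : BB v R hR,
    p x = 0 ↔ ∀ k : ℕ, ∀ᶠ j in (om : Filter ℕ), v (x.1 j) ≤ (R j ^ k)⁻¹ := by
  unfold instFieldKap kapField
  exact ⟨Ideal.Quotient.mk (II v R hR), Ideal.Quotient.mk_surjective, fun x =>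
    Ideal.Quotient.eq_zero_iff_mem⟩

/-- the residue map -/
noncomputable def phi : BB v R hR →+* kap v R hR := (exists_phi v R hR).choose

lemma phi_surj : Function.Surjective (phi v R hR) := (exists_phi v R hR).choose_spec.1

lemma phi_eq_zero (x : BB v R hR) :
    phi v R hR x = 0 ↔ ∀ k : ℕ, ∀ᶠ j in (om : Filter ℕ), v (x.1 j) ≤ (R j ^ k)⁻¹ :=
  (exists_phi v R hR).choose_spec.2 x

end kappa
end UKC


namespace UKC

section mass
variable {K : Type*} [Field K] (v : AbsoluteValue K ℝ) (R : ℕ → ℝ) (hR : ∀ j, 2 ≤ R j) {n : ℕ}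

/-- evaluate a form at `j` -/
def evf (f : Fin n → BB v R hR) (j : ℕ) : Fin n → K := fun i => (f i).1 j

/-- reduction of a form -/
noncomputable def phf (f : Fin n → BB v R hR) : Fin n → kap v R hR := fun i => phi v R hR (f i)

lemma phf_surj (w : Fin n → kap v R hR) : ∃ f, phf v R hR f = w := by
  choose f hf using fun i => phi_surj v R hR (w i)
  exact ⟨f, funext hf⟩

/-- neighbourhood of the common kernel of forms -/
def Nb (k : ℕ) (F : Set (Fin n → BB v R hR)) (j : ℕ) : Set (Fin n → K) :=
  {x | ∀ f ∈ F, v (evf v R hR f j ⬝ᵥ x) ≤ (R j ^ k)⁻¹ * nv v x}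

/-- asymptotic mass at least `c` near the annihilator of `W` -/
def Mass (m : ℕ → Set (Fin n → K) → ℝ) (c : ℝ) (W : Submodule (kap v R hR) (Fin n → kap v R hR)) :
    Prop :=
  ∀ F : Set (Fin n → BB v R hR), F.Finite → (∀ f ∈ F, phf v R hR f ∈ W) → ∀ k : ℕ, ∀ c' < c,
    ∀ᶠ j in (om : Filter ℕ), c' ≤ m j (Nb v R hR k F j)

/-- closed under nonzero scalars -/
def IsCone (A : Set (Fin n → K)) : Prop := ∀ c : K, c ≠ 0 → ∀ x, x ∈ A → c • x ∈ A

lemma R_pos (R : ℕ → ℝ) (hR : ∀ j, 2 ≤ R j) (j : ℕ) : 0 < R j := by linarith [hR j]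

lemma R_anti (R : ℕ → ℝ) (hR : ∀ j, 2 ≤ R j) {k l : ℕ} (h : k ≤ l) (j : ℕ) : (R j ^ l)⁻¹ ≤ (R j ^ k)⁻¹ := by
  have := R_pos R hR j
  exact inv_anti₀ (by positivity) (pow_le_pow_right₀ (by linarith [hR j]) h)

lemma R_half (R : ℕ → ℝ) (hR : ∀ j, 2 ≤ R j) (k j : ℕ) : 2 * (R j ^ (k + 1))⁻¹ ≤ (R j ^ k)⁻¹ := by
  have h0 := R_pos R hR j
  rw [pow_succ, mul_inv]
  have : (R j)⁻¹ ≤ 2⁻¹ := inv_anti₀ (by norm_num) (hR j)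
  have h3 : 0 ≤ (R j ^ k)⁻¹ := by positivity
  nlinarith

lemma R_nat (R : ℕ → ℝ) (hR : ∀ j, 2 ≤ R j) (n j : ℕ) : (n : ℝ) ≤ R j ^ n := by
  have h1 : (n : ℝ) ≤ 2 ^ n := by exact_mod_cast (Nat.lt_two_pow_self).le
  exact h1.trans (pow_le_pow_left₀ (by norm_num) (hR j) n)

lemma R_cancel (R : ℕ → ℝ) (hR : ∀ j, 2 ≤ R j) (a b j : ℕ) : R j ^ a * (R j ^ (b + a))⁻¹ = (R j ^ b)⁻¹ := by
  have := R_pos R hR j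
  rw [pow_add]
  field_simp

lemma Nb_cone (k : ℕ) (F : Set (Fin n → BB v R hR)) (j : ℕ) : IsCone (Nb v R hR k F j) := by
  intro c hc x hx f hf
  rw [dotProduct_smul, smul_eq_mul, map_mul, nv_smul]
  have := hx f hf
  have h := v.nonneg c
  nlinarith

lemma Nb_anti {k l : ℕ} (h : k ≤ l) (F : Set (Fin n → BB v R hR)) (j : ℕ) :
    Nb v R hR l F j ⊆ Nb v R hR k F j := fun x hx f hf =>
  (hx f hf).trans (mul_le_mul_of_nonneg_right (R_anti R hR h j) (nv_nonneg v x))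

lemma ev_bound {ι : Type*} [Finite ι] (b : ι → BB v R hR) :
    ∃ e : ℕ, ∀ᶠ j in (om : Filter ℕ), ∀ i, v ((b i).1 j) ≤ R j ^ e := by
  have := Fintype.ofFinite ι
  choose e he using fun i => (b i).2
  refine ⟨∑ i, e i, ?_⟩
  rw [Filter.eventually_all]
  intro i
  filter_upwards [he i] with j hj
  exact hj.trans (pow_le_pow_right₀ (by linarith [hR j])
    (Finset.single_le_sum (fun _ _ => Nat.zero_le _) (Finset.mem_univ i)))

lemma small_form (f : Fin n → BB v R hR) (hf : phf v R hR f = 0) (k : ℕ) :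
    ∀ᶠ j in (om : Filter ℕ), ∀ x, v (evf v R hR f j ⬝ᵥ x) ≤ (R j ^ k)⁻¹ * nv v x := by
  have h1 : ∀ᶠ j in (om : Filter ℕ), ∀ i, v ((f i).1 j) ≤ (R j ^ (k + n))⁻¹ := by
    rw [Filter.eventually_all]
    intro i
    exact (phi_eq_zero v R hR (f i)).1 (congrFun hf i) (k + n)
  filter_upwards [h1] with j hj x
  refine (v_dot_le v (evf v R hR f j) x hj).trans ?_
  refine mul_le_mul_of_nonneg_right ?_ (nv_nonneg v x)
  rw [← R_cancel R hR n k j]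
  have := R_pos R hR j
  exact mul_le_mul_of_nonneg_right (R_nat R hR n j) (by positivity)

lemma evf_add (f g : Fin n → BB v R hR) (j : ℕ) :
    evf v R hR (f + g) j = evf v R hR f j + evf v R hR g j := rfl

lemma evf_smul (b : BB v R hR) (g : Fin n → BB v R hR) (j : ℕ) :
    evf v R hR (b • g) j = b.1 j • evf v R hR g j := rfl

lemma phf_add (f g : Fin n → BB v R hR) :
    phf v R hR (f + g) = phf v R hR f + phf v R hR g := by
  funext i; simp [phf]

lemma phf_sub (f g : Fin n → BB v R hR) :
    phf v R hR (f - g) = phf v R hR f - phf v R hR g := by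
  funext i; simp [phf]

lemma phf_smul (b : BB v R hR) (g : Fin n → BB v R hR) :
    phf v R hR (b • g) = phi v R hR b • phf v R hR g := by
  funext i; simp [phf]

lemma near_form (f g : Fin n → BB v R hR) (hfg : phf v R hR f = phf v R hR g) (k : ℕ) :
    ∀ᶠ j in (om : Filter ℕ), ∀ x, v (evf v R hR f j ⬝ᵥ x) ≤
      v (evf v R hR g j ⬝ᵥ x) + (R j ^ k)⁻¹ * nv v x := by
  have := small_form v R hR (f - g) (by rw [phf_sub, hfg, sub_self]) k
  filter_upwards [this] with j hj x
  have e : evf v R hR f j = evf v R hR g j + evf v R hR (f - g) j := by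
    rw [← evf_add, add_sub_cancel]
  rw [e, add_dotProduct]
  exact (v.add_le _ _).trans (by linarith [hj x])

lemma gen_one (G : Set (Fin n → BB v R hR)) (w : Fin n → kap v R hR)
    (hw : w ∈ Submodule.span (kap v R hR) (phf v R hR '' G)) :
    ∀ f, phf v R hR f = w → ∀ k, ∃ k', ∀ᶠ j in (om : Filter ℕ),
      Nb v R hR k' G j ⊆ Nb v R hR k {f} j := by
  induction hw using Submodule.span_induction with
  | mem w hw =>
    obtain ⟨g, hg, rfl⟩ := hw
    intro f hf k
    refine ⟨k + 1, ?_⟩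
    filter_upwards [near_form v R hR f g hf (k + 1)] with j hj x hx f' hf'
    rw [Set.mem_singleton_iff.1 hf']
    have h1 := hx g hg
    have h2 := mul_le_mul_of_nonneg_right (R_half R hR k j) (nv_nonneg v x)
    linarith [hj x]
  | zero =>
    intro f hf k
    refine ⟨0, ?_⟩
    filter_upwards [small_form v R hR f hf k] with j hj x _ f' hf'
    rw [Set.mem_singleton_iff.1 hf']
    exact hj x
  | add w1 w2 h1 h2 ih1 ih2 =>
    intro f hf k
    obtain ⟨f1, hf1⟩ := phf_surj v R hR w1
    obtain ⟨k1, hk1⟩ := ih1 f1 hf1 (k + 1)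
    obtain ⟨k2, hk2⟩ := ih2 (f - f1) (by rw [phf_sub, hf, hf1, add_sub_cancel_left]) (k + 1)
    refine ⟨max k1 k2, ?_⟩
    filter_upwards [hk1, hk2] with j e1 e2 x hx f' hf'
    rw [Set.mem_singleton_iff.1 hf']
    have h1 := e1 (Nb_anti v R hR (le_max_left k1 k2) G j hx) f1 rfl
    have h2 := e2 (Nb_anti v R hR (le_max_right k1 k2) G j hx) (f - f1) rfl
    have e : evf v R hR f j = evf v R hR f1 j + evf v R hR (f - f1) j := by
      rw [← evf_add, add_sub_cancel]
    have h3 := mul_le_mul_of_nonneg_right (R_half R hR k j) (nv_nonneg v x)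
    rw [e, add_dotProduct]
    exact (v.add_le _ _).trans (by linarith)
  | smul c w hw ih =>
    intro f hf k
    obtain ⟨b, rfl⟩ := phi_surj v R hR c
    obtain ⟨g, rfl⟩ := phf_surj v R hR w
    obtain ⟨e, he⟩ := b.2
    obtain ⟨k1, hk1⟩ := ih g rfl (k + 1 + e)
    refine ⟨k1, ?_⟩
    filter_upwards [hk1, he, near_form v R hR f (b • g) (by rw [hf, phf_smul]) (k + 1)]
      with j e1 e2 e3 x hx f' hf'
    rw [Set.mem_singleton_iff.1 hf']
    have h1 := e1 hx g rfl
    have h2 := e3 x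
    rw [evf_smul, smul_dotProduct, smul_eq_mul, map_mul] at h2
    have h3 := mul_le_mul_of_nonneg_right (R_half R hR k j) (nv_nonneg v x)
    have h4 := mul_le_mul e2 h1 (v.nonneg _) (by have := R_pos R hR j; positivity)
    rw [← mul_assoc, R_cancel R hR] at h4
    linarith

lemma gen (G F : Set (Fin n → BB v R hR)) (hF : F.Finite)
    (h : ∀ f ∈ F, phf v R hR f ∈ Submodule.span (kap v R hR) (phf v R hR '' G)) (k : ℕ) :
    ∃ k', ∀ᶠ j in (om : Filter ℕ), Nb v R hR k' G j ⊆ Nb v R hR k F j := by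
  induction F, hF using Set.Finite.induction_on with
  | empty => exact ⟨0, by filter_upwards with j x _ f hf; exact hf.elim⟩
  | @insert f F _ _ ih =>
    obtain ⟨k1, h1⟩ := ih fun g hg => h g (Set.mem_insert_of_mem _ hg)
    obtain ⟨k2, h2⟩ := gen_one v R hR G _ (h f (Set.mem_insert _ _)) f rfl k
    refine ⟨max k1 k2, ?_⟩
    filter_upwards [h1, h2] with j e1 e2 x hx g hg
    rcases Set.mem_insert_iff.1 hg with rfl | hg
    · exact e2 (Nb_anti v R hR (le_max_right k1 k2) G j hx) g rfl
    · exact e1 (Nb_anti v R hR (le_max_left k1 k2) G j hx) g hg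

variable {m : ℕ → Set (Fin n → K) → ℝ}

lemma mass_span (hm : ∀ j, IsMean (m j)) (c : ℝ) (g : Fin n → BB v R hR)
    (h : ∀ k : ℕ, ∀ c' < c, ∀ᶠ j in (om : Filter ℕ), c' ≤ m j (Nb v R hR k {g} j)) :
    Mass v R hR m c (Submodule.span _ {phf v R hR g}) := by
  intro F hF hFW k c' hc'
  obtain ⟨k', hk'⟩ := gen v R hR {g} F hF (by simpa using hFW) k
  filter_upwards [hk', h k' c' hc'] with j h1 h2
  exact h2.trans ((hm j).mono h1)

/-- The reduction of a matrix -/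
noncomputable def phM (h : Matrix (Fin n) (Fin n) (BB v R hR)) : Matrix (Fin n) (Fin n) (kap v R hR) :=
  h.map (phi v R hR)

/-- evaluation of a matrix -/
def evM (h : Matrix (Fin n) (Fin n) (BB v R hR)) (j : ℕ) : Matrix (Fin n) (Fin n) K :=
  h.map (ev v R hR j)

lemma phf_vecMul (f : Fin n → BB v R hR) (h : Matrix (Fin n) (Fin n) (BB v R hR)) :
    phf v R hR (f ᵥ* h) = phf v R hR f ᵥ* phM v R hR h := by
  funext i
  exact RingHom.map_vecMul (phi v R hR) h f i

lemma evf_vecMul (f : Fin n → BB v R hR) (h : Matrix (Fin n) (Fin n) (BB v R hR)) (j : ℕ) :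
    evf v R hR (f ᵥ* h) j = evf v R hR f j ᵥ* evM v R hR h j := by
  funext i
  exact RingHom.map_vecMul (ev v R hR j) h f i

lemma mass_map (hm : ∀ j, IsMean (m j)) {c : ℝ} {W} (hW : Mass v R hR m c W)
    (h : Matrix (Fin n) (Fin n) (BB v R hR))
    (hh : ∀ᶠ j in (om : Filter ℕ), ∀ A : Set (Fin n → K), IsCone A →
      |m j {x | evM v R hR h j *ᵥ x ∈ A} - m j A| ≤ 1 / ((j : ℝ) + 1)) :
    Mass v R hR m c (W.map (phM v R hR h).vecMulLinear) := by
  intro F hF hFW k c' hc'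
  have hw : ∀ f ∈ F, ∃ w : Fin n → BB v R hR, phf v R hR w ∈ W ∧
      phf v R hR f = phf v R hR (w ᵥ* h) := by
    intro f hf
    obtain ⟨w, hw, e⟩ := hFW f hf
    obtain ⟨w', rfl⟩ := phf_surj v R hR w
    exact ⟨w', hw, by rw [phf_vecMul, ← e]; rfl⟩
  choose! w hw1 hw2 using hw
  obtain ⟨e, he⟩ := ev_bound v R hR (fun p : Fin n × Fin n => h p.1 p.2)
  have hmain : ∀ᶠ j in (om : Filter ℕ),
      {x | evM v R hR h j *ᵥ x ∈ Nb v R hR (k + 1 + (n + e)) (w '' F) j} ⊆ Nb v R hR k F j := by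
    have h1 : ∀ᶠ j in (om : Filter ℕ), ∀ f ∈ F, ∀ x, v (evf v R hR f j ⬝ᵥ x) ≤
      v (evf v R hR (w f ᵥ* h) j ⬝ᵥ x) + (R j ^ (k + 1))⁻¹ * nv v x :=
      (Filter.eventually_all_finite hF).2 fun f hf =>
        near_form v R hR f (w f ᵥ* h) (hw2 f hf) (k + 1)
    filter_upwards [h1, he] with j e1 e2 x hx f hf
    have h2 := e1 f hf x
    have h3 := hx (w f) ⟨f, hf, rfl⟩
    rw [evf_vecMul, ← dotProduct_mulVec] at h2
    have hp := R_pos R hR j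
    have h4 : nv v (evM v R hR h j *ᵥ x) ≤ R j ^ (n + e) * nv v x := by
      refine (nv_mulVec_le v _ x (by positivity : 0 ≤ R j ^ e)
        (fun i l => e2 (i, l))).trans ?_
      refine mul_le_mul_of_nonneg_right ?_ (nv_nonneg v x)
      rw [pow_add]
      exact mul_le_mul_of_nonneg_right (R_nat R hR n j) (by positivity)
    have h5 := mul_le_mul_of_nonneg_left h4
      (by positivity : 0 ≤ (R j ^ (k + 1 + (n + e)))⁻¹)
    rw [← mul_assoc, mul_comm _ (R j ^ (n + e)), R_cancel R hR] at h5
    have h6 := mul_le_mul_of_nonneg_right (R_half R hR k j) (nv_nonneg v x)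
    linarith
  obtain ⟨c'', hc1, hc2⟩ := exists_between hc'
  obtain ⟨N, hN⟩ := exists_nat_one_div_lt (sub_pos.2 hc1)
  filter_upwards [hmain, hh, hW (w '' F) (hF.image _) (by
    rintro _ ⟨f, hf, rfl⟩; exact hw1 f hf) (k + 1 + (n + e)) c'' hc2, om_ge N] with j e1 e2 e3 e4
  have e5 := e2 _ (Nb_cone v R hR (k + 1 + (n + e)) (w '' F) j)
  have e6 := (hm j).mono e1
  have e7 : 1 / ((j : ℝ) + 1) ≤ 1 / ((N : ℝ) + 1) :=
    one_div_le_one_div_of_le (by positivity) (by have : (N : ℝ) ≤ j := by exact_mod_cast e4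
                                                 linarith)
  rw [abs_le] at e5
  linarith [e5.1]

lemma mass_top (hm : ∀ j, IsMean (m j)) (hm0 : ∀ j, m j {0} = 0) {c : ℝ} (hc : 0 < c) :
    ¬ Mass v R hR m c ⊤ := by
  intro h
  have := h (Set.range fun i : Fin n => Pi.single i (1 : BB v R hR)) (Set.finite_range _)
    (by simp) 1 (c / 2) (by linarith)
  obtain ⟨j, hj⟩ := this.exists
  have h1 : Nb v R hR 1 (Set.range fun i : Fin n => Pi.single i (1 : BB v R hR)) j ⊆ {0} := by
    intro x hx
    have h2 : ∀ i, v (x i) ≤ (R j ^ 1)⁻¹ * nv v x := by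
      intro i
      have := hx _ ⟨i, rfl⟩
      have e : evf v R hR (Pi.single i (1 : BB v R hR)) j = Pi.single i 1 := by
        funext l
        by_cases hl : l = i
        · subst hl; simp [evf]
        · simp [evf, hl]
      rw [e, single_one_dotProduct] at this
      exact this
    have hp := R_pos R hR j
    have h3 := nv_le v (by have := nv_nonneg v x; positivity) h2
    have h4 : (R j ^ 1)⁻¹ ≤ 2⁻¹ := by rw [pow_one]; exact inv_anti₀ (by norm_num) (hR j)
    have h5 := nv_nonneg v x
    exact (nv_eq_zero v).1 (by nlinarith)
  have := (hm j).mono h1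
  rw [hm0] at this
  linarith

/-- Finitely many subspaces of maximal rank have mass `c`. -/
lemma mass_bound (hm : ∀ j, IsMean (m j)) {c : ℝ} (hc : 0 < c) (ρ : ℕ)
    (hρ : ∀ W, (∃ c' > 0, Mass v R hR m c' W) → Module.finrank (kap v R hR) W ≤ ρ)
    (s : Finset (Submodule (kap v R hR) (Fin n → kap v R hR)))
    (hs : ∀ W ∈ s, Mass v R hR m c W ∧ Module.finrank (kap v R hR) W = ρ) :
    (s.card : ℝ) ≤ 4 / c := by
  classical
  -- finite generating sets
  have hgen : ∀ W : Submodule (kap v R hR) (Fin n → kap v R hR), ∃ G : Set (Fin n → BB v R hR),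
      G.Finite ∧ Submodule.span _ (phf v R hR '' G) = W := by
    intro W
    obtain ⟨t, ht⟩ := (IsNoetherian.noetherian W)
    choose g hg using phf_surj (n := n) v R hR
    refine ⟨g '' (t : Set _), t.finite_toSet.image _, ?_⟩
    rw [← Set.image_comp]
    have : (phf v R hR ∘ g) = id := funext hg
    rw [this, Set.image_id, ht]
  choose G hG1 hG2 using hgen
  by_contra hlt
  push Not at hlt
  have hcard : 0 < (s.card : ℝ) := lt_trans (by positivity) hlt
  set η : ℝ := 1 / (s.card * s.card) with hη
  have hηp : 0 < η := by positivity
  have hpair : ∀ W1 ∈ s, ∀ W2 ∈ s, W1 ≠ W2 → ∃ k, ∀ᶠ j in (om : Filter ℕ),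
      m j (Nb v R hR k (G W1) j ∩ Nb v R hR k (G W2) j) ≤ η := by
    intro W1 h1 W2 h2 hne
    have hnm : ¬ Mass v R hR m η (W1 ⊔ W2) := by
      intro hM
      have hle := hρ _ ⟨η, hηp, hM⟩
      have e1 := Submodule.eq_of_le_of_finrank_le (le_sup_left : W1 ≤ W1 ⊔ W2)
        (by rw [(hs W1 h1).2]; exact hle)
      have e2 := Submodule.eq_of_le_of_finrank_le (le_sup_right : W2 ≤ W1 ⊔ W2)
        (by rw [(hs W2 h2).2]; exact hle)
      exact hne (e1.trans e2.symm)
    simp only [Mass] at hnm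
    push Not at hnm
    obtain ⟨F, hF, hFW, k, c', hc', hev⟩ := hnm
    have hev' : ∀ᶠ j in (om : Filter ℕ), m j (Nb v R hR k F j) < c' := hev
    obtain ⟨k', hk'⟩ := gen v R hR (G W1 ∪ G W2) F hF (by
      rw [Set.image_union, Submodule.span_union, hG2, hG2]; exact hFW) k
    refine ⟨k', ?_⟩
    filter_upwards [hk', hev'] with j e1 e2
    refine ((hm j).mono (?_ : _ ⊆ Nb v R hR k F j)).trans (by linarith)
    refine subset_trans ?_ e1
    rintro x ⟨hx1, hx2⟩ f (hf | hf)
    · exact hx1 f hf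
    · exact hx2 f hf
  choose! kk hkk using hpair
  set k := ∑ W1 ∈ s, ∑ W2 ∈ s, kk W1 W2 with hk
  have hkle : ∀ W1 ∈ s, ∀ W2 ∈ s, kk W1 W2 ≤ k := fun W1 h1 W2 h2 =>
    (Finset.single_le_sum (f := fun W2 => kk W1 W2) (fun _ _ => Nat.zero_le _) h2).trans
      (Finset.single_le_sum (f := fun W1 => ∑ W2 ∈ s, kk W1 W2) (fun _ _ => Nat.zero_le _) h1)
  have hA : ∀ᶠ j in (om : Filter ℕ), ∀ W1 ∈ s, ∀ W2 ∈ s, W1 ≠ W2 →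
      m j (Nb v R hR k (G W1) j ∩ Nb v R hR k (G W2) j) ≤ η := by
    rw [Filter.eventually_all_finset]
    intro W1 h1
    rw [Filter.eventually_all_finset]
    intro W2 h2
    by_cases hne : W1 = W2
    · filter_upwards with j h; exact (h hne).elim
    · filter_upwards [hkk W1 h1 W2 h2 hne] with j hj _
      refine ((hm j).mono ?_).trans hj
      exact Set.inter_subset_inter (Nb_anti v R hR (hkle W1 h1 W2 h2) _ j)
        (Nb_anti v R hR (hkle W1 h1 W2 h2) _ j)
  have hB : ∀ᶠ j in (om : Filter ℕ), ∀ W1 ∈ s, c / 2 ≤ m j (Nb v R hR k (G W1) j) := by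
    rw [Filter.eventually_all_finset]
    intro W h
    refine (hs W h).1 (G W) (hG1 W) ?_ k (c / 2) (by linarith)
    intro f hf
    have : phf v R hR f ∈ Submodule.span (kap v R hR) (phf v R hR '' G W) :=
      Submodule.subset_span ⟨f, hf, rfl⟩
    rwa [hG2] at this
  obtain ⟨j, hj1, hj2⟩ := (hA.and hB).exists
  have := (hm j).card_bound s (fun W => Nb v R hR k (G W) j) (c / 2) η hηp.le hj2 hj1
  have h1 := (hm j).le_one (⋃ a ∈ s, Nb v R hR k (G a) j)
  have h2 : (s.card : ℝ) * s.card * η = 1 := by rw [hη]; field_simp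
  rw [div_lt_iff₀ hc] at hlt
  linarith

end mass
end UKC


namespace UKC

lemma init_form {K : Type*} [Field K] (v : AbsoluteValue K ℝ) {n : ℕ} (hn : 0 < n)
    {m : Set (Fin n → K) → ℝ} (hm : IsMean m) (a b : Matrix (Fin n) (Fin n) K) (hab : b * a = 1)
    (hb : b.det = 1) (Q : ℝ) (hQ : (n.factorial : ℝ) ≤ Q) (i0 k0 : Fin n)
    (ha : Q ^ 3 ≤ v (a i0 k0))
    (hinv : ∀ A, IsCone A → |m {x | a *ᵥ x ∈ A} - m A| ≤ 1 / 3) :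
    ∃ φ : Fin n → K, (∀ i, v (φ i) ≤ 1) ∧ (∃ i, φ i = 1) ∧
      1 / 3 ≤ m {x | v (φ ⬝ᵥ x) ≤ Q⁻¹ * nv v x} := by
  have hf1 : (1 : ℝ) ≤ n.factorial := by exact_mod_cast Nat.factorial_pos n
  have hQ1 : 1 ≤ Q := hf1.trans hQ
  have hQ0 : 0 < Q := by linarith
  obtain ⟨k1, hk1⟩ := exists_nv v hn (a i0)
  have hα : Q ^ 3 ≤ v (a i0 k1) := hk1 ▸ ha.trans (le_nv v (a i0) k0)
  have hα0 : 0 < v (a i0 k1) := lt_of_lt_of_le (by positivity) hα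
  have : Nonempty (Fin n × Fin n) := ⟨(i0, i0)⟩
  obtain ⟨⟨p, q⟩, hpq⟩ := Finite.exists_max (fun p : Fin n × Fin n => v (b p.1 p.2))
  have hβ : 1 ≤ n.factorial * v (b p q) := by
    have h1 := v_det_le v b (fun i k => hpq (i, k))
    rw [hb, map_one, Fintype.card_fin] at h1
    by_cases hM : v (b p q) ≤ 1
    · refine h1.trans (mul_le_mul_of_nonneg_left ?_ (by positivity))
      exact pow_le_of_le_one (v.nonneg _) hM hn.ne'
    · push Not at hM
      nlinarith
  have hβ0 : 0 < v (b p q) := by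
    by_contra h
    push Not at h
    nlinarith
  have hβinv : (v (b p q))⁻¹ ≤ Q := by
    rw [inv_le_iff_one_le_mul₀ hβ0]
    exact hβ.trans (mul_le_mul_of_nonneg_right hQ hβ0.le)
  set φ1 : Fin n → K := (a i0 k1)⁻¹ • a i0 with hφ1
  set φ2 : Fin n → K := (b p q)⁻¹ • b p with hφ2
  have e1 : a i0 k1 ≠ 0 := (AbsoluteValue.pos_iff v).1 hα0
  have e2 : b p q ≠ 0 := (AbsoluteValue.pos_iff v).1 hβ0
  have hφ1' : (∀ i, v (φ1 i) ≤ 1) ∧ (∃ i, φ1 i = 1) := by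
    refine ⟨fun i => ?_, k1, by simp [hφ1, e1]⟩
    simp only [hφ1, Pi.smul_apply, smul_eq_mul, map_mul, map_inv₀]
    rw [inv_mul_le_one₀ hα0, hk1]
    exact le_nv v (a i0) i
  have hφ2' : (∀ i, v (φ2 i) ≤ 1) ∧ (∃ i, φ2 i = 1) := by
    refine ⟨fun i => ?_, q, by simp [hφ2, e2]⟩
    simp only [hφ2, Pi.smul_apply, smul_eq_mul, map_mul, map_inv₀]
    rw [inv_mul_le_one₀ hβ0]
    exact hpq (p, i)
  have hcone : ∀ φ : Fin n → K, IsCone {x | v (φ ⬝ᵥ x) ≤ Q⁻¹ * nv v x} := by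
    intro φ c hc x hx
    simp only [Set.mem_ofPred_eq] at hx ⊢
    rw [dotProduct_smul, smul_eq_mul, map_mul, nv_smul]
    have h := v.nonneg c
    nlinarith
  have hcov : Set.univ ⊆ {x | v (φ1 ⬝ᵥ x) ≤ Q⁻¹ * nv v x} ∪
      {x | a *ᵥ x ∈ {x | v (φ2 ⬝ᵥ x) ≤ Q⁻¹ * nv v x}} := by
    intro x _
    by_cases hx : v (φ1 ⬝ᵥ x) ≤ Q⁻¹ * nv v x
    · exact Or.inl hx
    · right
      push Not at hx
      simp only [Set.mem_ofPred_eq]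
      have h1 : v (φ1 ⬝ᵥ x) ≤ (v (a i0 k1))⁻¹ * nv v (a *ᵥ x) := by
        rw [hφ1, smul_dotProduct, smul_eq_mul, map_mul, map_inv₀]
        exact mul_le_mul_of_nonneg_left (le_nv v (a *ᵥ x) i0) (by positivity)
      have h2 : φ2 ⬝ᵥ (a *ᵥ x) = (b p q)⁻¹ * x p := by
        rw [hφ2, smul_dotProduct, smul_eq_mul]
        congr 1
        have : (b *ᵥ (a *ᵥ x)) p = x p := by rw [mulVec_mulVec, hab, one_mulVec]
        exact this
      rw [h2, map_mul, map_inv₀]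
      have h3 : (v (a i0 k1))⁻¹ ≤ (Q ^ 3)⁻¹ := inv_anti₀ (by positivity) hα
      have hy := nv_nonneg v (a *ᵥ x)
      have h4 : Q⁻¹ * nv v x ≤ (Q ^ 3)⁻¹ * nv v (a *ᵥ x) :=
        (hx.le.trans h1).trans (mul_le_mul_of_nonneg_right h3 hy)
      have h5 : (v (b p q))⁻¹ * v (x p) ≤ Q * nv v x :=
        mul_le_mul hβinv (le_nv v x p) (v.nonneg _) hQ0.le
      refine h5.trans ?_
      have h6 := mul_le_mul_of_nonneg_left h4 (by positivity : 0 ≤ Q ^ 2)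
      have e3 : Q ^ 2 * (Q⁻¹ * nv v x) = Q * nv v x := by field_simp
      have e4 : Q ^ 2 * ((Q ^ 3)⁻¹ * nv v (a *ᵥ x)) = Q⁻¹ * nv v (a *ᵥ x) := by field_simp
      rw [e3, e4] at h6
      exact h6
  have h1 := hm.mono hcov
  rw [hm.univ] at h1
  have h2 := hm.union_le {x | v (φ1 ⬝ᵥ x) ≤ Q⁻¹ * nv v x}
      {x | a *ᵥ x ∈ {x | v (φ2 ⬝ᵥ x) ≤ Q⁻¹ * nv v x}}
  have h3 := hinv _ (hcone φ2)
  rw [abs_le] at h3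
  by_cases h4 : 1 / 3 ≤ m {x | v (φ1 ⬝ᵥ x) ≤ Q⁻¹ * nv v x}
  · exact ⟨φ1, hφ1'.1, hφ1'.2, h4⟩
  · exact ⟨φ2, hφ2'.1, hφ2'.2, by linarith [h3.2]⟩

/-! ### Group-theoretic and linear-algebra helpers -/

lemma many_cosets {Γ : Type*} [Group Γ] (T : Set Γ) (hT1 : (1 : Γ) ∈ T)
    (hTg : Subgroup.closure T = ⊤) (Δ : Subgroup Γ) (hΔ : ¬ Δ.FiniteIndex) (r : ℕ) :
    ∃ g : Fin (r + 1) → Γ, (∀ i, g i ∈ T ^ r) ∧ ∀ i k, i ≠ k → (g i)⁻¹ * g k ∉ Δ := by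
  induction r with
  | zero => exact ⟨fun _ => 1, by simp, fun i k h => (h (Fin.ext (by omega))).elim⟩
  | succ r ih =>
    obtain ⟨g, hg, hgd⟩ := ih
    have : ∃ t ∈ T, ∃ l, ∀ i, (g i)⁻¹ * (t * g l) ∉ Δ := by
      by_contra hcon
      push Not at hcon
      apply hΔ
      have key : ∀ γ : Γ, ∀ l, ∃ i, (g i)⁻¹ * (γ * g l) ∈ Δ := by
        intro γ
        have hγ : γ ∈ Subgroup.closure T := hTg ▸ Subgroup.mem_top γ
        induction hγ using Subgroup.closure_induction with
        | mem x hx => exact hcon x hx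
        | one => intro l; exact ⟨l, by simp⟩
        | mul x y _ _ hx hy =>
          intro l
          obtain ⟨i, hi⟩ := hy l
          obtain ⟨k, hk⟩ := hx i
          refine ⟨k, ?_⟩
          have := Δ.mul_mem hk hi
          have e : (g k)⁻¹ * (x * g i) * ((g i)⁻¹ * (y * g l)) = (g k)⁻¹ * (x * y * g l) := by
            group
          rwa [e] at this
        | inv x _ hx =>
          -- the map l ↦ i is injective hence surjective
          choose f hf using hx
          have hinj : Function.Injective f := by
            intro l l' hl
            by_contra hne
            apply hgd l l' hne
            have := Δ.mul_mem (Δ.inv_mem (hf l)) (hf l')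
            rw [hl] at this
            have e : ((g (f l'))⁻¹ * (x * g l))⁻¹ * ((g (f l'))⁻¹ * (x * g l'))
              = (g l)⁻¹ * g l' := by group
            rwa [e] at this
          intro l
          obtain ⟨i, hi⟩ := (Finite.injective_iff_surjective.1 hinj) l
          refine ⟨i, ?_⟩
          have := Δ.inv_mem (hf i)
          rw [hi] at this
          have e : ((g l)⁻¹ * (x * g i))⁻¹ = (g i)⁻¹ * (x⁻¹ * g l) := by group
          rwa [e] at this
      have hsurj : Function.Surjective (fun i : Fin (r + 1) => (QuotientGroup.mk (g i) : Γ ⧸ Δ)) := by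
        intro q
        obtain ⟨γ, rfl⟩ := QuotientGroup.mk_surjective q
        obtain ⟨i, hi⟩ := key (γ * (g 0)⁻¹) 0
        refine ⟨i, ?_⟩
        rw [QuotientGroup.eq]
        simpa using hi
      have : Finite (Γ ⧸ Δ) := Finite.of_surjective _ hsurj
      exact Subgroup.finiteIndex_of_finite_quotient
    obtain ⟨t, ht, l, hl⟩ := this
    refine ⟨Fin.cons (t * g l) g, ?_, ?_⟩
    · intro i
      refine Fin.cases ?_ (fun i => ?_) i
      · rw [Fin.cons_zero, pow_succ']
        exact Set.mul_mem_mul ht (hg l)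
      · rw [Fin.cons_succ]
        exact Set.pow_subset_pow_right hT1 (Nat.le_succ r) (hg i)
    · intro i k
      refine Fin.cases ?_ (fun i => ?_) i <;> refine Fin.cases ?_ (fun k => ?_) k
      · simp
      · intro _ h
        rw [Fin.cons_zero, Fin.cons_succ] at h
        apply hl k
        have := Δ.inv_mem h
        simpa [mul_assoc] using this
      · intro _ h
        rw [Fin.cons_zero, Fin.cons_succ] at h
        exact hl i h
      · intro hne
        rw [Fin.cons_succ, Fin.cons_succ]
        exact hgd i k (fun h => hne (by rw [h]))

lemma exists_basis_in_set {K M ι : Type*} [Field K] [AddCommGroup M] [Module K M] [Finite ι]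
    [FiniteDimensional K M]
    (hd : Module.finrank K M = Nat.card ι) (s : Set M) (hs : Submodule.span K s = ⊤) :
    ∃ w : ι → M, (∀ i, w i ∈ s) ∧ LinearIndependent K w := by
  obtain ⟨b, hbs, hb1, hb2⟩ := exists_linearIndependent K s
  have hB : ⊤ ≤ Submodule.span K (Set.range (Subtype.val : b → M)) := by
    rw [Subtype.range_coe, hb1, hs]
  let B := Module.Basis.mk hb2 hB
  have hfin : Finite b := Module.Finite.finite_basis B
  have hc : Nat.card b = Nat.card ι := by rw [← hd, Module.finrank_eq_nat_card_basis B]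
  obtain ⟨e⟩ : Nonempty (ι ≃ b) := ⟨(Finite.card_eq.1 hc.symm).some⟩
  exact ⟨fun i => (e i).1, fun i => hbs (e i).2, hb2.comp e e.injective⟩

/-- products of at most `dim` elements of a symmetric set already span -/
lemma span_pow_top {Γ K R : Type*} [Group Γ] [Field K] [Ring R] [Algebra K R]
    [FiniteDimensional K R] (A : Γ →* R) (T : Set Γ) (hT1 : (1 : Γ) ∈ T)
    (hTi : ∀ t ∈ T, t⁻¹ ∈ T)
    (hT : Submodule.span K (A '' (Subgroup.closure T : Set Γ)) = ⊤) (d : ℕ)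
    (hd : Module.finrank K R ≤ d) :
    Submodule.span K (A '' (T ^ d)) = ⊤ := by
  set U : ℕ → Submodule K R := fun k => Submodule.span K (A '' (T ^ k)) with hU
  have hmono : Monotone U := monotone_nat_of_le_succ fun k =>
    Submodule.span_mono (Set.image_mono (Set.pow_subset_pow_right hT1 (Nat.le_succ k)))
  -- stabilization
  have hstab : ∀ k, U (k + 1) ≤ U k → U k = ⊤ := by
    intro k hk
    have hmul : ∀ t ∈ T, ∀ x ∈ U k, A t * x ∈ U k := by
      intro t ht x hx
      apply hk
      induction hx using Submodule.span_induction with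
      | mem x hx =>
        obtain ⟨g, hg, rfl⟩ := hx
        rw [← map_mul]
        refine Submodule.subset_span ⟨t * g, ?_, rfl⟩
        rw [pow_succ']
        exact Set.mul_mem_mul ht hg
      | zero => simp
      | add x y _ _ h1 h2 => rw [mul_add]; exact add_mem h1 h2
      | smul c x _ h => rw [mul_smul_comm]; exact Submodule.smul_mem _ _ h
    rw [eq_top_iff, ← hT, Submodule.span_le]
    rintro _ ⟨g, hg, rfl⟩
    have h1 : ∀ x ∈ U k, A g * x ∈ U k := by
      have hg' : g ∈ Subgroup.closure T := hg
      rw [← Subgroup.mem_toSubmonoid, Subgroup.closure_toSubmonoid] at hg'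
      induction hg' using Submonoid.closure_induction with
      | mem y hy =>
        rcases hy with hy | hy
        · exact hmul y hy
        · have := hTi _ (Set.mem_inv.1 hy)
          rw [inv_inv] at this
          exact hmul y this
      | one => intro x hx; simpa using hx
      | mul a b ha hb iha ihb =>
        intro x hx
        rw [map_mul, mul_assoc]
        have : ∀ y, y ∈ Submonoid.closure (T ∪ T⁻¹) → y ∈ Subgroup.closure T := by
          intro y hy
          rwa [← Subgroup.mem_toSubmonoid, Subgroup.closure_toSubmonoid]
        exact iha (this a ha) _ (ihb (this b hb) x hx)
    have h2 := h1 1 (Submodule.subset_span ⟨1, Set.one_mem_pow hT1, map_one A⟩)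
    rwa [mul_one] at h2
  have hgrow : ∀ k, U k = ⊤ ∨ k ≤ Module.finrank K (U k) := by
    intro k
    induction k with
    | zero => right; exact Nat.zero_le _
    | succ k ih =>
      by_cases h : U (k + 1) ≤ U k
      · left; rw [eq_top_iff, ← hstab k h]; exact hmono (Nat.le_succ k)
      · rcases ih with ih | ih
        · left; rw [eq_top_iff, ← ih]; exact hmono (Nat.le_succ k)
        · right
          have hlt : U k < U (k + 1) := lt_of_le_of_ne (hmono (Nat.le_succ k))
            (fun e => h e.ge)
          have := Submodule.finrank_lt_finrank_of_lt hlt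
          omega
  rcases hgrow d with h | h
  · exact h
  · have h1 := Submodule.finrank_le (U d)
    exact Submodule.eq_top_of_finrank_eq (S := U d) (by omega)

lemma exists_proj {k : Type*} [Field k] {n : ℕ} (W : Submodule k (Fin n → k)) :
    ∃ P : Matrix (Fin n) (Fin n) k, (∀ w ∈ W, w ᵥ* P = w) ∧ (∀ w, w ᵥ* P ∈ W) := by
  obtain ⟨U, hU⟩ := Submodule.exists_isCompl W
  let f : (Fin n → k) →ₗ[k] (Fin n → k) := W.subtype ∘ₗ W.projectionOnto U hU
  have hf : ∀ w, w ᵥ* (LinearMap.toMatrix' f)ᵀ = f w := by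
    intro w
    rw [vecMul_transpose, LinearMap.toMatrix'_mulVec]
  refine ⟨(LinearMap.toMatrix' f)ᵀ, fun w hw => ?_, fun w => ?_⟩
  · rw [hf]
    exact congrArg Subtype.val (Submodule.projectionOnto_apply_left hU ⟨w, hw⟩)
  · rw [hf]
    exact (W.projectionOnto U hU w).2

lemma stab_iff {k : Type*} [Field k] {n : ℕ} (W : Submodule k (Fin n → k))
    (P : Matrix (Fin n) (Fin n) k) (h1 : ∀ w ∈ W, w ᵥ* P = w) (h2 : ∀ w, w ᵥ* P ∈ W)
    (X : Matrix (Fin n) (Fin n) k) :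
    (∀ w ∈ W, w ᵥ* X ∈ W) ↔ P * X * (1 - P) = 0 := by
  constructor
  · intro h
    apply Matrix.ext_iff_vecMul.2
    intro w
    rw [← vecMul_vecMul, ← vecMul_vecMul, vecMul_sub, vecMul_one, h1 _ (h _ (h2 w)), sub_self,
      vecMul_zero]
  · intro h w hw
    have := congrArg (fun M => w ᵥ* M) h
    simp only [← vecMul_vecMul, vecMul_sub, vecMul_one, vecMul_zero, h1 w hw] at this
    rw [sub_eq_zero.1 this]
    exact h2 _

lemma gram_indep {k ι : Type*} [Field k] [Fintype ι] [DecidableEq ι] {n : ℕ}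
    (w : ι → Matrix (Fin n) (Fin n) k)
    (h : (Matrix.of fun i l => (w i * w l).trace).det ≠ 0) : LinearIndependent k w := by
  rw [Fintype.linearIndependent_iff]
  intro c hc
  have : c ᵥ* (Matrix.of fun i l => (w i * w l).trace) = 0 := by
    funext l
    have := congrArg (fun M => (M * w l).trace) hc
    simpa [Finset.sum_mul, trace_sum, vecMul, dotProduct] using this
  have := eq_zero_of_vecMul_eq_zero h this
  exact fun i => congrFun this i

lemma no_invariant {k : Type*} [Field k] {n : ℕ} (W : Submodule k (Fin n → k)) (h0 : W ≠ ⊥)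
    (h1 : W ≠ ⊤) (h : ∀ X : Matrix (Fin n) (Fin n) k, ∀ w ∈ W, w ᵥ* X ∈ W) : False := by
  obtain ⟨w, hw, hw0⟩ := Submodule.exists_mem_ne_zero_of_ne_bot h0
  apply h1
  rw [eq_top_iff]
  intro u _
  obtain ⟨i, hi⟩ := Function.ne_iff.1 hw0
  have := h (Matrix.vecMulVec (Pi.single i (w i)⁻¹) u) w hw
  rw [vecMul_vecMulVec] at this
  simpa [inv_mul_cancel₀ hi, mul_inv_cancel₀ hi] using this

end UKC


namespace UKC

section LT
variable {Γ K : Type*} [Group Γ] [Field K] (v : AbsoluteValue K ℝ) (R : ℕ → ℝ)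
  (hR : ∀ j, 2 ≤ R j) {n : ℕ} (T : ℕ → Set Γ) (A : ℕ → Γ →* Matrix (Fin n) (Fin n) K)

/-- sequences of words of bounded length -/
def Adm (h : ℕ → Γ) : Prop := ∃ L : ℕ, ∀ᶠ j in (om : Filter ℕ), h j ∈ T j ^ L

lemma Adm.mul {T : ℕ → Set Γ} {g h : ℕ → Γ} (hg : Adm T g) (hh : Adm T h) : Adm T (g * h) := by
  obtain ⟨L, hL⟩ := hg
  obtain ⟨L', hL'⟩ := hh
  refine ⟨L + L', ?_⟩
  filter_upwards [hL, hL'] with j h1 h2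
  rw [pow_add]
  exact Set.mul_mem_mul h1 h2

lemma inv_mem_pow {T : Set Γ} (hTi : ∀ t ∈ T, t⁻¹ ∈ T) {L : ℕ} {g : Γ} (hg : g ∈ T ^ L) :
    g⁻¹ ∈ T ^ L := by
  have e : T⁻¹ = T := by
    ext x
    rw [Set.mem_inv]
    exact ⟨fun h => by simpa using hTi _ h, hTi x⟩
  rw [← Set.mem_inv, ← inv_pow, e]
  exact hg

lemma Adm.inv {T : ℕ → Set Γ} (hTi : ∀ j, ∀ t ∈ T j, t⁻¹ ∈ T j) {h : ℕ → Γ} (hh : Adm T h) :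
    Adm T h⁻¹ := by
  obtain ⟨L, hL⟩ := hh
  refine ⟨L, ?_⟩
  filter_upwards [hL] with j h1
  exact inv_mem_pow (hTi j) h1

open Classical in
/-- total lift to `BB` -/
noncomputable def toB (x : ℕ → K) : BB v R hR := if hx : x ∈ BB v R hR then ⟨x, hx⟩ else 0

lemma toB_val {x : ℕ → K} (hx : x ∈ BB v R hR) : (toB v R hR x).1 = x := by
  rw [toB, dif_pos hx]

/-- matrix of a sequence -/
noncomputable def MB (h : ℕ → Γ) : Matrix (Fin n) (Fin n) (BB v R hR) :=
  Matrix.of fun i k => toB v R hR fun j => A j (h j) i k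

/-- residue matrix of a sequence -/
noncomputable def rM (h : ℕ → Γ) : Matrix (Fin n) (Fin n) (kap v R hR) :=
  phM v R hR (MB v R hR A h)

lemma entry_bound {Γ K : Type*} [Group Γ] [Field K] (v : AbsoluteValue K ℝ) (R : ℕ → ℝ)
    (hR : ∀ j, 2 ≤ R j) {n : ℕ} (T : ℕ → Set Γ) (A : ℕ → Γ →* Matrix (Fin n) (Fin n) K)
    (h1 : ∀ j, ∀ t ∈ T j, ∀ i k, v (A j t i k) ≤ R j ^ 2) (j L : ℕ) :
    ∀ t ∈ T j ^ L, ∀ i k, v (A j t i k) ≤ R j ^ ((n + 2) * L) := by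
  induction L with
  | zero =>
    intro t ht i k
    rw [pow_zero, Set.mem_one] at ht
    subst ht
    rw [map_one, mul_zero, pow_zero, Matrix.one_apply]
    split_ifs <;> simp
  | succ L ih =>
    intro t ht i k
    rw [pow_succ'] at ht
    obtain ⟨s, hs, t', ht', rfl⟩ := Set.mem_mul.1 ht
    have hp := R_pos R hR j
    rw [map_mul, Matrix.mul_apply']
    refine (v_dot_le v _ _ (h1 j s hs i)).trans ?_
    have h3 : nv v (fun l => A j t' l k) ≤ R j ^ ((n + 2) * L) :=
      nv_le v (by positivity) fun l => ih t' ht' l k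
    have e : R j ^ ((n + 2) * (L + 1)) = R j ^ n * R j ^ 2 * R j ^ ((n + 2) * L) := by
      rw [← pow_add, ← pow_add]; congr 1; ring
    rw [e]
    refine mul_le_mul ?_ h3 (nv_nonneg v _) (by positivity)
    exact mul_le_mul_of_nonneg_right (R_nat R hR n j) (by positivity)

lemma mem_BB
    (h1 : ∀ j, ∀ t ∈ T j, ∀ i k, v (A j t i k) ≤ R j ^ 2) {h : ℕ → Γ} (hh : Adm T h) (i k : Fin n) :
    (fun j => A j (h j) i k) ∈ BB v R hR := by
  obtain ⟨L, hL⟩ := hh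
  refine ⟨(n + 2) * L, ?_⟩
  filter_upwards [hL] with j hj
  exact entry_bound v R hR T A h1 j L _ hj i k

lemma evM_MB
    (h1 : ∀ j, ∀ t ∈ T j, ∀ i k, v (A j t i k) ≤ R j ^ 2) {h : ℕ → Γ} (hh : Adm T h) (j : ℕ) : evM v R hR (MB v R hR A h) j = A j (h j) := by
  ext i k
  simp only [evM, MB, map_apply, of_apply, ev_apply]
  rw [toB_val v R hR (mem_BB v R hR T A h1 hh i k)]

lemma MB_mul
    (h1 : ∀ j, ∀ t ∈ T j, ∀ i k, v (A j t i k) ≤ R j ^ 2) {g h : ℕ → Γ} (hg : Adm T g) (hh : Adm T h) :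
    MB v R hR A (g * h) = MB v R hR A g * MB v R hR A h := by
  have key : ∀ j, evM v R hR (MB v R hR A (g * h)) j =
      evM v R hR (MB v R hR A g * MB v R hR A h) j := by
    intro j
    rw [evM_MB v R hR T A h1 (hg.mul hh)]
    rw [evM, Matrix.map_mul]
    change _ = evM v R hR (MB v R hR A g) j * evM v R hR (MB v R hR A h) j
    rw [evM_MB v R hR T A h1 hg, evM_MB v R hR T A h1 hh, Pi.mul_apply, map_mul]
  ext i k j
  exact congrFun (congrFun (key j) i) k

lemma rM_mul
    (h1 : ∀ j, ∀ t ∈ T j, ∀ i k, v (A j t i k) ≤ R j ^ 2) {g h : ℕ → Γ} (hg : Adm T g) (hh : Adm T h) :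
    rM v R hR A (g * h) = rM v R hR A g * rM v R hR A h := by
  rw [rM, MB_mul v R hR T A h1 hg hh, phM, Matrix.map_mul]
  rfl

lemma MB_one
    (h1 : ∀ j, ∀ t ∈ T j, ∀ i k, v (A j t i k) ≤ R j ^ 2) : MB v R hR A (1 : ℕ → Γ) = 1 := by
  have hh : Adm T (1 : ℕ → Γ) := ⟨0, by simp⟩
  have key : ∀ j, evM v R hR (MB v R hR A (1 : ℕ → Γ)) j = evM v R hR 1 j := by
    intro j
    rw [evM_MB v R hR T A h1 hh, evM, Matrix.map_one _ (map_zero _) (map_one _), Pi.one_apply,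
      map_one]
  ext i k j
  exact congrFun (congrFun (key j) i) k

lemma rM_one
    (h1 : ∀ j, ∀ t ∈ T j, ∀ i k, v (A j t i k) ≤ R j ^ 2) : rM v R hR A (1 : ℕ → Γ) = 1 := by
  rw [rM, MB_one v R hR T A h1, phM]
  simp

/-- approximate stabilizer criterion -/
lemma stab_crit
    (h1 : ∀ j, ∀ t ∈ T j, ∀ i k, v (A j t i k) ≤ R j ^ 2) (W : Submodule (kap v R hR) (Fin n → kap v R hR))
    (P : Matrix (Fin n) (Fin n) (BB v R hR)) (hP1 : ∀ w ∈ W, w ᵥ* phM v R hR P = w)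
    (hP2 : ∀ w, w ᵥ* phM v R hR P ∈ W) {h : ℕ → Γ} (hh : Adm T h) :
    (∀ w ∈ W, w ᵥ* rM v R hR A h ∈ W) ↔ ∀ k : ℕ, ∀ᶠ j in (om : Filter ℕ), ∀ i l,
      v ((evM v R hR P j * A j (h j) * (1 - evM v R hR P j)) i l) ≤ (R j ^ k)⁻¹ := by
  rw [stab_iff W _ hP1 hP2]
  have e1 : phM v R hR P * rM v R hR A h * (1 - phM v R hR P) =
      (P * MB v R hR A h * (1 - P)).map (phi v R hR) := by
    rw [Matrix.map_mul, Matrix.map_mul, Matrix.map_sub _ (map_sub _),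
      Matrix.map_one _ (map_zero _) (map_one _)]
    rfl
  have e2 : ∀ j, evM v R hR P j * A j (h j) * (1 - evM v R hR P j) =
      (P * MB v R hR A h * (1 - P)).map (ev v R hR j) := by
    intro j
    rw [Matrix.map_mul, Matrix.map_mul, Matrix.map_sub _ (map_sub _),
      Matrix.map_one _ (map_zero _) (map_one _)]
    change _ = _ * evM v R hR (MB v R hR A h) j * _
    rw [evM_MB v R hR T A h1 hh]
    rfl
  rw [e1]
  constructor
  · intro h0 k
    rw [Filter.eventually_all]
    intro i
    rw [Filter.eventually_all]
    intro l
    have := (phi_eq_zero v R hR _).1 (congrFun (congrFun h0 i) l) k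
    filter_upwards [this] with j hj
    rw [e2]
    exact hj
  · intro h0
    ext i l
    refine (phi_eq_zero v R hR _).2 fun k => ?_
    filter_upwards [h0 k] with j hj
    have := hj i l
    rw [e2] at this
    exact this

end LT

/-- The abstract limiting contradiction. -/
theorem LTp {Γ K : Type*} [Group Γ] [Field K] (v : AbsoluteValue K ℝ) (R : ℕ → ℝ)
    (hR : ∀ j, 2 ≤ R j) {n : ℕ} (hn : 0 < n) (T : ℕ → Set Γ)
    (hT1 : ∀ j, (1 : Γ) ∈ T j) (hTi : ∀ j, ∀ t ∈ T j, t⁻¹ ∈ T j)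
    (hTg : ∀ j, Subgroup.closure (T j) = ⊤)
    (A : ℕ → Γ →* Matrix (Fin n) (Fin n) K) (hdet : ∀ j γ, (A j γ).det = 1)
    (h1 : ∀ j, ∀ t ∈ T j, ∀ i k, v (A j t i k) ≤ R j ^ 2)
    (q : ℕ → ℕ) (hq : ∀ j, j ≤ q j)
    (h2 : ∀ j, ∃ a ∈ T j ^ q j, ∃ i k, R j ^ (3 * j) ≤ v (A j a i k))
    (m : ℕ → Set (Fin n → K) → ℝ) (hm : ∀ j, IsMean (m j)) (hm0 : ∀ j, m j {0} = 0)
    (h3 : ∀ j, ∀ t ∈ T j ^ q j, ∀ B : Set (Fin n → K), IsCone B →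
      |m j {x | A j t *ᵥ x ∈ B} - m j B| ≤ 1 / ((j : ℝ) + 1))
    (h4 : ∀ L : ℕ, ∃ E : ℕ, ∀ j, ∀ w : Fin n × Fin n → Γ, (∀ i, w i ∈ T j ^ L) →
      LinearIndependent K (fun i => A j (w i)) →
      (R j ^ E)⁻¹ ≤ v (Matrix.of fun i l => (A j (w i) * A j (w l)).trace).det)
    (h5 : ∀ j, ∀ H : Subgroup Γ, H.FiniteIndex → Submodule.span K (A j '' (H : Set Γ)) = ⊤) :
    False := by
  classical
  -- Step 1 : an initial form with mass
  have hinit : ∃ g : Fin n → BB v R hR, phf v R hR g ≠ 0 ∧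
      ∀ k : ℕ, ∀ c' < (1 / 3 : ℝ), ∀ᶠ j in (om : Filter ℕ), c' ≤ m j (Nb v R hR k {g} j) := by
    have hex : ∀ j, ∃ φ : Fin n → K, (∀ i, v (φ i) ≤ 1) ∧ (2 ≤ j → n.factorial ≤ j →
        (∃ i, φ i = 1) ∧ 1 / 3 ≤ m j {x | v (φ ⬝ᵥ x) ≤ (R j ^ j)⁻¹ * nv v x}) := by
      intro j
      by_cases hj : 2 ≤ j ∧ n.factorial ≤ j
      · obtain ⟨a, ha, i, k, hik⟩ := h2 j
        obtain ⟨φ, e1, e2, e3⟩ := init_form v hn (hm j) (A j a) (A j a⁻¹)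
          (by rw [← map_mul, inv_mul_cancel, map_one]) (hdet j _) (R j ^ j)
          ((Nat.cast_le.2 hj.2).trans (R_nat R hR j j)) i k (by rw [← pow_mul, mul_comm]; exact hik)
          (fun B hB => (h3 j a ha B hB).trans (by
            have : (2 : ℝ) ≤ j := by exact_mod_cast hj.1
            rw [div_le_div_iff₀ (by positivity) (by norm_num)]
            linarith))
        exact ⟨φ, e1, fun _ _ => ⟨e2, e3⟩⟩
      · exact ⟨0, by simp, fun e1 e2 => (hj ⟨e1, e2⟩).elim⟩
    choose φ hφ1 hφ2 using hex
    refine ⟨fun i => ⟨fun j => φ j i, 0, by simpa using Filter.Eventually.of_forall fun j => hφ1 j i⟩,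
      ?_, ?_⟩
    · intro h0
      have : ∀ᶠ j in (om : Filter ℕ), ∀ i, v (φ j i) ≤ (R j ^ 1)⁻¹ := by
        rw [Filter.eventually_all]
        intro i
        exact (phi_eq_zero v R hR _).1 (congrFun h0 i) 1
      obtain ⟨j, hj1, hj2, hj3⟩ :=
        (this.and ((om_ge 2).and (om_ge n.factorial))).exists
      obtain ⟨i, hi⟩ := (hφ2 j hj2 hj3).1
      have h6 := hj1 i
      rw [hi, map_one, pow_one] at h6
      have : (R j)⁻¹ ≤ 2⁻¹ := inv_anti₀ (by norm_num) (hR j)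
      norm_num at this
      linarith
    · intro k c' hc'
      filter_upwards [om_ge 2, om_ge n.factorial, om_ge k] with j e1 e2 e3
      refine hc'.le.trans ((hφ2 j e1 e2).2.trans ((hm j).mono ?_))
      intro x hx f hf
      rw [Set.mem_singleton_iff.1 hf]
      exact le_trans hx (mul_le_mul_of_nonneg_right (R_anti R hR e3 j) (nv_nonneg v x))
  obtain ⟨g, hg0, hg⟩ := hinit
  have hmass1 := mass_span v R hR hm (1 / 3) g hg
  -- Step 2 : maximal rank
  have hmax : ∃ ρ W0, ∃ c > 0, Mass v R hR m c W0 ∧ Module.finrank (kap v R hR) W0 = ρ ∧ 1 ≤ ρ ∧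
      ∀ W, (∃ c' > 0, Mass v R hR m c' W) → Module.finrank (kap v R hR) W ≤ ρ := by
    let p : ℕ → Prop := fun r => ∃ W, ∃ c > 0, Mass v R hR m c W ∧
      Module.finrank (kap v R hR) W = r
    have hp1 : p 1 := ⟨_, 1 / 3, by norm_num, hmass1, finrank_span_singleton hg0⟩
    have hle : ∀ W : Submodule (kap v R hR) (Fin n → kap v R hR),
        Module.finrank (kap v R hR) W ≤ n := fun W => by
      simpa using Submodule.finrank_le W
    have h1n : 1 ≤ n := hn
    have hs := Nat.findGreatest_spec (P := p) h1n hp1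
    obtain ⟨W0, c, hc, hM, hr⟩ := hs
    refine ⟨Nat.findGreatest p n, W0, c, hc, hM, hr, Nat.le_findGreatest h1n hp1, ?_⟩
    rintro W ⟨c', hc', hW⟩
    exact Nat.le_findGreatest (hle W) ⟨W, c', hc', hW, rfl⟩
  obtain ⟨ρ, W0, c, hc, hM, hr, hρ1, hρmax⟩ := hmax
  have hW0bot : W0 ≠ ⊥ := by
    rintro rfl
    rw [finrank_bot] at hr
    omega
  have hW0top : W0 ≠ ⊤ := by
    rintro rfl
    exact mass_top v R hR hm hm0 hc hM
  -- Step 3 : translates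
  have hinvL : ∀ h, Adm T h → rM v R hR A h * rM v R hR A h⁻¹ = 1 := by
    intro h hh
    rw [← rM_mul v R hR T A h1 hh (hh.inv hTi), mul_inv_cancel, rM_one v R hR T A h1]
  have htrans : ∀ h, Adm T h → Mass v R hR m c (W0.map (rM v R hR A h).vecMulLinear) ∧
      Module.finrank (kap v R hR) (W0.map (rM v R hR A h).vecMulLinear) = ρ := by
    intro h hh
    refine ⟨mass_map v R hR hm hM (MB v R hR A h) ?_, ?_⟩
    · obtain ⟨L, hL⟩ := hh
      filter_upwards [hL, om_ge L] with j e1 e2 B hB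
      rw [evM_MB v R hR T A h1 ⟨L, hL⟩]
      exact h3 j (h j) (Set.pow_subset_pow_right (hT1 j) (e2.trans (hq j)) e1) B hB
    · rw [← hr]
      have hinj : Function.Injective (rM v R hR A h).vecMulLinear := by
        intro x y hxy
        have : (x ᵥ* rM v R hR A h) ᵥ* rM v R hR A h⁻¹ =
          (y ᵥ* rM v R hR A h) ᵥ* rM v R hR A h⁻¹ := congrArg (· ᵥ* rM v R hR A h⁻¹) hxy
        simpa [vecMul_vecMul, hinvL h hh] using this
      exact (Submodule.equivMapOfInjective _ hinj W0).finrank_eq.symm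
  -- Step 4 : approximate stabilizers
  obtain ⟨P0, hP1, hP2⟩ := exists_proj W0
  obtain ⟨P, hP⟩ : ∃ P : Matrix (Fin n) (Fin n) (BB v R hR), phM v R hR P = P0 := by
    choose f hf using fun i k => phi_surj v R hR (P0 i k)
    exact ⟨Matrix.of f, by ext i k; exact hf i k⟩
  subst hP
  let St : ℕ → ℕ → Γ → Prop := fun j k t => ∀ i l,
      v ((evM v R hR P j * A j t * (1 - evM v R hR P j)) i l) ≤ (R j ^ k)⁻¹
  have hSt : ∀ h, Adm T h → ((∀ w ∈ W0, w ᵥ* rM v R hR A h ∈ W0) ↔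
      ∀ k : ℕ, ∀ᶠ j in (om : Filter ℕ), St j k (h j)) := fun h hh =>
    stab_crit v R hR T A h1 W0 P hP1 hP2 hh
  have hStmono : ∀ j k l t, k ≤ l → St j l t → St j k t := fun j k l t hkl h i i' =>
    (h i i').trans (R_anti R hR hkl j)
  obtain ⟨r, hr4⟩ := exists_nat_ge (4 / c)
  let Z : ℕ → ℕ → Set Γ := fun j k => {t | t ∈ T j ^ (r + r) ∧ St j k t ∧ St j k t⁻¹}
  let Pk : ℕ → ℕ → Prop := fun j k => (1 : Γ) ∈ Z j k ∧ (Subgroup.closure (Z j k)).FiniteIndex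
  have hAdm1 : Adm T (1 : ℕ → Γ) := ⟨0, by simp⟩
  have hPk : ∀ k, ∀ᶠ j in (om : Filter ℕ), Pk j k := by
    intro k
    have ha : ∀ᶠ j in (om : Filter ℕ), (1 : Γ) ∈ Z j k := by
      have := (hSt 1 hAdm1).1 (by intro w hw; rw [rM_one v R hR T A h1, vecMul_one]; exact hw) k
      filter_upwards [this] with j hj
      exact ⟨Set.one_mem_pow (hT1 j), hj, by rw [inv_one]; exact hj⟩
    refine ha.and ?_
    by_contra hcon
    have hcon' : ∀ᶠ j in (om : Filter ℕ), ¬ (Subgroup.closure (Z j k)).FiniteIndex :=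
      Ultrafilter.eventually_not.2 hcon
    have hex : ∀ j, ∃ g : Fin (r + 1) → Γ, (∀ i, g i ∈ T j ^ r) ∧
        (¬ (Subgroup.closure (Z j k)).FiniteIndex →
          ∀ i l, i ≠ l → (g i)⁻¹ * g l ∉ Subgroup.closure (Z j k)) := by
      intro j
      by_cases hj : (Subgroup.closure (Z j k)).FiniteIndex
      · exact ⟨fun _ => 1, fun _ => Set.one_mem_pow (hT1 j), fun h => (h hj).elim⟩
      · obtain ⟨g, e1, e2⟩ := many_cosets (T j) (hT1 j) (hTg j) _ hj r
        exact ⟨g, e1, fun _ => e2⟩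
    choose gg hgg1 hgg2 using hex
    let s : Fin (r + 1) → ℕ → Γ := fun i j => gg j i
    have hsA : ∀ i, Adm T (s i) := fun i => ⟨r, Filter.Eventually.of_forall fun j => hgg1 j i⟩
    let Wi : Fin (r + 1) → Submodule (kap v R hR) (Fin n → kap v R hR) := fun i =>
      W0.map (rM v R hR A (s i)⁻¹).vecMulLinear
    have hnotinj : ¬ Function.Injective Wi := by
      intro hinj
      have := mass_bound v R hR hm hc ρ hρmax (Finset.univ.image Wi) (by
        intro W hW
        obtain ⟨i, _, rfl⟩ := Finset.mem_image.1 hW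
        exact htrans _ ((hsA i).inv hTi))
      rw [Finset.card_image_of_injective _ hinj] at this
      simp at this
      linarith
    have : ∃ a b, a ≠ b ∧ Wi a = Wi b := by
      simp only [Function.Injective] at hnotinj
      push Not at hnotinj
      obtain ⟨a, b, e1, e2⟩ := hnotinj
      exact ⟨a, b, e2, e1⟩
    obtain ⟨a, b, hab, hWab⟩ := this
    have hstab : ∀ a b, Wi a = Wi b → ∀ w ∈ W0, w ᵥ* rM v R hR A ((s a)⁻¹ * s b) ∈ W0 := by
      intro a b hWab w hw
      have h6 : w ᵥ* rM v R hR A (s a)⁻¹ ∈ Wi b := by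
        rw [← hWab]; exact ⟨w, hw, rfl⟩
      obtain ⟨w', hw', e⟩ := h6
      have e' : w' ᵥ* rM v R hR A (s b)⁻¹ = w ᵥ* rM v R hR A (s a)⁻¹ := e
      rw [rM_mul v R hR T A h1 ((hsA a).inv hTi) (hsA b), ← vecMul_vecMul, ← e', vecMul_vecMul,
        ← rM_mul v R hR T A h1 ((hsA b).inv hTi) (hsA b), inv_mul_cancel, rM_one v R hR T A h1,
        vecMul_one]
      exact hw'
    have hA1 : Adm T ((s a)⁻¹ * s b) := ((hsA a).inv hTi).mul (hsA b)
    have hA2 : Adm T ((s b)⁻¹ * s a) := ((hsA b).inv hTi).mul (hsA a)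
    have c1 := (hSt _ hA1).1 (hstab a b hWab) k
    have c2 := (hSt _ hA2).1 (hstab b a hWab.symm) k
    obtain ⟨j, hj1, hj2, hj3⟩ := (c1.and (c2.and hcon')).exists
    apply hgg2 j hj3 a b hab
    refine Subgroup.subset_closure ⟨?_, hj1, ?_⟩
    · rw [pow_add]
      exact Set.mul_mem_mul (inv_mem_pow (hTi j) (hgg1 j a)) (hgg1 j b)
    · have e : ((gg j a)⁻¹ * gg j b)⁻¹ = (gg j b)⁻¹ * gg j a := by group
      rw [e]
      exact hj2
  -- Step 5 : diagonal choice
  let kk : ℕ → ℕ := fun j => Nat.findGreatest (Pk j) j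
  have hkk1 : ∀ k, ∀ᶠ j in (om : Filter ℕ), k ≤ kk j := by
    intro k
    filter_upwards [hPk k, om_ge k] with j e1 e2
    exact Nat.le_findGreatest e2 e1
  have hkk2 : ∀ᶠ j in (om : Filter ℕ), Pk j (kk j) := by
    filter_upwards [hPk 0] with j e1
    exact Nat.findGreatest_spec (Nat.zero_le j) e1
  have hpow : ∀ L : ℕ, ∀ h : ℕ → Γ, (∀ᶠ j in (om : Filter ℕ), h j ∈ Z j (kk j) ^ L) →
      Adm T h ∧ ∀ w ∈ W0, w ᵥ* rM v R hR A h ∈ W0 := by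
    intro L
    induction L with
    | zero =>
      intro h hh
      have hAdm : Adm T h := ⟨0, by simpa using hh⟩
      refine ⟨hAdm, (hSt h hAdm).2 fun k => ?_⟩
      have := (hSt 1 hAdm1).1 (by intro w hw; rw [rM_one v R hR T A h1, vecMul_one]; exact hw) k
      filter_upwards [hh, this] with j e1 e2
      rw [pow_zero, Set.mem_one] at e1
      rw [e1]
      exact e2
    | succ L ih =>
      intro h hh
      have hex : ∀ j, ∃ z y : Γ, h j = z * y ∧ (h j ∈ Z j (kk j) ^ (L + 1) →
          z ∈ Z j (kk j) ∧ y ∈ Z j (kk j) ^ L) := by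
        intro j
        by_cases hj : h j ∈ Z j (kk j) ^ (L + 1)
        · have hj' := hj
          rw [pow_succ'] at hj'
          obtain ⟨z, hz, y, hy, e⟩ := Set.mem_mul.1 hj'
          exact ⟨z, y, e.symm, fun _ => ⟨hz, hy⟩⟩
        · exact ⟨h j, 1, by simp, fun h => (hj h).elim⟩
      choose z y hzy hzy2 using hex
      have ehzy : h = z * y := funext hzy
      have hy := ih y (by filter_upwards [hh] with j hj; exact (hzy2 j hj).2)
      have hz : Adm T z := ⟨r + r, by filter_upwards [hh] with j hj; exact (hzy2 j hj).1.1⟩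
      have hz2 : ∀ w ∈ W0, w ᵥ* rM v R hR A z ∈ W0 := by
        refine (hSt z hz).2 fun k => ?_
        filter_upwards [hh, hkk1 k] with j e1 e2
        exact hStmono j k _ _ e2 (hzy2 j e1).1.2.1
      refine ⟨ehzy ▸ hz.mul hy.1, fun w hw => ?_⟩
      rw [ehzy, rM_mul v R hR T A h1 hz hy.1, ← vecMul_vecMul]
      exact hy.2 _ (hz2 w hw)
  have hbasis : ∀ j, ∃ w : Fin n × Fin n → Γ, Pk j (kk j) →
      (∀ i, w i ∈ Z j (kk j) ^ (n * n)) ∧ LinearIndependent K (fun i => A j (w i)) := by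
    intro j
    by_cases hj : Pk j (kk j)
    · have hspan := span_pow_top (K := K) (A j) (Z j (kk j)) hj.1 (by
        rintro t ⟨e1, e2, e3⟩
        exact ⟨inv_mem_pow (hTi j) e1, e3, by rw [inv_inv]; exact e2⟩)
        (h5 j _ hj.2) (n * n) (by simp [Module.finrank_matrix])
      obtain ⟨w, hw1, hw2⟩ := exists_basis_in_set (ι := Fin n × Fin n)
        (by simp [Module.finrank_matrix]) _ hspan
      choose u hu1 hu2 using hw1
      refine ⟨u, fun _ => ⟨hu1, ?_⟩⟩
      have : (fun i => A j (u i)) = w := funext hu2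
      rw [this]
      exact hw2
    · exact ⟨fun _ => 1, fun h => (hj h).elim⟩
  choose w hw using hbasis
  have hwA : ∀ i, Adm T (fun j => w j i) ∧
      ∀ x ∈ W0, x ᵥ* rM v R hR A (fun j => w j i) ∈ W0 := fun i =>
    hpow (n * n) _ (by filter_upwards [hkk2] with j hj; exact (hw j hj).1 i)
  -- Step 6 : residual independence
  let Gb : Matrix (Fin n × Fin n) (Fin n × Fin n) (BB v R hR) := Matrix.of fun i l =>
    (MB v R hR A (fun j => w j i) * MB v R hR A (fun j => w j l)).trace
  have hGev : ∀ j, (Gb.det).1 j =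
      (Matrix.of fun i l => (A j (w j i) * A j (w j l)).trace).det := by
    intro j
    have e : (Gb.det).1 j = ev v R hR j Gb.det := rfl
    rw [e, RingHom.map_det]
    congr 1
    ext i l
    simp only [RingHom.mapMatrix_apply, map_apply, Gb, of_apply]
    rw [← evM_MB v R hR T A h1 (hwA i).1 j, ← evM_MB v R hR T A h1 (hwA l).1 j, evM, evM,
      ← Matrix.map_mul]
    exact AddMonoidHom.map_trace (ev v R hR j) _
  have hGph : phi v R hR Gb.det = (Matrix.of fun i l =>
      (rM v R hR A (fun j => w j i) * rM v R hR A (fun j => w j l)).trace).det := by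
    rw [RingHom.map_det]
    congr 1
    ext i l
    simp only [RingHom.mapMatrix_apply, map_apply, Gb, of_apply]
    rw [rM, rM, phM, phM, ← Matrix.map_mul]
    exact AddMonoidHom.map_trace (phi v R hR) _
  have hne : phi v R hR Gb.det ≠ 0 := by
    intro h0
    obtain ⟨E, hE⟩ := h4 ((r + r) * (n * n))
    have h6 := (phi_eq_zero v R hR _).1 h0 (E + 1)
    obtain ⟨j, hj1, hj2⟩ := (h6.and hkk2).exists
    have h7 := hE j (w j) (fun i => by
      have := (hw j hj2).1 i
      rw [pow_mul]
      exact Set.pow_subset_pow_left (fun t ht => ht.1) this) (hw j hj2).2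
    rw [hGev] at hj1
    have h8 := R_half R hR E j
    have hp : 0 < (R j ^ (E + 1))⁻¹ := by have := R_pos R hR j; positivity
    linarith
  rw [hGph] at hne
  have hli := gram_indep _ hne
  have htop := hli.span_eq_top_of_card_eq_finrank' (by simp [Module.finrank_matrix])
  refine no_invariant W0 hW0bot hW0top fun X => ?_
  have hX : X ∈ Submodule.span (kap v R hR)
      (Set.range fun i => rM v R hR A (fun j => w j i)) := by rw [htop]; trivial
  induction hX using Submodule.span_induction with
  | mem x hx =>
    obtain ⟨i, rfl⟩ := hx
    exact (hwA i).2
  | zero => intro x _; simp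
  | add x y _ _ e1 e2 => intro u hu; rw [vecMul_add]; exact add_mem (e1 u hu) (e2 u hu)
  | smul a x _ e => intro u hu; rw [vecMul_smul]; exact Submodule.smul_mem _ _ (e u hu)

end UKC


namespace UKC

section norms
variable {Γ K : Type*} [Group Γ] [Field K] {n : ℕ}

/-- norms on `K^n` comparable from below with the sup norm -/
structure VNorm (v : AbsoluteValue K ℝ) (N : (Fin n → K) → ℝ) : Prop where
  smul : ∀ c x, N (c • x) = v c * N x
  add : ∀ x y, N (x + y) ≤ N x + N y
  lower : ∃ c > 0, ∀ x, c * nv v x ≤ N x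

lemma VNorm.nonneg {v : AbsoluteValue K ℝ} {N : (Fin n → K) → ℝ} (hN : VNorm v N) (x : Fin n → K) :
    0 ≤ N x := by
  obtain ⟨c, hc, h⟩ := hN.lower
  exact le_trans (mul_nonneg hc.le (nv_nonneg v x)) (h x)

lemma VNorm.pos {v : AbsoluteValue K ℝ} {N : (Fin n → K) → ℝ} (hN : VNorm v N) {x : Fin n → K}
    (hx : x ≠ 0) : 0 < N x := by
  obtain ⟨c, hc, h⟩ := hN.lower
  exact lt_of_lt_of_le (mul_pos hc (nv_pos v hx)) (h x)

/-- the set `S` does not expand some norm by more than `Λ` -/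
def Bdd (v : AbsoluteValue K ℝ) (ρ : Γ →* Matrix (Fin n) (Fin n) K) (S : Set Γ) (Λ : ℝ) : Prop :=
  ∃ N : (Fin n → K) → ℝ, VNorm v N ∧ ∀ s ∈ S, ∀ x, N (ρ s *ᵥ x) ≤ Λ * N x

variable {v : AbsoluteValue K ℝ} {ρ : Γ →* Matrix (Fin n) (Fin n) K} {S : Set Γ} {Λ : ℝ}

lemma Bdd.mono (h : Bdd v ρ S Λ) {Λ' : ℝ} (hΛ : Λ ≤ Λ') : Bdd v ρ S Λ' := by
  obtain ⟨N, hN, h⟩ := h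
  exact ⟨N, hN, fun s hs x => (h s hs x).trans (mul_le_mul_of_nonneg_right hΛ (hN.nonneg x))⟩

lemma pow_expand {N : (Fin n → K) → ℝ} (hΛ : 0 ≤ Λ)
    (h : ∀ s ∈ S, ∀ x, N (ρ s *ᵥ x) ≤ Λ * N x) (L : ℕ) :
    ∀ s ∈ S ^ L, ∀ x, N (ρ s *ᵥ x) ≤ Λ ^ L * N x := by
  induction L with
  | zero => intro s hs x; rw [pow_zero, Set.mem_one] at hs; subst hs; simp
  | succ L ih =>
    intro s hs x
    rw [pow_succ'] at hs
    obtain ⟨a, ha, b, hb, rfl⟩ := Set.mem_mul.1 hs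
    rw [map_mul, ← mulVec_mulVec, pow_succ', mul_assoc]
    exact (h a ha _).trans (mul_le_mul_of_nonneg_left (ih b hb x) hΛ)

lemma Bdd.root (hS : (1 : Γ) ∈ S) (hΛ : 1 ≤ Λ) {m : ℕ} (hm : 0 < m)
    (h : Bdd v ρ (S ^ m) (Λ ^ m)) : Bdd v ρ S Λ := by
  obtain ⟨N, hN, h⟩ := h
  have hΛ0 : 0 < Λ := by linarith
  let P : Type _ := {p : Fin m × Γ // p.2 ∈ S ^ (p.1 : ℕ)}
  let f : (Fin n → K) → P → ℝ := fun x p => (Λ ^ (p.1.1 : ℕ))⁻¹ * N (ρ p.1.2 *ᵥ x)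
  let N' : (Fin n → K) → ℝ := fun x => ⨆ p : P, f x p
  let p0 : P := ⟨(⟨0, hm⟩, 1), by simp⟩
  have : Nonempty P := ⟨p0⟩
  have hf0 : ∀ x p, 0 ≤ f x p := fun x p => mul_nonneg (by positivity) (hN.nonneg _)
  have hbd : ∀ x, BddAbove (Set.range (f x)) := by
    intro x
    refine ⟨Λ ^ m * N x, ?_⟩
    rintro _ ⟨p, rfl⟩
    have h1 := h p.1.2 (Set.pow_subset_pow_right hS p.1.1.2.le p.2) x
    have h2 : (Λ ^ (p.1.1 : ℕ))⁻¹ ≤ 1 := inv_le_one_of_one_le₀ (one_le_pow₀ hΛ)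
    calc f x p ≤ 1 * N (ρ p.1.2 *ᵥ x) := mul_le_mul_of_nonneg_right h2 (hN.nonneg _)
      _ ≤ _ := by rw [one_mul]; exact h1
  have hle : ∀ x p, f x p ≤ N' x := fun x p => le_ciSup (hbd x) p
  have hN0 : ∀ x, N x ≤ N' x := fun x => by
    have := hle x p0
    simpa [f, p0] using this
  refine ⟨N', ⟨?_, ?_, ?_⟩, ?_⟩
  · intro c x
    simp only [N']
    rw [Real.mul_iSup_of_nonneg (v.nonneg c)]
    congr 1
    funext p
    simp only [f]
    rw [mulVec_smul, hN.smul]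
    ring
  · intro x y
    refine ciSup_le fun p => ?_
    have h1 := hle x p
    have h2 := hle y p
    have h3 : f (x + y) p ≤ f x p + f y p := by
      simp only [f]
      rw [mulVec_add, ← mul_add]
      exact mul_le_mul_of_nonneg_left (hN.add _ _) (by positivity)
    linarith
  · obtain ⟨c, hc, h5⟩ := hN.lower
    exact ⟨c, hc, fun x => (h5 x).trans (hN0 x)⟩
  · intro s hs x
    refine ciSup_le fun p => ?_
    obtain ⟨⟨i, w⟩, hw⟩ := p
    have hws : w * s ∈ S ^ ((i : ℕ) + 1) := by rw [pow_succ]; exact Set.mul_mem_mul hw hs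
    simp only [f]
    rw [mulVec_mulVec, ← map_mul]
    by_cases hi : (i : ℕ) + 1 < m
    · have h1 := hle x ⟨(⟨i + 1, hi⟩, w * s), hws⟩
      simp only [f] at h1
      have : (Λ ^ (i : ℕ))⁻¹ = Λ * (Λ ^ ((i : ℕ) + 1))⁻¹ := by rw [pow_succ]; field_simp
      rw [this, mul_assoc]
      exact mul_le_mul_of_nonneg_left h1 hΛ0.le
    · have hi' : (i : ℕ) + 1 = m := by have := i.2; omega
      rw [hi'] at hws
      have h1 := h _ hws x
      calc (Λ ^ (i : ℕ))⁻¹ * N (ρ (w * s) *ᵥ x) ≤ (Λ ^ (i : ℕ))⁻¹ * (Λ ^ m * N x) :=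
            mul_le_mul_of_nonneg_left h1 (by positivity)
        _ = Λ * N x := by
          have e : Λ ^ m = Λ ^ (i : ℕ) * Λ := by rw [← pow_succ]; exact congrArg (Λ ^ ·) hi'.symm
          rw [e]; field_simp
        _ ≤ _ := mul_le_mul_of_nonneg_left (hN0 x) hΛ0.le

lemma nv_VNorm (v : AbsoluteValue K ℝ) : VNorm v (nv v : (Fin n → K) → ℝ) :=
  ⟨nv_smul v, nv_add v, 1, one_pos, fun x => by simp⟩

lemma entry_exists_bound (v : AbsoluteValue K ℝ) (M : Matrix (Fin n) (Fin n) K) :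
    ∃ c, 0 ≤ c ∧ ∀ i k, v (M i k) ≤ c := by
  refine ⟨∑ p : Fin n × Fin n, v (M p.1 p.2), Finset.sum_nonneg fun _ _ => v.nonneg _, fun i k => ?_⟩
  exact Finset.single_le_sum (f := fun p : Fin n × Fin n => v (M p.1 p.2))
    (fun _ _ => v.nonneg _) (Finset.mem_univ (i, k))

lemma Bdd.exists (hS : S.Finite) (v : AbsoluteValue K ℝ) (ρ : Γ →* Matrix (Fin n) (Fin n) K) :
    ∃ Λ, Bdd v ρ S Λ := by
  choose c hc0 hc using fun s => entry_exists_bound v (ρ s)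
  obtain ⟨B, hB⟩ := (hS.image c).bddAbove
  refine ⟨n * B, nv v, nv_VNorm v, fun s hs x => ?_⟩
  have h1 : c s ≤ B := hB ⟨s, hs, rfl⟩
  exact nv_mulVec_le v _ x ((hc0 s).trans h1) fun i k => (hc s i k).trans h1

lemma conj_VNorm (v : AbsoluteValue K ℝ) (Q Q' : Matrix (Fin n) (Fin n) K) (h : Q * Q' = 1) :
    VNorm v (fun x => nv v (Q' *ᵥ x)) := by
  refine ⟨fun c x => by rw [mulVec_smul, nv_smul], fun x y => by rw [mulVec_add]; exact nv_add v _ _,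
    ?_⟩
  obtain ⟨c, hc0, hc⟩ := entry_exists_bound v Q
  refine ⟨(n * c + 1)⁻¹, by positivity, fun x => ?_⟩
  have h1 := nv_mulVec_le v Q (Q' *ᵥ x) hc0 hc
  rw [mulVec_mulVec, h, one_mulVec] at h1
  rw [inv_mul_le_iff₀ (by positivity)]
  have := nv_nonneg v (Q' *ᵥ x)
  linarith

lemma Bdd.of_entries (Q Q' : Matrix (Fin n) (Fin n) K) (h : Q * Q' = 1) {B : ℝ} (hB : 0 ≤ B)
    (hS : ∀ s ∈ S, ∀ i k, v ((Q' * ρ s * Q) i k) ≤ B) : Bdd v ρ S (n * B) := by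
  refine ⟨_, conj_VNorm v Q Q' h, fun s hs x => ?_⟩
  have h1 := nv_mulVec_le v (Q' * ρ s * Q) (Q' *ᵥ x) hB (hS s hs)
  rwa [mulVec_mulVec, mul_assoc, h, mul_one, ← mulVec_mulVec] at h1

lemma VNorm.auerbach {N : (Fin n → K) → ℝ} (hN : VNorm v N) :
    ∃ E : Matrix (Fin n) (Fin n) K, E.det ≠ 0 ∧
      ∀ (c : Fin n → K) i, v (c i) * N (E i) ≤ 2 * N (c ᵥ* E) := by
  obtain ⟨a, ha, hlow⟩ := hN.lower
  have hrow : ∀ E : Matrix (Fin n) (Fin n) K, E.det ≠ 0 → ∀ i, E i ≠ 0 := by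
    intro E hE i h0
    exact hE (det_eq_zero_of_row_eq_zero i fun j => by rw [h0]; rfl)
  let f : Matrix (Fin n) (Fin n) K → ℝ := fun E => v E.det / ∏ i, N (E i)
  let X : Set ℝ := f '' {E | E.det ≠ 0}
  have hfpos : ∀ E : Matrix (Fin n) (Fin n) K, E.det ≠ 0 → 0 < f E := fun E hE =>
    div_pos (v.pos hE) (Finset.prod_pos fun i _ => hN.pos (hrow E hE i))
  have hdet : ∀ E : Matrix (Fin n) (Fin n) K, v E.det ≤ n.factorial * ∏ i, nv v (E i) := by
    intro E
    rw [← det_transpose, Matrix.det_apply]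
    refine (v_sum_le v _ _).trans ?_
    have : ∀ σ ∈ (Finset.univ : Finset (Equiv.Perm (Fin n))),
        v (Equiv.Perm.sign σ • ∏ i, Eᵀ (σ i) i) ≤ ∏ i, nv v (E i) := fun σ _ => by
      have e : v (Equiv.Perm.sign σ • ∏ i, Eᵀ (σ i) i) = v (∏ i, Eᵀ (σ i) i) := by
        rcases Int.units_eq_one_or (Equiv.Perm.sign σ) with h | h <;> rw [h] <;> simp
      rw [e, map_prod]
      exact Finset.prod_le_prod (fun _ _ => v.nonneg _) fun i _ => le_nv v (E i) _
    refine (Finset.sum_le_card_nsmul _ _ _ this).trans ?_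
    simp [Fintype.card_perm]
  have hXb : BddAbove X := by
    refine ⟨n.factorial * (a⁻¹) ^ n, ?_⟩
    rintro _ ⟨E, hE, rfl⟩
    rw [div_le_iff₀ (Finset.prod_pos fun i _ => hN.pos (hrow E hE i))]
    refine (hdet E).trans ?_
    rw [mul_assoc]
    refine mul_le_mul_of_nonneg_left ?_ (by positivity)
    have : (a⁻¹) ^ n * ∏ i, N (E i) = ∏ i, a⁻¹ * N (E i) := by
      rw [Finset.prod_mul_distrib]; simp
    rw [this]
    refine Finset.prod_le_prod (fun i _ => nv_nonneg v _) fun i _ => ?_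
    rw [le_inv_mul_iff₀ ha]
    exact hlow _
  have hXne : X.Nonempty := ⟨f 1, 1, by simp, rfl⟩
  have hsup : 0 < sSup X := lt_of_lt_of_le (hfpos 1 (by simp)) (le_csSup hXb ⟨1, by simp, rfl⟩)
  obtain ⟨_, ⟨E, hE, rfl⟩, hlt⟩ := exists_lt_of_lt_csSup hXne (half_lt_self hsup)
  refine ⟨E, hE, fun c i => ?_⟩
  by_cases hc : c i = 0
  · rw [hc, map_zero, zero_mul]
    have := hN.nonneg (c ᵥ* E)
    linarith
  let E' := E.updateRow i (c ᵥ* E)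
  have hE'det : E'.det = c i * E.det := by
    have := Matrix.det_updateRow_sum E i c
    rw [smul_eq_mul] at this
    rw [← this]
    simp only [E']
    congr 2
    rw [vecMul_eq_sum]
  have hE' : E'.det ≠ 0 := by rw [hE'det]; exact mul_ne_zero hc hE
  have h1 : f E' ≤ sSup X := le_csSup hXb ⟨E', hE', rfl⟩
  have h2 : f E' ≤ 2 * f E := by linarith
  have hx : 0 < N (c ᵥ* E) := by
    have := hN.pos (hrow E' hE' i)
    simpa [E'] using this
  have hNi := hN.pos (hrow E hE i)
  have hprod : ∏ k, N (E k) = N (E i) * ∏ k ∈ Finset.univ.erase i, N (E k) :=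
    (Finset.mul_prod_erase _ _ (Finset.mem_univ i)).symm
  have hprod' : ∏ k, N (E' k) = N (c ᵥ* E) * ∏ k ∈ Finset.univ.erase i, N (E k) := by
    rw [← Finset.mul_prod_erase _ _ (Finset.mem_univ i)]
    congr 1
    · simp [E']
    · refine Finset.prod_congr rfl fun k hk => ?_
      simp [E', updateRow_ne (Finset.ne_of_mem_erase hk)]
  have hprodpos : 0 < ∏ k ∈ Finset.univ.erase i, N (E k) := Finset.prod_pos fun k _ => hN.pos (hrow E hE k)
  have hvE := v.pos hE
  simp only [f] at h2
  rw [hE'det, hprod, hprod', map_mul] at h2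
  set Q := ∏ k ∈ Finset.univ.erase i, N (E k)
  have e1 : v (c i) * v E.det / (N (c ᵥ* E) * Q) = (v E.det / Q) * (v (c i) / N (c ᵥ* E)) := by
    field_simp
  have e2 : 2 * (v E.det / (N (E i) * Q)) = (v E.det / Q) * (2 / N (E i)) := by
    field_simp
  rw [e1, e2] at h2
  have h3 := le_of_mul_le_mul_left h2 (by positivity)
  rwa [div_le_div_iff₀ hx hNi] at h3

lemma VNorm.conj_entries {N : (Fin n → K) → ℝ} (E : Matrix (Fin n) (Fin n) K) (hE : E.det ≠ 0)
    (h : ∀ (c : Fin n → K) i, v (c i) * N (E i) ≤ 2 * N (c ᵥ* E))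
    {M : Matrix (Fin n) (Fin n) K} (hM : ∀ x, N (M *ᵥ x) ≤ Λ * N x) (i k : Fin n) :
    v ((Eᵀ⁻¹ * M * Eᵀ) k i) * N (E k) ≤ 2 * (Λ * N (E i)) := by
  have hu : IsUnit Eᵀ.det := by rw [det_transpose]; exact hE.isUnit
  have e : (fun k => (Eᵀ⁻¹ * M * Eᵀ) k i) ᵥ* E = M *ᵥ E i := by
    have e1 : Eᵀ * (Eᵀ⁻¹ * M * Eᵀ) = M * Eᵀ := by
      rw [← mul_assoc, ← mul_assoc, mul_nonsing_inv _ hu, one_mul]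
    funext l
    have := congrFun (congrFun e1 l) i
    rw [← mulVec_transpose]
    simpa [mul_apply, mulVec, dotProduct] using this
  have := h (fun k => (Eᵀ⁻¹ * M * Eᵀ) k i) k
  rw [e] at this
  exact this.trans (by have := hM (E i); linarith)

lemma VNorm.trace_le {N : (Fin n → K) → ℝ} (hN : VNorm v N)
    {M : Matrix (Fin n) (Fin n) K} (hM : ∀ x, N (M *ᵥ x) ≤ Λ * N x) :
    v M.trace ≤ n * (2 * Λ) := by
  obtain ⟨E, hE, h⟩ := hN.auerbach
  have hu : IsUnit Eᵀ.det := by rw [det_transpose]; exact hE.isUnit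
  have e : M.trace = (Eᵀ⁻¹ * M * Eᵀ).trace := by
    rw [trace_mul_comm, ← mul_assoc, mul_nonsing_inv _ hu, one_mul]
  rw [e, trace]
  refine (v_sum_le v _ _).trans ?_
  refine (Finset.sum_le_card_nsmul _ _ (2 * Λ) fun i _ => ?_).trans (by simp)
  have h1 := VNorm.conj_entries E hE h hM i i
  have hpos : 0 < N (E i) := hN.pos (by
    intro h0
    exact hE (det_eq_zero_of_row_eq_zero i fun j => by rw [h0]; rfl))
  rw [← mul_assoc] at h1
  exact le_of_mul_le_mul_right h1 hpos

lemma VNorm.conj_exists {N : (Fin n → K) → ℝ} (hN : VNorm v N) {c0 : K} (hc0 : 1 < v c0) :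
    ∃ Q Q' : Matrix (Fin n) (Fin n) K, Q * Q' = 1 ∧ Q' * Q = 1 ∧
      ∀ (M : Matrix (Fin n) (Fin n) K) (Λ : ℝ), 0 ≤ Λ → (∀ x, N (M *ᵥ x) ≤ Λ * N x) →
      ∀ i k, v ((Q' * M * Q) i k) ≤ 2 * Λ * v c0 := by
  obtain ⟨E, hE, h⟩ := hN.auerbach
  have hpos : ∀ i, 0 < N (E i) := fun i => hN.pos (by
    intro h0
    exact hE (det_eq_zero_of_row_eq_zero i fun j => by rw [h0]; rfl))
  have hex : ∀ i, ∃ d : K, d ≠ 0 ∧ 1 ≤ v d * N (E i) ∧ v d * N (E i) ≤ v c0 := by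
    intro i
    obtain ⟨z, hz1, hz2⟩ := exists_mem_Ioc_zpow (hpos i) hc0
    have hc00 : c0 ≠ 0 := by rintro rfl; rw [map_zero] at hc0; linarith
    refine ⟨(c0 ^ z)⁻¹, inv_ne_zero (zpow_ne_zero _ hc00), ?_, ?_⟩
    · rw [map_inv₀, map_zpow₀, le_inv_mul_iff₀ (by positivity)]; linarith
    · rw [map_inv₀, map_zpow₀, inv_mul_le_iff₀ (by positivity)]
      rwa [zpow_add_one₀ (by positivity)] at hz2
  choose d hd0 hd1 hd2 using hex
  let E' : Matrix (Fin n) (Fin n) K := diagonal d * E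
  have hrow : ∀ i, E' i = d i • E i := by
    intro i; funext k; simp [E', diagonal_mul]
  have hE' : E'.det ≠ 0 := by
    rw [det_mul, det_diagonal]
    exact mul_ne_zero (Finset.prod_ne_zero_iff.2 fun i _ => hd0 i) hE
  have h' : ∀ (c : Fin n → K) i, v (c i) * N (E' i) ≤ 2 * N (c ᵥ* E') := by
    intro c i
    have := h (fun k => c k * d k) i
    have e : (fun k => c k * d k) ᵥ* E = c ᵥ* E' := by
      simp only [E']
      rw [← vecMul_vecMul]
      congr 1
      funext k
      simp [vecMul_diagonal]
    rw [e, map_mul] at this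
    rw [hrow, hN.smul, ← mul_assoc]
    exact this
  have hu : IsUnit E'ᵀ.det := by rw [det_transpose]; exact hE'.isUnit
  refine ⟨E'ᵀ, E'ᵀ⁻¹, mul_nonsing_inv _ hu, nonsing_inv_mul _ hu, fun M Λ hΛ hM k i => ?_⟩
  have h1 := VNorm.conj_entries E' hE' h' hM i k
  rw [hrow, hrow, hN.smul, hN.smul] at h1
  have h2 := hd1 k
  have h3 := hd2 i
  have h4 := v.nonneg ((E'ᵀ⁻¹ * M * E'ᵀ) k i)
  nlinarith [mul_le_mul_of_nonneg_left h3 hΛ]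

lemma Bdd.of_trivial (hv : ∀ x : K, x ≠ 0 → v x = 1) : Bdd v ρ S 1 := by
  refine ⟨nv v, nv_VNorm v, fun s hs x => ?_⟩
  have h1 : ∀ x : K, v x ≤ 1 := fun x => by
    by_cases h : x = 0
    · rw [h, map_zero]; norm_num
    · rw [hv x h]
  by_cases hx : x = 0
  · subst hx; simp
  · obtain ⟨i, hi⟩ := Function.ne_iff.1 hx
    have h2 := le_nv v x i
    rw [hv _ hi] at h2
    have h3 : nv v (ρ s *ᵥ x) ≤ 1 := nv_le v (by norm_num) fun i => h1 _
    linarith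

end norms

lemma gram_ne {k ι : Type*} [Field k] [Fintype ι] [DecidableEq ι] {n : ℕ}
    (w : ι → Matrix (Fin n) (Fin n) k) (h : LinearIndependent k w)
    (hs : Submodule.span k (Set.range w) = ⊤) :
    (Matrix.of fun i l => (w i * w l).trace).det ≠ 0 := by
  intro h0
  obtain ⟨c, hc, hc0⟩ := Matrix.exists_mulVec_eq_zero_iff.2 h0
  let X := ∑ l, c l • w l
  have h1 : ∀ i, (w i * X).trace = 0 := by
    intro i
    have := congrFun hc0 i
    simp only [mulVec, dotProduct, of_apply, Pi.zero_apply] at this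
    rw [← this]
    simp only [X, Finset.mul_sum, trace_sum, Matrix.mul_smul, trace_smul, smul_eq_mul]
    exact Finset.sum_congr rfl fun l _ => mul_comm _ _
  have h2 : ∀ Y : Matrix (Fin n) (Fin n) k, (Y * X).trace = 0 := by
    intro Y
    have hY : Y ∈ Submodule.span k (Set.range w) := by rw [hs]; trivial
    induction hY using Submodule.span_induction with
    | mem x hx => obtain ⟨i, rfl⟩ := hx; exact h1 i
    | zero => simp
    | add x y _ _ e1 e2 => rw [add_mul, trace_add, e1, e2, add_zero]
    | smul a x _ e => rw [smul_mul, trace_smul, e, smul_zero]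
  have h3 : X = 0 := by
    ext i j
    have := h2 (Matrix.single j i 1)
    rw [trace_single_mul] at this
    simpa using this
  exact hc (funext (Fintype.linearIndependent_iff.1 h c h3))

end UKC


namespace UKC

lemma cone_word {Γ K : Type*} [Group Γ] [Field K] {n : ℕ} (ρ : Γ →* Matrix (Fin n) (Fin n) K)
    (S : Set Γ) (m : Set (Fin n → K) → ℝ) {ε : ℝ}
    (h : ∀ s ∈ S, ∀ B, IsCone B → |m {x | ρ s *ᵥ x ∈ B} - m B| ≤ ε) (k : ℕ) :
    ∀ s ∈ S ^ k, ∀ B, IsCone B → |m {x | ρ s *ᵥ x ∈ B} - m B| ≤ k * ε := by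
  induction k with
  | zero => intro s hs B _; rw [pow_zero, Set.mem_one] at hs; subst hs; simp
  | succ k ih =>
    intro s hs B hB
    rw [pow_succ] at hs
    obtain ⟨a, ha, b, hb, rfl⟩ := Set.mem_mul.1 hs
    have hB' : IsCone {x | ρ a *ᵥ x ∈ B} := by
      intro c hc x hx
      rw [Set.mem_ofPred_eq, mulVec_smul]
      exact hB c hc _ hx
    have h1 := h b hb _ hB'
    have h2 := ih a ha B hB
    have e : {x | ρ (a * b) *ᵥ x ∈ B} = {x | ρ b *ᵥ x ∈ {x | ρ a *ᵥ x ∈ B}} := by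
      ext x
      simp only [Set.mem_ofPred_eq, mulVec_mulVec, map_mul]
    rw [e]
    push_cast
    have := abs_add_le (m {x | ρ b *ᵥ x ∈ {x | ρ a *ᵥ x ∈ B}} - m {x | ρ a *ᵥ x ∈ B})
      (m {x | ρ a *ᵥ x ∈ B} - m B)
    rw [sub_add_sub_cancel] at this
    linarith

/-- data at scale `j` for the place `v` -/
def Scale {Γ K V : Type*} [Group Γ] [Field K] {n : ℕ} (ρ : Γ →* Matrix (Fin n) (Fin n) K)
    (va : V → AbsoluteValue K ℝ) (u : V) (j : ℕ) : Prop :=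
  ∃ (T : Set Γ) (R : ℝ) (m : Set (Fin n → K) → ℝ), (1 : Γ) ∈ T ∧ (∀ t ∈ T, t⁻¹ ∈ T) ∧
    Subgroup.closure T = ⊤ ∧ 4 ≤ R ∧ (2 : ℝ) ^ j ≤ R ∧ (∀ u', Bdd (va u') ρ T R) ∧
    ¬ Bdd (va u) ρ T (R / 2) ∧ IsMean m ∧ m {0} = 0 ∧
    ∀ t ∈ T ^ (2 * (3 * j + n)), ∀ B, IsCone B → |m {x | ρ t *ᵥ x ∈ B} - m B| ≤ 1 / ((j : ℝ) + 1)

lemma Scale.anti {Γ K V : Type*} [Group Γ] [Field K] {n : ℕ} {ρ : Γ →* Matrix (Fin n) (Fin n) K}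
    {va : V → AbsoluteValue K ℝ} {u : V} {i j : ℕ} (hij : i ≤ j) (h : Scale ρ va u j) :
    Scale ρ va u i := by
  obtain ⟨T, R, m, h1, h2, h3, h4, h5, h6, h7, h8, h9, h10⟩ := h
  refine ⟨T, R, m, h1, h2, h3, h4, (pow_le_pow_right₀ (by norm_num) hij).trans h5, h6, h7, h8, h9,
    fun t ht B hB => (h10 t (Set.pow_subset_pow_right h1 (by omega) ht) B hB).trans ?_⟩
  have : (i : ℝ) ≤ j := by exact_mod_cast hij
  exact one_div_le_one_div_of_le (by positivity) (by linarith)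

theorem Scale.false {Γ K V : Type*} [Group Γ] [Field K] [Fintype V] {n : ℕ} (hn : 0 < n)
    (ρ : Γ →* Matrix (Fin n) (Fin n) K) (hdet : ∀ γ, (ρ γ).det = 1)
    (hspan : ∀ H : Subgroup Γ, H.FiniteIndex → Submodule.span K (ρ '' (H : Set Γ)) = ⊤)
    (va : V → AbsoluteValue K ℝ) (O : Subring K) (hO : ∀ γ i k, ρ γ i k ∈ O)
    (hP1 : ∀ x ∈ O, x ≠ 0 → 1 ≤ ∏ u, va u x) (u : V) (h : ∀ j, Scale ρ va u j) : False := by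
  -- a nontrivial element
  have hc0 : ∃ c0 : K, 1 < va u c0 := by
    by_contra hcon
    push Not at hcon
    obtain ⟨T, R, m, h1, h2, h3, h4, h5, h6, h7, h8, h9, h10⟩ := h 0
    refine h7 (Bdd.mono (Bdd.of_trivial fun x hx => ?_) (by linarith : (1 : ℝ) ≤ R / 2))
    refine le_antisymm (hcon x) ?_
    have := hcon x⁻¹
    rw [map_inv₀] at this
    exact (inv_le_one₀ ((va u).pos hx)).1 this
  obtain ⟨c0, hc0⟩ := hc0
  obtain ⟨J, hJ⟩ := pow_unbounded_of_one_lt (2 * va u c0) (one_lt_two : (1 : ℝ) < 2)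
  choose T R m h1 h2 h3 h4 h5 h6 h7 h8 h9 h10 using fun j => h (j + J)
  have hR : ∀ j, 2 ≤ R j := fun j => by linarith [h4 j]
  have hRc : ∀ j, 2 * va u c0 ≤ R j := fun j => by
    have : (2 : ℝ) ^ J ≤ 2 ^ (j + J) := pow_le_pow_right₀ (by norm_num) (by omega)
    linarith [h5 j]
  choose N hN hNe using fun j => h6 j u
  choose Q Q' hQ1 hQ2 hQ using fun j => (hN j).conj_exists hc0
  let A : ℕ → Γ →* Matrix (Fin n) (Fin n) K := fun j =>
    { toFun := fun γ => Q' j * ρ γ * Q j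
      map_one' := by rw [map_one, mul_one, hQ2]
      map_mul' := fun a b => by
        rw [map_mul]
        have : Q' j * ρ a * Q j * (Q' j * ρ b * Q j) = Q' j * ρ a * (Q j * Q' j) * ρ b * Q j := by
          simp only [mul_assoc]
        rw [this, hQ1, mul_one]
        simp only [mul_assoc] }
  have hA : ∀ j γ, A j γ = Q' j * ρ γ * Q j := fun j γ => rfl
  have htr : ∀ j a b, (A j a * A j b).trace = (ρ (a * b)).trace := by
    intro j a b
    rw [← map_mul, hA, trace_mul_comm, ← mul_assoc, hQ1, one_mul]
  refine LTp (va u) R hR hn T h1 h2 h3 A ?_ ?_ (fun j => 2 * (3 * j + n)) (fun j => by omega) ?_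
    (fun j B => m j ((fun x => Q' j *ᵥ x) ⁻¹' B)) (fun j => (h8 j).map _) ?_ ?_ ?_ ?_
  · intro j γ
    rw [hA, det_mul_right_comm, det_mul, hQ2, det_one, one_mul, hdet]
  · intro j t ht i k
    have := hQ j (ρ t) (R j) (by linarith [hR j]) (hNe j t ht) i k
    rw [hA]
    refine this.trans ?_
    have := hRc j
    nlinarith [hR j]
  · intro j
    by_contra hcon
    push Not at hcon
    have hRj := hR j
    have hM : 0 < 2 * (3 * j + n) := by omega
    apply h7 j
    refine Bdd.root (h1 j) (by linarith [h4 j]) hM ?_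
    have hb := Bdd.of_entries (v := va u) (ρ := ρ) (S := T j ^ (2 * (3 * j + n))) (Q j) (Q' j)
      (hQ1 j) (B := R j ^ (3 * j)) (by positivity) fun s hs i k => (hcon s hs i k).le
    refine hb.mono ?_
    have e1 : (n : ℝ) * R j ^ (3 * j) ≤ R j ^ (3 * j + n) := by
      rw [pow_add, mul_comm]
      exact mul_le_mul_of_nonneg_left (R_nat R hR n j) (by positivity)
    refine e1.trans ?_
    rw [pow_mul]
    refine pow_le_pow_left₀ (by linarith) ?_ _
    nlinarith [h4 j]
  · intro j
    have : (fun x => Q' j *ᵥ x) ⁻¹' {0} = {0} := by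
      ext x
      simp only [Set.mem_preimage, Set.mem_singleton_iff]
      constructor
      · intro hx
        have := congrArg (fun y => Q j *ᵥ y) hx
        simpa [mulVec_mulVec, hQ1] using this
      · rintro rfl; simp
    show m j ((fun x => Q' j *ᵥ x) ⁻¹' {0}) = 0
    rw [this, h9]
  · intro j t ht B hB
    have hB' : IsCone ((fun x => Q' j *ᵥ x) ⁻¹' B) := by
      intro c hc x hx
      show Q' j *ᵥ (c • x) ∈ B
      rw [mulVec_smul]
      exact hB c hc _ hx
    have := h10 j t (Set.pow_subset_pow_right (h1 j) (by omega) ht) _ hB'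
    have e : (fun x => Q' j *ᵥ x) ⁻¹' {x | A j t *ᵥ x ∈ B} =
        {x | ρ t *ᵥ x ∈ (fun x => Q' j *ᵥ x) ⁻¹' B} := by
      ext x
      simp only [Set.mem_preimage, Set.mem_ofPred_eq, hA, mulVec_mulVec, mul_assoc, hQ1, mul_one]
    show |m j ((fun x => Q' j *ᵥ x) ⁻¹' {x | A j t *ᵥ x ∈ B}) - m j ((fun x => Q' j *ᵥ x) ⁻¹' B)| ≤ _
    rw [e]
    refine this.trans (one_div_le_one_div_of_le (by positivity) ?_)
    push_cast
    have : (0 : ℝ) ≤ J := by positivity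
    linarith
  · intro L
    set d := Fintype.card (Fin n × Fin n) with hd
    let E0 := d.factorial + (n + (1 + (L + L))) * d
    refine ⟨E0 * Fintype.card V, fun j w hw hli => ?_⟩
    have hRj := hR j
    set D : K := (Matrix.of fun i l => (A j (w i) * A j (w l)).trace).det with hD
    have hD0 : D ≠ 0 := by
      refine gram_ne _ hli ?_
      exact hli.span_eq_top_of_card_eq_finrank' (by simp [Module.finrank_matrix])
    have hDO : D ∈ O := by
      have htO : ∀ i l, (A j (w i) * A j (w l)).trace ∈ O := by
        intro i l
        rw [htr, trace]
        exact sum_mem fun i _ => hO _ _ _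
      rw [hD, Matrix.det_apply]
      refine sum_mem fun σ _ => ?_
      rcases Int.units_eq_one_or (Equiv.Perm.sign σ) with hσ | hσ
      · rw [hσ, one_smul]; exact prod_mem fun i _ => htO _ _
      · rw [hσ, Units.neg_smul, one_smul]; exact neg_mem (prod_mem fun i _ => htO _ _)
    have hup : ∀ u', va u' D ≤ R j ^ E0 := by
      intro u'
      obtain ⟨N1, hN1, hN1e⟩ := h6 j u'
      have hb : ∀ i l, va u' ((Matrix.of fun i l => (A j (w i) * A j (w l)).trace) i l) ≤
          R j ^ (n + (1 + (L + L))) := by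
        intro i l
        rw [of_apply, htr]
        have hwl : w i * w l ∈ T j ^ (L + L) := by
          rw [pow_add]; exact Set.mul_mem_mul (hw i) (hw l)
        have := hN1.trace_le (pow_expand (by linarith) hN1e (L + L) _ hwl)
        refine this.trans ?_
        rw [pow_add (R j) n, pow_add (R j) 1, pow_one]
        exact mul_le_mul (R_nat R hR n j) (mul_le_mul_of_nonneg_right hRj (by positivity))
          (by positivity) (by positivity)
      refine (v_det_le (va u') _ hb).trans ?_
      rw [← hd, pow_add (R j) d.factorial, pow_mul (R j) (n + (1 + (L + L)))]
      exact mul_le_mul_of_nonneg_right (R_nat R hR _ j) (by positivity)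
    have h11 := hP1 D hDO hD0
    classical
    rw [← Finset.mul_prod_erase _ _ (Finset.mem_univ u)] at h11
    have h12 : ∏ u' ∈ Finset.univ.erase u, va u' D ≤ R j ^ (E0 * Fintype.card V) := by
      refine (Finset.prod_le_prod (fun _ _ => (va _).nonneg _) fun u' _ => hup u').trans ?_
      rw [Finset.prod_const, ← pow_mul]
      refine pow_le_pow_right₀ (by linarith) (Nat.mul_le_mul_left _ ?_)
      exact Finset.card_le_univ _
    have h13 : 1 ≤ va u D * R j ^ (E0 * Fintype.card V) :=
      h11.trans (mul_le_mul_of_nonneg_left h12 ((va u).nonneg _))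
    rw [inv_le_iff_one_le_mul₀ (by positivity)]
    exact h13
  · intro j H hH
    rw [eq_top_iff]
    intro X _
    have hX : Q j * X * Q' j ∈ Submodule.span K (ρ '' (H : Set Γ)) := by rw [hspan H hH]; trivial
    have key : ∀ Y ∈ Submodule.span K (ρ '' (H : Set Γ)),
        Q' j * Y * Q j ∈ Submodule.span K (A j '' (H : Set Γ)) := by
      intro Y hY
      induction hY using Submodule.span_induction with
      | mem x hx =>
        obtain ⟨γ, hγ, rfl⟩ := hx
        exact Submodule.subset_span ⟨γ, hγ, rfl⟩
      | zero => simp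
      | add x y _ _ e1 e2 => rw [mul_add, add_mul]; exact add_mem e1 e2
      | smul a x _ e => rw [Matrix.mul_smul, Matrix.smul_mul]; exact Submodule.smul_mem _ _ e
    have := key _ hX
    have e : Q' j * (Q j * X * Q' j) * Q j = (Q' j * Q j) * X * (Q' j * Q j) := by
      simp only [mul_assoc]
    rwa [e, hQ2, one_mul, mul_one] at this

/-- uniform non-amenability of the linear action on cones -/
theorem LT {Γ K V : Type*} [Group Γ] [Field K] [Fintype V] {n : ℕ} (hn : 0 < n)
    (ρ : Γ →* Matrix (Fin n) (Fin n) K) (hdet : ∀ γ, (ρ γ).det = 1)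
    (hspan : ∀ H : Subgroup Γ, H.FiniteIndex → Submodule.span K (ρ '' (H : Set Γ)) = ⊤)
    (va : V → AbsoluteValue K ℝ) (O : Subring K) (hO : ∀ γ i k, ρ γ i k ∈ O)
    (hP1 : ∀ x ∈ O, x ≠ 0 → 1 ≤ ∏ u, va u x) (p0 : ℕ) (hp0 : 0 < p0)
    (hP2 : ∀ S : Finset Γ, (1 : Γ) ∈ S → (∀ s ∈ S, s⁻¹ ∈ S) →
      Subgroup.closure (S : Set Γ) = ⊤ → ∃ u, ¬ Bdd (va u) ρ ((S : Set Γ) ^ p0) 2) :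
    ∃ ε : ℝ, 0 < ε ∧ ∀ S : Finset Γ, (1 : Γ) ∈ S → (∀ s ∈ S, s⁻¹ ∈ S) →
      Subgroup.closure (S : Set Γ) = ⊤ → ∀ m : Set (Fin n → K) → ℝ, IsMean m → m {0} = 0 →
      ∃ s ∈ S, ∃ B, IsCone B ∧ ε < |m {x | ρ s *ᵥ x ∈ B} - m B| := by
  by_contra hcon
  push Not at hcon
  have hall : ∀ j, ∃ u, Scale ρ va u j := by
    intro j
    let p1 := p0 * (j + 1)
    let q := p1 * (2 * (3 * j + n))
    obtain ⟨S, hS1, hSi, hSg, m, hm, hm0, hinv⟩ := hcon (1 / (((j : ℝ) + 1) * (q + 1))) (by positivity)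
    have hp1 : 0 < p1 := by positivity
    have hSs : (S : Set Γ) ⊆ (S : Set Γ) ^ p1 := by
      have := Set.pow_subset_pow_right (s := (S : Set Γ)) hS1 (Nat.succ_le_of_lt hp1)
      simpa using this
    have hTf : ((S : Set Γ) ^ p1).Finite := by
      classical
      rw [← Finset.coe_pow]
      exact Finset.finite_toSet _
    have hex : ∃ k : ℕ, ∀ u, Bdd (va u) ρ ((S : Set Γ) ^ p1) (2 ^ k) := by
      choose Λ hΛ using fun u => Bdd.exists hTf (va u) ρ
      obtain ⟨B, hB⟩ := (Set.finite_range Λ).bddAbove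
      obtain ⟨k, hk⟩ := pow_unbounded_of_one_lt B (one_lt_two : (1 : ℝ) < 2)
      exact ⟨k, fun u => (hΛ u).mono ((hB ⟨u, rfl⟩).trans hk.le)⟩
    classical
    obtain ⟨k, hk, hmin⟩ : ∃ k : ℕ, (∀ u, Bdd (va u) ρ ((S : Set Γ) ^ p1) (2 ^ k)) ∧
        ∀ l < k, ¬ ∀ u, Bdd (va u) ρ ((S : Set Γ) ^ p1) (2 ^ l) :=
      ⟨Nat.find hex, Nat.find_spec hex, fun l hl => Nat.find_min hex hl⟩
    have hkj : j + 1 < k := by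
      by_contra hkj
      obtain ⟨u, hu⟩ := hP2 S hS1 hSi hSg
      apply hu
      refine Bdd.root (Set.one_mem_pow hS1) (by norm_num) (Nat.succ_pos j) ?_
      rw [← pow_mul]
      exact (hk u).mono (pow_le_pow_right₀ (by norm_num) (by omega))
    have h7 := hmin (k - 1) (by omega)
    push Not at h7
    obtain ⟨u, hu⟩ := h7
    have ek : (2 : ℝ) ^ k / 2 = 2 ^ (k - 1) := by
      obtain ⟨l, rfl⟩ : ∃ l, k = l + 1 := ⟨k - 1, by omega⟩
      rw [pow_succ]; simp
    refine ⟨u, (S : Set Γ) ^ p1, 2 ^ k, m, Set.one_mem_pow hS1, fun t ht => inv_mem_pow hSi ht, ?_,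
      ?_, pow_le_pow_right₀ (by norm_num) (by omega), hk, by rw [ek]; exact hu, hm, hm0, ?_⟩
    · rw [eq_top_iff, ← hSg]
      exact Subgroup.closure_mono hSs
    · have : (2 : ℝ) ^ 2 ≤ 2 ^ k := pow_le_pow_right₀ (by norm_num) (by omega)
      linarith
    · intro t ht B hB
      rw [← pow_mul] at ht
      have := cone_word ρ (S : Set Γ) m hinv q t ht B hB
      refine this.trans ?_
      rw [mul_one_div, div_le_div_iff₀ (by positivity) (by positivity)]
      nlinarith
  choose u hu using hall
  obtain ⟨v, hv⟩ := Finite.exists_infinite_fiber u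
  refine Scale.false hn ρ hdet hspan va O hO hP1 v fun j => ?_
  rw [Set.infinite_coe_iff] at hv
  obtain ⟨i, hi, hij⟩ := hv.exists_gt j
  have := hu i
  rw [show u i = v from hi] at this
  exact this.anti hij.le

end UKC


namespace UKC

/-- uniform non-amenability -/
def UNA (G : Type*) [Group G] : Prop := ∃ ε : ℝ, 0 < ε ∧ ∀ S : Finset G, (1 : G) ∈ S →
  (∀ s ∈ S, s⁻¹ ∈ S) → Subgroup.closure (S : Set G) = ⊤ → ∀ m : Set G → ℝ, IsMean m →
  ∃ s ∈ S, ∃ A, ε < |m {x | s * x ∈ A} - m A|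

theorem UNA.kazhdan {G : Type*} [Group G] (h : UNA G) : ∃ ε : ℝ, 0 < ε ∧
      ∀ S : Finset G, (1 : G) ∈ S → (∀ s ∈ S, s⁻¹ ∈ S) →
        Subgroup.closure (S : Set G) = ⊤ →
        ∀ f : G → ℂ, Memℓp f 2 →
          ∃ s ∈ S, ε ^ 2 * ∑' x : G, ‖f x‖ ^ 2 ≤ ∑' x : G, ‖f (s⁻¹ * x) - f x‖ ^ 2 := by
  obtain ⟨ε, hε, h⟩ := h
  refine ⟨ε / 2, by positivity, fun S hS1 hSi hSg f hf => ?_⟩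
  have hs : Summable fun x => ‖f x‖ ^ 2 := by
    have := hf.summable (by norm_num)
    simpa using this
  set M := ∑' x, ‖f x‖ ^ 2 with hM
  have hM0 : 0 ≤ M := tsum_nonneg fun x => by positivity
  rcases hM0.eq_or_lt with hM0 | hM0
  · refine ⟨1, hS1, ?_⟩
    rw [← hM0, mul_zero]
    exact tsum_nonneg fun x => by positivity
  let m : Set G → ℝ := fun A => (∑' x, A.indicator (fun x => ‖f x‖ ^ 2) x) / M
  have hm : IsMean m := by
    refine ⟨fun A => div_nonneg (tsum_nonneg fun x => Set.indicator_nonneg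
      (fun _ _ => by positivity) x) hM0.le, ?_, fun A B hAB => ?_⟩
    · simp only [m, Set.indicator_univ]
      exact div_self hM0.ne'
    · simp only [m]
      rw [← add_div, ← (hs.indicator A).tsum_add (hs.indicator B), Set.indicator_union_of_disjoint hAB]
  obtain ⟨s, hsS, A, hA⟩ := h S hS1 hSi hSg m hm
  refine ⟨s, hsS, ?_⟩
  have hs' : Summable fun x => ‖f (s⁻¹ * x)‖ ^ 2 :=
    (Equiv.mulLeft s⁻¹).summable_iff.2 hs
  have hM' : ∑' x, ‖f (s⁻¹ * x)‖ ^ 2 = M := (Equiv.mulLeft s⁻¹).tsum_eq fun x => ‖f x‖ ^ 2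
  have hd : Summable fun x => ‖f (s⁻¹ * x) - f x‖ ^ 2 := by
    refine Summable.of_nonneg_of_le (fun x => by positivity) (fun x => ?_)
      ((hs'.add hs).mul_left 2)
    have h1 := norm_sub_le (f (s⁻¹ * x)) (f x)
    have h2 := norm_nonneg (f (s⁻¹ * x) - f x)
    nlinarith [sq_nonneg (‖f (s⁻¹ * x)‖ - ‖f x‖)]
  set D := ∑' x, ‖f (s⁻¹ * x) - f x‖ ^ 2 with hD
  have e1 : m {x | s * x ∈ A} = (∑' x, A.indicator (fun x => ‖f (s⁻¹ * x)‖ ^ 2) x) / M := by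
    simp only [m]
    congr 1
    rw [← (Equiv.mulLeft s).tsum_eq (A.indicator (fun x => ‖f (s⁻¹ * x)‖ ^ 2))]
    refine tsum_congr fun x => ?_
    by_cases hx : s * x ∈ A
    · rw [Set.indicator_of_mem (show x ∈ {x | s * x ∈ A} from hx), Equiv.coe_mulLeft,
        Set.indicator_of_mem hx, inv_mul_cancel_left]
    · rw [Set.indicator_of_notMem (show x ∉ {x | s * x ∈ A} from hx), Equiv.coe_mulLeft,
        Set.indicator_of_notMem hx]
  have hδ : 0 < ε / 4 := by positivity
  have key : |(∑' x, A.indicator (fun x => ‖f (s⁻¹ * x)‖ ^ 2) x) -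
      ∑' x, A.indicator (fun x => ‖f x‖ ^ 2) x| ≤ ε / 4 * (M + M) + (2 / ε) * D := by
    rw [← (hs'.indicator A).tsum_sub (hs.indicator A)]
    have hsum : Summable fun x => ε / 4 * (‖f (s⁻¹ * x)‖ ^ 2 + ‖f x‖ ^ 2) +
        (2 / ε) * ‖f (s⁻¹ * x) - f x‖ ^ 2 := ((hs'.add hs).mul_left _).add (hd.mul_left _)
    have hval : ∑' x, (ε / 4 * (‖f (s⁻¹ * x)‖ ^ 2 + ‖f x‖ ^ 2) +
        (2 / ε) * ‖f (s⁻¹ * x) - f x‖ ^ 2) = ε / 4 * (M + M) + (2 / ε) * D := by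
      rw [((hs'.add hs).mul_left _).tsum_add (hd.mul_left _), tsum_mul_left, tsum_mul_left,
        hs'.tsum_add hs, hM']
    rw [← hval, ← Real.norm_eq_abs]
    refine tsum_of_norm_bounded hsum.hasSum fun x => ?_
    rw [Real.norm_eq_abs]
    have hnn : 0 ≤ ε / 4 * (‖f (s⁻¹ * x)‖ ^ 2 + ‖f x‖ ^ 2) +
        (2 / ε) * ‖f (s⁻¹ * x) - f x‖ ^ 2 := by positivity
    by_cases hx : x ∈ A
    · rw [Set.indicator_of_mem hx, Set.indicator_of_mem hx]
      set a := ‖f (s⁻¹ * x)‖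
      set b := ‖f x‖
      set d := ‖f (s⁻¹ * x) - f x‖
      have h1 : |a - b| ≤ d := abs_norm_sub_norm_le _ _
      have ha : 0 ≤ a := norm_nonneg _
      have hb : 0 ≤ b := norm_nonneg _
      have h2 : |a ^ 2 - b ^ 2| ≤ d * (a + b) := by
        rw [sq_sub_sq, abs_mul, abs_of_nonneg (by positivity : 0 ≤ a + b), mul_comm]
        exact mul_le_mul_of_nonneg_right h1 (by positivity)
      refine h2.trans ?_
      have e2 : ε / 4 * (a ^ 2 + b ^ 2) + 2 / ε * d ^ 2 - d * (a + b) =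
          (ε / 8) * ((a + b) - 4 / ε * d) ^ 2 + ε / 8 * (a - b) ^ 2 := by
        field_simp; ring
      have e3 : 0 ≤ (ε / 8) * ((a + b) - 4 / ε * d) ^ 2 + ε / 8 * (a - b) ^ 2 := by positivity
      linarith
    · rw [Set.indicator_of_notMem hx, Set.indicator_of_notMem hx, sub_zero, abs_zero]
      exact hnn
  rw [e1] at hA
  simp only [m] at hA
  rw [← sub_div, abs_div, abs_of_pos hM0, lt_div_iff₀ hM0] at hA
  have h3 : ε * M / 2 < 2 / ε * D := by linarith
  have h4 : (ε / 2) * (ε * M / 2) < (ε / 2) * (2 / ε * D) := mul_lt_mul_of_pos_left h3 (by positivity)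
  have e5 : (ε / 2) * (2 / ε * D) = D := by field_simp
  rw [e5] at h4
  nlinarith

end UKC


namespace UKC

section schreier
variable {G : Type*} [Group G]

lemma coset_reps (S : Set G) (hS1 : (1 : G) ∈ S)
    (hSg : Subgroup.closure S = ⊤) (H : Subgroup G) [H.FiniteIndex] (g : G) :
    ∃ w ∈ S ^ H.index, w⁻¹ * g ∈ H := by
  let C : ℕ → Set (G ⧸ H) := fun k => QuotientGroup.mk '' (S ^ k)
  have hmono : ∀ k, C k ⊆ C (k + 1) := fun k =>
    Set.image_mono (Set.pow_subset_pow_right hS1 (Nat.le_succ k))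
  have hstab : ∀ k, C (k + 1) = C k → C k = Set.univ := by
    intro k hk
    have key : ∀ g : G, ∀ x ∈ C k, g • x ∈ C k := by
      intro g
      have hg : g ∈ Subgroup.closure S := by rw [hSg]; trivial
      induction hg using Subgroup.closure_induction with
      | mem s hs =>
        rintro _ ⟨w, hw, rfl⟩
        rw [← hk]
        refine ⟨s * w, ?_, rfl⟩
        rw [pow_succ']
        exact Set.mul_mem_mul hs hw
      | one => intro x hx; rwa [one_smul]
      | mul a b _ _ ha hb => intro x hx; rw [mul_smul]; exact ha _ (hb _ hx)
      | inv a ha h =>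
        have hsub : (fun x => a • x) '' (C k) = C k := by
          apply Set.eq_of_subset_of_ncard_le
          · rintro _ ⟨x, hx, rfl⟩; exact h x hx
          · rw [Set.ncard_image_of_injective _ (MulAction.injective a)]
          · exact Set.toFinite _
        intro x hx
        rw [← hsub] at hx
        obtain ⟨y, hy, rfl⟩ := hx
        simpa using hy
    rw [Set.eq_univ_iff_forall]
    intro x
    obtain ⟨g, rfl⟩ := QuotientGroup.mk_surjective x
    have := key g (QuotientGroup.mk 1) ⟨1, Set.one_mem_pow hS1, rfl⟩
    simpa [MulAction.Quotient.smul_mk] using this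
  have hcard : ∀ k, C k = Set.univ ∨ k + 1 ≤ (C k).ncard := by
    intro k
    induction k with
    | zero => right; simp [C]
    | succ k ih =>
      rcases ih with h | h
      · left
        exact Set.eq_univ_of_univ_subset (h ▸ hmono k)
      · by_cases e : C (k + 1) = C k
        · left; rw [e]; exact hstab k e
        · right
          have := Set.ncard_lt_ncard ((hmono k).ssubset_of_ne (Ne.symm e)) (Set.toFinite _)
          omega
  have hfin : C H.index = Set.univ := by
    rcases hcard H.index with h | h
    · exact h
    · have h1 : (C H.index).ncard ≤ Nat.card (G ⧸ H) := by
        rw [← Set.ncard_univ]; exact Set.ncard_le_ncard (Set.subset_univ _) (Set.toFinite _)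
      have : Nat.card (G ⧸ H) = H.index := rfl
      omega
  have : (QuotientGroup.mk g : G ⧸ H) ∈ C H.index := by rw [hfin]; trivial
  obtain ⟨w, hw, e⟩ := this
  exact ⟨w, hw, QuotientGroup.eq.1 e⟩

lemma schreier (S : Set G) (hS1 : (1 : G) ∈ S) (hSi : ∀ s ∈ S, s⁻¹ ∈ S)
    (hSg : Subgroup.closure S = ⊤) (H : Subgroup G) [H.FiniteIndex] :
    Subgroup.closure (S ^ (2 * H.index + 1) ∩ H) = H := by
  set r := H.index
  set Δ := Subgroup.closure (S ^ (2 * r + 1) ∩ H)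
  have hrep : ∀ g : G, ∃ w ∈ S ^ r, g * w⁻¹ ∈ H := by
    intro g
    obtain ⟨w, hw, h⟩ := coset_reps S hS1 hSg H g⁻¹
    refine ⟨w⁻¹, inv_mem_pow hSi hw, ?_⟩
    have := H.inv_mem h
    simpa using this
  have hall : ∀ g : G, ∃ w ∈ S ^ r, g * w⁻¹ ∈ Δ := by
    intro g
    have hg : g ∈ Subgroup.closure S := by rw [hSg]; trivial
    have step : ∀ g s, s ∈ S → (∃ w ∈ S ^ r, g * w⁻¹ ∈ Δ) → ∃ w ∈ S ^ r, g * s * w⁻¹ ∈ Δ := by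
      rintro g s hs ⟨w, hw, h⟩
      obtain ⟨w', hw', h'⟩ := hrep (w * s)
      refine ⟨w', hw', ?_⟩
      have h2 : w * s * w'⁻¹ ∈ Δ := by
        refine Subgroup.subset_closure ⟨?_, h'⟩
        have e : 2 * r + 1 = r + 1 + r := by ring
        rw [e, pow_add, pow_succ]
        exact Set.mul_mem_mul (Set.mul_mem_mul hw hs) (inv_mem_pow hSi hw')
      have := Δ.mul_mem h h2
      have e : g * w⁻¹ * (w * s * w'⁻¹) = g * s * w'⁻¹ := by group
      rwa [e] at this
    induction hg using Subgroup.closure_induction_right with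
    | one => exact ⟨1, Set.one_mem_pow hS1, by simp⟩
    | mul_right x _ y hs ih => exact step x y hs ih
    | mul_inv_cancel x _ y hs ih => exact step x y⁻¹ (hSi y hs) ih
  apply le_antisymm
  · rw [Subgroup.closure_le]; exact Set.inter_subset_right
  · intro h hh
    obtain ⟨w, hw, h1⟩ := hall h
    have hΔ : Δ ≤ H := by rw [Subgroup.closure_le]; exact Set.inter_subset_right
    have hwH : w ∈ H := by
      have := H.mul_mem (H.inv_mem (hΔ h1)) hh
      simpa using this
    have h2 : w ∈ Δ := Subgroup.subset_closure ⟨Set.pow_subset_pow_right hS1 (by omega) hw, hwH⟩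
    have := Δ.mul_mem h1 h2
    simpa using this

lemma word_mean {X : Type*} [MulAction G X] (S : Set G) (m : Set X → ℝ) {ε : ℝ}
    (h : ∀ s ∈ S, ∀ B, |m {x | s • x ∈ B} - m B| ≤ ε) (k : ℕ) :
    ∀ s ∈ S ^ k, ∀ B, |m {x | s • x ∈ B} - m B| ≤ k * ε := by
  induction k with
  | zero => intro s hs B; rw [pow_zero, Set.mem_one] at hs; subst hs; simp
  | succ k ih =>
    intro s hs B
    rw [pow_succ] at hs
    obtain ⟨a, ha, b, hb, rfl⟩ := Set.mem_mul.1 hs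
    have h1 := h b hb {x | a • x ∈ B}
    have h2 := ih a ha B
    have e : {x | (a * b) • x ∈ B} = {x | b • x ∈ {x | a • x ∈ B}} := by
      ext x
      simp only [Set.mem_ofPred_eq, mul_smul]
    rw [e]
    push_cast
    have := abs_add_le (m {x | b • x ∈ {x | a • x ∈ B}} - m {x | a • x ∈ B})
      (m {x | a • x ∈ B} - m B)
    rw [sub_add_sub_cancel] at this
    linarith

theorem UNA.of_finiteIndex (H : Subgroup G) [H.FiniteIndex] (h : UNA H) : UNA G := by
  obtain ⟨ε, hε, h⟩ := h
  set q := 2 * H.index + 1 with hq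
  refine ⟨ε / q, by positivity, fun S hS1 hSi hSg m hm => ?_⟩
  by_contra hcon
  push Not at hcon
  have hw := word_mean (S : Set G) m (fun s hs B => hcon s hs B) q
  classical
  let π : G → H := fun g => ⟨g * (QuotientGroup.mk (s := H) g⁻¹).out, by
    have : (QuotientGroup.mk (s := H) g⁻¹) = QuotientGroup.mk (QuotientGroup.mk (s := H) g⁻¹).out :=
      (QuotientGroup.out_eq' _).symm
    have := QuotientGroup.eq.1 this
    simpa using this⟩
  have hπ : ∀ (h : H) g, π (h * g) = h * π g := by
    intro h g
    apply Subtype.ext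
    have : (QuotientGroup.mk (s := H) ((h : G) * g)⁻¹) = QuotientGroup.mk g⁻¹ := by
      rw [QuotientGroup.eq]; simp
    simp only [π, Subgroup.coe_mul]
    rw [this, mul_assoc]
  have hfin : {x : H | (x : G) ∈ (S : Set G) ^ q}.Finite := by
    refine Set.Finite.preimage (Subtype.val_injective.injOn) ?_
    rw [← Finset.coe_pow]
    exact Finset.finite_toSet _
  obtain ⟨x, hx, A, hA⟩ := h hfin.toFinset (by simpa using Set.one_mem_pow (s := (S : Set G)) hS1)
    (by intro s hs; simp at hs ⊢; exact inv_mem_pow hSi hs) (by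
      rw [Set.Finite.coe_toFinset]
      apply Subgroup.map_injective H.subtype_injective
      rw [MonoidHom.map_closure, ← MonoidHom.range_eq_map, Subgroup.range_subtype]
      have := schreier (S : Set G) hS1 hSi hSg H
      refine Eq.trans ?_ this
      congr 1
      · ext g
        simp only [Set.mem_image, Set.mem_inter_iff, Set.mem_ofPred_eq]
        constructor
        · rintro ⟨x, hx, rfl⟩; exact ⟨hx, x.2⟩
        · rintro ⟨h1, h2⟩; exact ⟨⟨g, h2⟩, h1, rfl⟩) _ (hm.map π)
  have h2 := hw x (by simpa using hx) (π ⁻¹' A)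
  have e : {g : G | (x : G) • g ∈ π ⁻¹' A} = π ⁻¹' {y | x * y ∈ A} := by
    ext g
    simp only [Set.mem_ofPred_eq, Set.mem_preimage, smul_eq_mul, hπ]
  rw [e] at h2
  have e2 : (q : ℝ) * (ε / q) = ε := mul_div_cancel₀ _ (by positivity)
  rw [e2] at h2
  exact absurd hA (not_lt.2 h2)

end schreier

/-- transfer from a linear action to the group modulo scalars -/
theorem LT_UNA {Γ G K V : Type*} [Group Γ] [Group G] [Field K] [Fintype V] {n : ℕ} (hn : 0 < n)
    (p : Γ →* G) (hp : Function.Surjective p) (hker : (p.ker : Set Γ).Finite)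
    (ρ : Γ →* Matrix (Fin n) (Fin n) K) (hdet : ∀ γ, (ρ γ).det = 1)
    (hscal : ∀ z ∈ p.ker, ∃ c : K, ρ z = c • 1)
    (hspan : ∀ H : Subgroup Γ, H.FiniteIndex → Submodule.span K (ρ '' (H : Set Γ)) = ⊤)
    (va : V → AbsoluteValue K ℝ) (O : Subring K) (hO : ∀ γ i k, ρ γ i k ∈ O)
    (hP1 : ∀ x ∈ O, x ≠ 0 → 1 ≤ ∏ u, va u x) (p0 : ℕ) (hp0 : 0 < p0)
    (hP2 : ∀ S : Finset Γ, (1 : Γ) ∈ S → (∀ s ∈ S, s⁻¹ ∈ S) →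
      Subgroup.closure (S : Set Γ) = ⊤ → ∃ u, ¬ Bdd (va u) ρ ((S : Set Γ) ^ p0) 2) :
    UNA G := by
  obtain ⟨ε, hε, h⟩ := LT hn ρ hdet hspan va O hO hP1 p0 hp0 hP2
  refine ⟨ε, hε, fun S hS1 hSi hSg m hm => ?_⟩
  choose σ hσ using hp
  let e1 : Fin n → K := Pi.single ⟨0, hn⟩ 1
  have he1 : e1 ≠ 0 := fun h0 => by
    have := congrFun h0 ⟨0, hn⟩
    simp [e1] at this
  have hne : ∀ γ, ρ γ *ᵥ e1 ≠ 0 := by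
    intro γ h0
    have := congrArg (fun x => ρ γ⁻¹ *ᵥ x) h0
    simp only [mulVec_mulVec, ← map_mul, inv_mul_cancel, map_one, one_mulVec, mulVec_zero] at this
    exact he1 this
  have hfin : (p ⁻¹' (S : Set G)).Finite := by
    have : p ⁻¹' (S : Set G) ⊆ ⋃ s ∈ S, (fun z => σ s * z) '' (p.ker : Set Γ) := by
      intro x hx
      simp only [Set.mem_iUnion]
      refine ⟨p x, hx, (σ (p x))⁻¹ * x, ?_, by simp⟩
      simp [MonoidHom.mem_ker, hσ]
    exact (Set.Finite.biUnion S.finite_toSet fun s _ => hker.image _).subset this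
  let f : G → Fin n → K := fun g => ρ (σ g) *ᵥ e1
  obtain ⟨s, hs, B, hB, hlt⟩ := h hfin.toFinset (by simpa using hS1)
    (by intro s hs; simp at hs ⊢; exact hSi _ hs) (by
      rw [Set.Finite.coe_toFinset]
      have hkle : p.ker ≤ Subgroup.closure (p ⁻¹' (S : Set G)) := by
        intro z hz
        refine Subgroup.subset_closure ?_
        show p z ∈ (S : Set G)
        rw [MonoidHom.mem_ker.1 hz]; exact hS1
      have hmap : (Subgroup.closure (p ⁻¹' (S : Set G))).map p = ⊤ := by
        rw [MonoidHom.map_closure, Set.image_preimage_eq _ (fun g => ⟨σ g, hσ g⟩), hSg]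
      rw [eq_top_iff]
      intro x _
      have : p x ∈ (Subgroup.closure (p ⁻¹' (S : Set G))).map p := by rw [hmap]; trivial
      obtain ⟨y, hy, hyx⟩ := this
      have hz : y⁻¹ * x ∈ p.ker := by rw [MonoidHom.mem_ker, map_mul, map_inv, hyx]; simp
      have := mul_mem hy (hkle hz)
      simpa using this) (fun B => m (f ⁻¹' B)) (hm.map f) (by
      have : f ⁻¹' {0} = ∅ := by
        ext g
        simp only [Set.mem_preimage, Set.mem_singleton_iff, Set.mem_empty_iff_false, iff_false]
        exact hne _
      show m (f ⁻¹' {0}) = 0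
      rw [this, hm.empty])
  refine ⟨p s, by simpa using hs, f ⁻¹' B, ?_⟩
  have e : f ⁻¹' {x | ρ s *ᵥ x ∈ B} = {x | p s * x ∈ f ⁻¹' B} := by
    ext g
    simp only [Set.mem_preimage, Set.mem_ofPred_eq, f]
    have hz : (σ (p s * g))⁻¹ * (s * σ g) ∈ p.ker := by
      rw [MonoidHom.mem_ker]; simp [hσ]
    obtain ⟨c, hc⟩ := hscal _ hz
    have hc' : ρ (s * σ g) = c • ρ (σ (p s * g)) := by
      have : s * σ g = σ (p s * g) * ((σ (p s * g))⁻¹ * (s * σ g)) := by group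
      rw [this, map_mul, hc, Matrix.mul_smul, mul_one]
    have hcv : ρ (s * σ g) *ᵥ e1 = c • (ρ (σ (p s * g)) *ᵥ e1) := by
      rw [hc', smul_mulVec]
    have hc0 : c ≠ 0 := by
      rintro rfl
      exact hne (s * σ g) (by rw [hcv, zero_smul])
    rw [mulVec_mulVec, ← map_mul, hcv]
    constructor
    · intro hx
      have := hB c⁻¹ (inv_ne_zero hc0) _ hx
      rwa [smul_smul, inv_mul_cancel₀ hc0, one_smul] at this
    · exact fun hx => hB c hc0 _ hx
  rw [← e]
  exact hlt

end UKC


namespace UKC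

structure Rep {Γ G K : Type*} [Group Γ] [Group G] [CommRing K] {n : ℕ} (p : Γ →* G)
    (ρ : Γ →* Matrix (Fin n) (Fin n) K) : Prop where
  surj : Function.Surjective p
  kerfin : (p.ker : Set Γ).Finite
  det : ∀ γ, (ρ γ).det = 1
  scal : ∀ z ∈ p.ker, ∃ c : K, ρ z = c • 1
  gram : ∀ H : Subgroup Γ, H.FiniteIndex → ∃ w : Fin n × Fin n → Γ, (∀ i, w i ∈ H) ∧
    (Matrix.of fun i l => (ρ (w i) * ρ (w l)).trace).det ≠ 0

section
variable {Γ G K : Type*} [Group Γ] [Group G] [Field K] {n : ℕ} {p : Γ →* G}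
    {ρ : Γ →* Matrix (Fin n) (Fin n) K}

lemma Rep.span (h : Rep p ρ) (H : Subgroup Γ) (hH : H.FiniteIndex) :
    Submodule.span K (ρ '' (H : Set Γ)) = ⊤ := by
  obtain ⟨w, hw, hd⟩ := h.gram H hH
  have hli := gram_indep (fun i => ρ (w i)) hd
  have := hli.span_eq_top_of_card_eq_finrank' (by simp [Module.finrank_matrix])
  rw [eq_top_iff, ← this]
  refine Submodule.span_mono ?_
  rintro _ ⟨i, rfl⟩
  exact ⟨_, hw i, rfl⟩

lemma trace_inj {s : Set (Matrix (Fin n) (Fin n) K)} (hs : Submodule.span K s = ⊤)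
    {X Y : Matrix (Fin n) (Fin n) K} (h : ∀ m ∈ s, (X * m).trace = (Y * m).trace) : X = Y := by
  have : ∀ m, (X * m).trace = (Y * m).trace := by
    intro m
    have hm : m ∈ Submodule.span K s := by rw [hs]; trivial
    induction hm using Submodule.span_induction with
    | mem x hx => exact h x hx
    | zero => simp
    | add x y _ _ hx hy => simp [mul_add, hx, hy]
    | smul a x _ hx => simp [hx]
  exact Matrix.ext_iff_trace_mul_right.2 this

lemma Rep.infinite (h : Rep p ρ) (hn : 2 ≤ n) : ¬ (Set.range ρ).Finite := by
  intro hf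
  have : Finite ρ.toHomUnits.range := by
    have : Set.Finite (ρ.toHomUnits.range : Set (Matrix (Fin n) (Fin n) K)ˣ) := by
      refine Set.Finite.of_finite_image (f := Units.val) (hf.subset ?_) Units.val_injective.injOn
      rintro _ ⟨_, ⟨g, rfl⟩, rfl⟩
      exact ⟨g, rfl⟩
    exact this
  have hH : ρ.toHomUnits.ker.FiniteIndex := inferInstance
  obtain ⟨w, hw, hd⟩ := h.gram _ hH
  refine hd ?_
  have e : ∀ i, ρ (w i) = 1 := fun i => by
    have := congrArg Units.val (MonoidHom.mem_ker.1 (hw i))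
    simpa using this
  refine Matrix.det_zero_of_row_eq (i := (⟨0, by omega⟩, ⟨0, by omega⟩))
    (j := (⟨0, by omega⟩, ⟨1, by omega⟩)) (by simp) ?_
  funext l
  simp [e]

/-- uniform bound on the traces of words -/
lemma trace_mem {V : Type*} (va : V → AbsoluteValue K ℝ) (O : Subring K)
    (hO : ∀ γ i k, ρ γ i k ∈ O) {T : Set Γ} (hb : ∀ u, Bdd (va u) ρ T 2) {g : Γ} (hg : g ∈ T) :
    (ρ g).trace ∈ O ∧ ∀ u, va u (ρ g).trace ≤ 4 * n := by
  refine ⟨Subring.sum_mem _ fun i _ => hO g i i, fun u => ?_⟩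
  obtain ⟨N, hN, h⟩ := hb u
  have := hN.trace_le (h g hg)
  linarith

lemma Rep.basis (h : Rep p ρ) {T : Set Γ} (h1 : (1 : Γ) ∈ T) (hi : ∀ t ∈ T, t⁻¹ ∈ T)
    (hg : Subgroup.closure T = ⊤) : ∃ w : Fin n × Fin n → Γ, (∀ i, w i ∈ T ^ (n * n)) ∧
      LinearIndependent K (fun i => ρ (w i)) ∧ Submodule.span K (Set.range fun i => ρ (w i)) = ⊤ := by
  have hsp := span_pow_top ρ T h1 hi (by
    rw [hg]; exact h.span ⊤ inferInstance) (n * n) (by simp [Module.finrank_matrix])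
  obtain ⟨w, hw, hli⟩ := exists_basis_in_set (ι := Fin n × Fin n)
    (by simp [Module.finrank_matrix]) _ hsp
  choose w' hw' hw'' using hw
  obtain rfl : (fun i => ρ (w' i)) = w := funext hw''
  exact ⟨w', hw', hli, hli.span_eq_top_of_card_eq_finrank' (by simp [Module.finrank_matrix])⟩

theorem UNA_fin {V : Type*} [Fintype V] (h : Rep p ρ) (hn : 2 ≤ n) (va : V → AbsoluteValue K ℝ)
    (O : Subring K) (hO : ∀ γ i k, ρ γ i k ∈ O) (hP1 : ∀ x ∈ O, x ≠ 0 → 1 ≤ ∏ u, va u x)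
    (hC : {x | x ∈ O ∧ ∀ u, va u x ≤ 4 * n}.Finite) : UNA G := by
  set C := {x | x ∈ O ∧ ∀ u, va u x ≤ 4 * n} with hCdef
  set b := C.ncard ^ (n * n) with hbdef
  refine LT_UNA (by omega) p h.surj h.kerfin ρ h.det h.scal h.span va O hO hP1 (b + 1 + n * n)
    (by omega) ?_
  intro S h1 hi hg
  by_contra hb
  push Not at hb
  have htr : ∀ g ∈ (S : Set Γ) ^ (b + 1 + n * n), (ρ g).trace ∈ C := fun g hg =>
    trace_mem va O hO hb hg
  have h1' : (1 : Γ) ∈ (S : Set Γ) := h1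
  obtain ⟨w, hw, hli, hsp⟩ := h.basis h1' hi hg
  have hpf : ∀ q, ((S : Set Γ) ^ q).Finite := fun q => by
    induction q with
    | zero => rw [pow_zero]; exact Set.finite_one
    | succ q ih => rw [pow_succ]; exact ih.mul S.finite_toSet
  have hfin : (ρ '' ((S : Set Γ) ^ (b + 1))).Finite :=
    (hpf (b + 1)).image _
  have hcard : (ρ '' ((S : Set Γ) ^ (b + 1))).ncard ≤ b := by
    let D : Set (Fin n × Fin n → K) := Set.pi Set.univ fun _ => C
    have hDf : D.Finite := Set.Finite.pi fun _ => hC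
    have hDc : D.ncard = b := by
      have := hC.to_subtype
      have e : D ≃ (Fin n × Fin n → C) := Equiv.Set.univPi _
      rw [← Nat.card_coe_set_eq, Nat.card_congr e, Nat.card_pi]
      simp [hbdef, Nat.card_coe_set_eq]
    refine le_of_le_of_eq ?_ hDc
    refine Set.ncard_le_ncard_of_injOn (fun X k => (X * ρ (w k)).trace) ?_ ?_ hDf
    · rintro _ ⟨g, hg, rfl⟩ k _
      show (ρ g * ρ (w k)).trace ∈ C
      rw [← map_mul]
      refine htr _ ?_
      rw [pow_add]
      exact Set.mul_mem_mul hg (hw k)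
    · intro X _ Y _ hXY
      refine trace_inj hsp ?_
      rintro _ ⟨k, rfl⟩
      exact congrFun hXY k
  have hmono : ∀ q, ρ '' ((S : Set Γ) ^ q) ⊆ ρ '' ((S : Set Γ) ^ (q + 1)) := fun q =>
    Set.image_mono (Set.pow_subset_pow_right h1' (Nat.le_succ q))
  have hex : ∃ q, ρ '' ((S : Set Γ) ^ (q + 1)) = ρ '' ((S : Set Γ) ^ q) := by
    by_contra hne
    push Not at hne
    have : ∀ q, q ≤ (ρ '' ((S : Set Γ) ^ q)).ncard := by
      intro q
      induction q with
      | zero => simp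
      | succ q ih =>
        have := Set.ncard_lt_ncard ((hmono q).ssubset_of_ne (hne q).symm)
          ((hpf (q + 1)).image _)
        omega
    have := this (b + 1)
    omega
  obtain ⟨q, hq⟩ := hex
  refine h.infinite hn (((hpf q).image ρ).subset ?_)
  rintro _ ⟨g, rfl⟩
  have hgm : g ∈ Subgroup.closure (S : Set Γ) := by rw [hg]; trivial
  have step : ∀ x y, y ∈ S → ρ x ∈ ρ '' ((S : Set Γ) ^ q) → ρ (x * y) ∈ ρ '' ((S : Set Γ) ^ q) := by
    rintro x y hy ⟨z, hz, hzx⟩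
    rw [← hq, map_mul, ← hzx, ← map_mul, pow_succ]
    exact ⟨_, Set.mul_mem_mul hz hy, rfl⟩
  induction hgm using Subgroup.closure_induction_right with
  | one => exact ⟨1, Set.one_mem_pow h1', rfl⟩
  | mul_right x _ y hs ih => exact step _ _ hs ih
  | mul_inv_cancel x _ y hs ih => exact step _ _ (hi _ hs) ih

theorem UNA_alg {V : Type*} [Fintype V] (h : Rep p ρ) (hn : 2 ≤ n) (va : V → AbsoluteValue K ℝ)
    (O : Subring K) (hO : ∀ γ i k, ρ γ i k ∈ O) (hP1 : ∀ x ∈ O, x ≠ 0 → 1 ≤ ∏ u, va u x)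
    (F0 : Subfield K) (hC : ∀ x ∈ O, (∀ u, va u x ≤ 4 * n) → x ∈ F0) (g0 : Γ)
    (hg0 : (ρ g0).trace ∉ F0) : UNA G := by
  refine LT_UNA (by omega) p h.surj h.kerfin ρ h.det h.scal h.span va O hO hP1 (n * n + n * n + 1)
    (by omega) ?_
  intro S h1 hi hg
  by_contra hb
  push Not at hb
  have htr : ∀ g ∈ (S : Set Γ) ^ (n * n + n * n + 1), (ρ g).trace ∈ F0 := fun g hg =>
    hC _ (trace_mem va O hO hb hg).1 (trace_mem va O hO hb hg).2
  have h1' : (1 : Γ) ∈ (S : Set Γ) := h1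
  obtain ⟨w, hw, hli, hsp⟩ := h.basis h1' hi hg
  set A : Matrix (Fin n × Fin n) (Fin n × Fin n) K :=
    Matrix.of fun i l => (ρ (w i) * ρ (w l)).trace with hA
  have hAd : A.det ≠ 0 := gram_ne _ hli hsp
  have hAF : ∀ i l, A i l ∈ F0 := fun i l => by
    simp only [hA, of_apply]
    rw [← map_mul]
    refine htr _ (Set.pow_subset_pow_right h1' (Nat.le_succ _) ?_)
    rw [pow_add]; exact Set.mul_mem_mul (hw i) (hw l)
  -- the inverse has entries in F0
  have hAinv : ∀ i l, A⁻¹ i l ∈ F0 := by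
    let A0 : Matrix (Fin n × Fin n) (Fin n × Fin n) F0 := Matrix.of fun i l => ⟨A i l, hAF i l⟩
    have e : A = A0.map F0.subtype := by ext i l; simp [A0]
    have hu : IsUnit A0.det := by
      rw [isUnit_iff_ne_zero]
      intro h0
      refine hAd ?_
      rw [e, ← RingHom.mapMatrix_apply, ← RingHom.map_det, h0, map_zero]
    have e2 : A⁻¹ = A0⁻¹.map F0.subtype := by
      refine Matrix.inv_eq_left_inv ?_
      rw [e, ← Matrix.map_mul, Matrix.nonsing_inv_mul _ hu]
      simp
    intro i l
    rw [e2]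
    simp
  let E : Set (Matrix (Fin n) (Fin n) K) := {X | ∃ c : Fin n × Fin n → K, (∀ i, c i ∈ F0) ∧
    X = ∑ i, c i • ρ (w i)}
  have hE : ∀ g, (∀ k, (ρ (g * w k)).trace ∈ F0) → ρ g ∈ E := by
    intro g hgk
    let t : Fin n × Fin n → K := fun k => (ρ (g * w k)).trace
    refine ⟨t ᵥ* A⁻¹, fun i => ?_, ?_⟩
    · exact Subfield.sum_mem _ fun k _ => mul_mem (hgk k) (hAinv k i)
    · refine trace_inj hsp ?_
      rintro _ ⟨k, rfl⟩
      have : (t ᵥ* A⁻¹) ᵥ* A = t := by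
        rw [vecMul_vecMul, Matrix.nonsing_inv_mul _ (isUnit_iff_ne_zero.2 hAd), vecMul_one]
      have h2 := congrFun this k
      simp only [Finset.sum_mul, trace_sum, smul_mul, trace_smul]
      rw [← map_mul]
      exact h2.symm
  have hEtr : ∀ X ∈ E, X.trace ∈ F0 := by
    rintro _ ⟨c, hc, rfl⟩
    rw [trace_sum]
    refine Subfield.sum_mem _ fun i _ => ?_
    rw [trace_smul]
    exact mul_mem (hc i) (htr _ (Set.pow_subset_pow_right h1' (by omega) (hw i)))
  have hstep : ∀ s ∈ S, ∀ X ∈ E, ρ s * X ∈ E := by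
    rintro s hs _ ⟨c, hc, rfl⟩
    have hmem : ∀ i, ρ (s * w i) ∈ E := fun i => hE _ fun k => by
      refine htr _ ?_
      rw [mul_assoc]
      rw [show n * n + n * n + 1 = 1 + (n * n + n * n) by ring, pow_add, pow_one, pow_add]
      exact Set.mul_mem_mul hs (Set.mul_mem_mul (hw i) (hw k))
    choose d hd hd' using hmem
    refine ⟨fun j => ∑ i, c i * d i j, fun j => Subfield.sum_mem _ fun i _ =>
      mul_mem (hc i) (hd i j), ?_⟩
    rw [Finset.mul_sum]
    simp only [mul_smul_comm, ← map_mul, hd', Finset.smul_sum, smul_smul, Finset.sum_smul]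
    rw [Finset.sum_comm]
  have hall : ∀ g, ρ g ∈ E := by
    intro g
    have hgm : g ∈ Subgroup.closure (S : Set Γ) := by rw [hg]; trivial
    induction hgm using Subgroup.closure_induction_left with
    | one =>
      refine hE _ fun k => ?_
      rw [one_mul]
      exact htr _ (Set.pow_subset_pow_right h1' (by omega) (hw k))
    | mul_left x hs y _ ih => rw [map_mul]; exact hstep _ hs _ ih
    | inv_mul_cancel x hs y _ ih => rw [map_mul]; exact hstep _ (hi _ hs) _ ih
  exact hg0 (hEtr _ (hall g0))
end

end UKC


namespace UKC

section
open NumberField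

variable {k : Type*} [Field k] [NumberField k]

/-- the index set of absolute values: infinite places with multiplicity and a finite set of finite
places -/
noncomputable def nfval (B : Finset (FinitePlace k)) :
    (Σ w : InfinitePlace k, Fin w.mult) ⊕ B → AbsoluteValue k ℝ
  | .inl u => u.1.1
  | .inr w => w.1.1

def nfring (B : Finset (FinitePlace k)) : Subring k where
  carrier := {x | ∀ w : FinitePlace k, w ∉ B → w x ≤ 1}
  mul_mem' := fun {a b} ha hb w hw => by
    rw [map_mul]
    exact mul_le_one₀ (ha w hw) (apply_nonneg _ _) (hb w hw)
  one_mem' := fun w hw => by simp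
  add_mem' := fun {a b} ha hb w hw =>
    (FinitePlace.add_le w a b).trans (max_le (ha w hw) (hb w hw))
  zero_mem' := fun w hw => by simp
  neg_mem' := fun {a} ha w hw => by
    have h : w (-a) = w a := AbsoluteValue.map_neg w.1 a
    rw [h]; exact ha w hw

lemma nf_prod (B : Finset (FinitePlace k)) (g : AbsoluteValue k ℝ → ℝ) :
    ∏ u, g (nfval B u) = (∏ w : InfinitePlace k, g w.1 ^ w.mult) * ∏ w ∈ B, g w.1 := by
  rw [Fintype.prod_sum_type, Fintype.prod_sigma]
  congr 1
  · refine Finset.prod_congr rfl fun w _ => ?_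
    simp [nfval]
  · simp only [nfval]
    exact Finset.prod_coe_sort B (fun w => g w.1)

lemma nf_P1 (B : Finset (FinitePlace k)) {x : k} (hx : x ∈ nfring B) (h0 : x ≠ 0) :
    1 ≤ ∏ u, nfval B u x := by
  classical
  rw [nf_prod B (fun v => v x)]
  have h := prod_abs_eq_one h0
  have hfin : (Function.mulSupport fun w : FinitePlace k => w x).Finite :=
    FinitePlace.hasFiniteMulSupport h0
  rw [finprod_eq_prod_of_mulSupport_subset (s := hfin.toFinset ∪ B) _ (by
    intro w hw; simp only [Finset.coe_union, Set.mem_union]; left; simpa using hw)] at h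
  rw [← h]
  refine mul_le_mul_of_nonneg_left ?_ (Finset.prod_nonneg fun w _ => pow_nonneg (apply_nonneg _ _) _)
  rw [← Finset.prod_sdiff (Finset.subset_union_right : B ⊆ hfin.toFinset ∪ B)]
  have h1 : ∏ w ∈ (hfin.toFinset ∪ B) \ B, w x ≤ 1 :=
    Finset.prod_le_one (fun w _ => apply_nonneg _ _) fun w hw => hx w (Finset.mem_sdiff.1 hw).2
  have h2 : 0 ≤ ∏ w ∈ B, w x := Finset.prod_nonneg fun w _ => apply_nonneg _ _
  calc _ ≤ 1 * ∏ w ∈ B, w x := mul_le_mul_of_nonneg_right h1 h2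
    _ = _ := by rw [one_mul]; rfl

lemma nf_finite (B : Finset (FinitePlace k)) (b : ℝ) :
    {x | x ∈ nfring B ∧ ∀ u, nfval B u x ≤ b}.Finite := by
  classical
  refine (finite_setOfPred_mulHeight₁_le k
    (∏ u : (Σ w : InfinitePlace k, Fin w.mult) ⊕ B, max b 1 : ℝ)).subset ?_
  rintro x ⟨hx, hxb⟩
  show Height.mulHeight₁ x ≤ _
  rw [mulHeight₁_eq, finprod_eq_prod_of_mulSupport_subset (s := B) _ (by
    intro w hw
    by_contra hwB
    exact hw (max_eq_right (hx w hwB)))]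
  calc _ = ∏ u, max (nfval B u x) 1 := (nf_prod B (fun v => max (v x) 1)).symm
    _ ≤ _ := Finset.prod_le_prod (fun _ _ => by positivity) fun u _ => max_le_max_right _ (hxb u)

variable {Γ G : Type*} [Group Γ] [Group G] {n : ℕ} {p : Γ →* G}
    {ρ : Γ →* Matrix (Fin n) (Fin n) k}

lemma entries_mem {R : Type*} [CommRing R] (ρ : Γ →* Matrix (Fin n) (Fin n) R) (T : Set Γ)
    (hT : Subgroup.closure T = ⊤) (O : Subring R)
    (h : ∀ t ∈ T, ∀ i j, ρ t i j ∈ O ∧ ρ t⁻¹ i j ∈ O) : ∀ γ i j, ρ γ i j ∈ O := by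
  have hm : ∀ A B : Matrix (Fin n) (Fin n) R, (∀ i j, A i j ∈ O) → (∀ i j, B i j ∈ O) →
      ∀ i j, (A * B) i j ∈ O := fun A B hA hB i j => by
    rw [mul_apply]; exact Subring.sum_mem _ fun k _ => mul_mem (hA _ _) (hB _ _)
  intro γ
  have hγ : γ ∈ Subgroup.closure T := by rw [hT]; trivial
  induction hγ using Subgroup.closure_induction_right with
  | one =>
    intro i j
    rw [map_one, one_apply]
    split_ifs
    · exact one_mem _
    · exact zero_mem _
  | mul_right x _ y hs ih => rw [map_mul]; exact hm _ _ ih fun i j => (h y hs i j).1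
  | mul_inv_cancel x _ y hs ih => rw [map_mul]; exact hm _ _ ih fun i j => (h y hs i j).2

theorem UNA_numberField (h : Rep p ρ) (hn : 2 ≤ n) (hfg : Group.FG Γ) : UNA G := by
  classical
  obtain ⟨T, hT⟩ := hfg.out
  have hsup : ∀ x : k, {w : FinitePlace k | ¬ w x ≤ 1}.Finite := by
    intro x
    by_cases hx : x = 0
    · subst hx
      convert Set.finite_empty
      ext w; simp
    · refine (FinitePlace.hasFiniteMulSupport hx).subset ?_
      intro w hw h1
      exact hw (le_of_eq h1)
  let B : Finset (FinitePlace k) := T.biUnion fun t => Finset.univ.biUnion fun i =>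
    Finset.univ.biUnion fun j => (hsup (ρ t i j)).toFinset ∪ (hsup (ρ t⁻¹ i j)).toFinset
  have hB : ∀ t ∈ T, ∀ i j, ρ t i j ∈ nfring B ∧ ρ t⁻¹ i j ∈ nfring B := by
    intro t ht i j
    constructor
    all_goals
      intro w hw
      by_contra hc
      refine hw ?_
      simp only [B, Finset.mem_biUnion, Finset.mem_union, Set.Finite.mem_toFinset]
      refine ⟨t, ht, i, Finset.mem_univ _, j, Finset.mem_univ _, ?_⟩
    · exact Or.inl hc
    · exact Or.inr hc
  exact UNA_fin h hn (nfval B) (nfring B) (entries_mem ρ T hT _ hB)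
    (fun x hx h0 => nf_P1 B hx h0) (nf_finite B _)

end

section
variable {Γ G O : Type*} [Group Γ] [Group G] [CommRing O] {n : ℕ} {p : Γ →* G}
    {ρ : Γ →* Matrix (Fin n) (Fin n) O}

lemma Rep.map {k : Type*} [CommRing k] (h : Rep p ρ) (φ : O →+* k)
    (hφ : ∀ w : Fin n × Fin n → Γ, (Matrix.of fun i l => (ρ (w i) * ρ (w l)).trace).det ≠ 0 →
      φ (Matrix.of fun i l => (ρ (w i) * ρ (w l)).trace).det ≠ 0) :
    Rep p ((φ.mapMatrix : Matrix (Fin n) (Fin n) O →+* _).toMonoidHom.comp ρ) where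
  surj := h.surj
  kerfin := h.kerfin
  det γ := by
    show (φ.mapMatrix (ρ γ)).det = 1
    rw [← RingHom.map_det, h.det, map_one]
  scal z hz := by
    obtain ⟨c, hc⟩ := h.scal z hz
    refine ⟨φ c, ?_⟩
    show φ.mapMatrix (ρ z) = _
    rw [hc]
    ext i j
    simp [one_apply, apply_ite φ]
  gram H hH := by
    obtain ⟨w, hw, hd⟩ := h.gram H hH
    refine ⟨w, hw, ?_⟩
    have := hφ w hd
    rw [RingHom.map_det] at this
    convert this using 2
    ext i l
    simp only [of_apply, RingHom.mapMatrix_apply, map_apply]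
    show (φ.mapMatrix (ρ (w i)) * φ.mapMatrix (ρ (w l))).trace = _
    rw [← map_mul]
    simp only [trace, map_sum, diag_apply, RingHom.mapMatrix_apply, map_apply]

lemma map_ne_zero_of_alg {F k : Type*} [Field F] [IsDomain O] [Algebra F O] [CommRing k]
    [Nontrivial k]
    (φ : O →+* k) {x : O} (hx : IsAlgebraic F x) (h0 : x ≠ 0) : φ x ≠ 0 := by
  have : IsUnit x := by
    have h1 : IsIntegral F x := hx.isIntegral
    have h2 := minpoly.coeff_zero_ne_zero h1 h0
    have h3 := minpoly.aeval F x
    rw [← Polynomial.X_mul_divX_add (minpoly F x), map_add, map_mul, Polynomial.aeval_X,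
      Polynomial.aeval_C] at h3
    have h4 : IsUnit (algebraMap F O ((minpoly F x).coeff 0)) := (isUnit_iff_ne_zero.2 h2).map _
    rw [eq_neg_of_add_eq_zero_right h3] at h4
    exact isUnit_of_mul_isUnit_left ((IsUnit.neg_iff _).1 h4)
  exact (this.map φ).ne_zero

theorem UNA_alg_case (F : Type*) [Field F] (hF : Finite F ∨ CharZero F ∧ Nonempty (F ≃+* ℚ))
    [IsDomain O] [Algebra F O] [Algebra.FiniteType F O] (h : Rep p ρ) (hn : 2 ≤ n)
    (hfg : Group.FG Γ) (hal : ∀ g, IsAlgebraic F (ρ g).trace) : UNA G := by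
  classical
  obtain ⟨m, hm⟩ := Ideal.exists_maximal O
  let _ : Field (O ⧸ m) := Ideal.Quotient.field m
  have hft : Algebra.FiniteType F (O ⧸ m) :=
    Algebra.FiniteType.of_surjective (Ideal.Quotient.mkₐ F m) (Ideal.Quotient.mkₐ_surjective F m)
  have hfin : Module.Finite F (O ⧸ m) := finite_of_finite_type_of_isJacobsonRing F (O ⧸ m)
  have hrep := h.map (Ideal.Quotient.mk m) (fun w hw => map_ne_zero_of_alg (F := F) _ (by
    rw [det_apply]
    have : ∀ x : O, IsAlgebraic F x ↔ x ∈ integralClosure F O := fun x => by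
      rw [mem_integralClosure_iff]; exact isAlgebraic_iff_isIntegral
    rw [this]
    refine sum_mem fun σ _ => ?_
    refine zsmul_mem (prod_mem fun i _ => ?_) _
    rw [← this, of_apply, ← map_mul]
    exact hal _) hw)
  rcases hF with hF | ⟨hF, ⟨e⟩⟩
  · have : Finite (O ⧸ m) := Module.finite_of_finite F
    exact absurd (Set.toFinite _) (hrep.infinite hn)
  · have hcz : CharZero (O ⧸ m) := charZero_of_injective_algebraMap (algebraMap F (O ⧸ m)).injective
    have h1 : Module.Finite ℚ F := Module.Finite.of_surjective
        (Algebra.linearMap ℚ F) (fun x => ⟨e x, by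
          have h2 : e.symm (e x) = ((e x : ℚ) : F) := eq_ratCast e.symm (e x)
          rw [RingEquiv.symm_apply_apply] at h2
          exact h2.symm⟩)
    have hnf : NumberField (O ⧸ m) :=
      { to_charZero := hcz
        to_finiteDimensional := Module.Finite.trans F (O ⧸ m) }
    exact UNA_numberField hrep hn hfg
end

end UKC


namespace UKC
open scoped NNReal

section ext

lemma ext_absval {K0 K : Type*} [Field K0] [Field K] [Algebra K0 K] [Algebra.IsAlgebraic K0 K]
    (v : AbsoluteValue K0 ℝ) (hna : ∀ x y, v (x + y) ≤ max (v x) (v y)) :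
    ∃ w : AbsoluteValue K ℝ, ∀ x, w (algebraMap K0 K x) = v x := by
  classical
  by_cases hnt : ∀ x, v x ≤ 1
  · refine ⟨AbsoluteValue.trivial, fun x => ?_⟩
    by_cases hx : x = 0
    · simp [hx]
    · have h1 := hnt x
      have h2 := hnt x⁻¹
      have h3 : 0 < v x := v.pos hx
      have h4 : v x * v x⁻¹ = 1 := by rw [← map_mul, mul_inv_cancel₀ hx, map_one]
      have h5 : v x = 1 := by nlinarith
      rw [h5]
      simp [AbsoluteValue.trivial, hx]
  push Not at hnt
  obtain ⟨t, ht⟩ := hnt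
  let C := v.Completion
  let ι0 : K0 →+* C :=
    (UniformSpace.Completion.coeRingHom).comp (WithAbs.equiv v).symm.toRingHom
  have hι : ∀ x, ‖ι0 x‖ = v x := fun x => UniformSpace.Completion.norm_coe _
  let _ : NontriviallyNormedField C := { (inferInstance : NormedField C) with
    non_trivial := ⟨ι0 t, by rw [hι]; exact ht⟩ }
  have hu : IsUltrametricDist C := by
    refine IsUltrametricDist.isUltrametricDist_of_forall_norm_add_le_max_norm fun x y => ?_
    induction x, y using UniformSpace.Completion.induction_on₂ with
    | hp => exact isClosed_le (by fun_prop) (by fun_prop)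
    | ih a b =>
      have e : ∀ a : WithAbs v, ‖(a : C)‖ = v a.ofAbs := fun a => UniformSpace.Completion.norm_coe a
      rw [← UniformSpace.Completion.coe_add]
      refine (e _).trans_le ?_
      refine le_of_le_of_eq (hna _ _) ?_
      rw [← e a, ← e b]
  let L := AlgebraicClosure C
  let _ : Algebra K0 L := ((algebraMap C L).comp ι0).toAlgebra
  let φ : K →ₐ[K0] L := IsAlgClosed.lift
  refine ⟨⟨⟨fun x => spectralMulAlgNorm C L (φ x), fun x y => by simp⟩, fun x => apply_nonneg _ _,
    fun x => ?_, fun x y => ?_⟩, fun x => ?_⟩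
  · show spectralMulAlgNorm C L (φ x) = 0 ↔ x = 0
    rw [map_eq_zero_iff_eq_zero]
    exact map_eq_zero φ
  · show spectralMulAlgNorm C L (φ (x + y)) ≤ spectralMulAlgNorm C L (φ x) + spectralMulAlgNorm C L (φ y)
    rw [map_add]; exact map_add_le_add _ _ _
  · show spectralMulAlgNorm C L (φ (algebraMap K0 K x)) = v x
    rw [AlgHom.commutes]
    show spectralNorm C L (algebraMap C L (ι0 x)) = v x
    rw [spectralNorm_extends, hι]

/-- the degree valuation -/
noncomputable def degval (σ F : Type*) [Field F] (Q : ℝ≥0) (hQ : 1 < Q) :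
    Valuation (MvPolynomial σ F) ℝ≥0 where
  toFun p := open Classical in if p = 0 then 0 else Q ^ p.totalDegree
  map_zero' := by simp
  map_one' := by simp
  map_mul' p q := by
    by_cases hp : p = 0
    · simp [hp]
    by_cases hq : q = 0
    · simp [hq]
    simp [hp, hq, MvPolynomial.totalDegree_mul_of_isDomain hp hq, pow_add]
  map_add_le_max' p q := by
    by_cases hp : p = 0
    · subst hp; rw [zero_add]; exact le_max_right _ _
    by_cases hq : q = 0
    · subst hq; rw [add_zero]; exact le_max_left _ _
    by_cases hpq : p + q = 0
    · simp [hpq]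
    simp only [hp, hq, hpq, if_false]
    rcases le_max_iff.1 (MvPolynomial.totalDegree_add p q) with h | h
    · exact le_max_of_le_left (pow_le_pow_right₀ hQ.le h)
    · exact le_max_of_le_right (pow_le_pow_right₀ hQ.le h)

lemma degval_apply {σ F : Type*} [Field F] (Q : ℝ≥0) (hQ : 1 < Q) {p : MvPolynomial σ F}
    (hp : p ≠ 0) : degval σ F Q hQ p = Q ^ p.totalDegree := by
  show (open Classical in if p = 0 then 0 else Q ^ p.totalDegree) = _
  simp [hp]

lemma exists_degabs (σ F K0 : Type*) [Field F] [Field K0] [Algebra (MvPolynomial σ F) K0]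
    [IsFractionRing (MvPolynomial σ F) K0] (Q : ℝ≥0) (hQ : 1 < Q) :
    ∃ v : AbsoluteValue K0 ℝ, (∀ x y, v (x + y) ≤ max (v x) (v y)) ∧
      ∀ p : MvPolynomial σ F, p ≠ 0 → v (algebraMap _ K0 p) = Q ^ p.totalDegree := by
  have hS : nonZeroDivisors (MvPolynomial σ F) ≤ (degval σ F Q hQ).supp.primeCompl := by
    intro p hp hp'
    have hp0 := nonZeroDivisors.ne_zero hp
    have : degval σ F Q hQ p = 0 := hp'
    rw [degval_apply Q hQ hp0] at this
    exact absurd this (pow_ne_zero _ (by positivity))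
  let u := (degval σ F Q hQ).extendToLocalization hS K0
  refine ⟨⟨⟨fun x => (u x : ℝ), fun x y => by simp⟩, fun x => NNReal.coe_nonneg _, fun x => ?_,
    fun x y => ?_⟩, fun x y => ?_, fun p hp => ?_⟩
  · simp
  · have := u.map_add x y
    show (u (x + y) : ℝ) ≤ u x + u y
    rw [← NNReal.coe_add, NNReal.coe_le_coe]
    exact this.trans (max_le (by simp) (by simp))
  · show (u (x + y) : ℝ) ≤ max (u x : ℝ) (u y)
    rw [← NNReal.coe_max, NNReal.coe_le_coe]
    exact u.map_add x y
  · show ((u (algebraMap _ K0 p) : ℝ≥0) : ℝ) = _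
    rw [Valuation.extendToLocalization_apply_map_apply, degval_apply Q hQ hp]
    simp
end ext

end UKC


namespace UKC
open scoped NNReal

/-- roots of minimal polynomials are Galois conjugates -/
lemma root_conj {K0 K : Type*} [Field K0] [Field K] [Algebra K0 K] [Normal K0 K] (x z : K)
    (hz : z ∈ ((minpoly K0 x).map (algebraMap K0 K)).roots) : ∃ τ : K ≃ₐ[K0] K, τ x = z := by
  refine minpoly.exists_algEquiv_of_root' (Algebra.IsAlgebraic.isAlgebraic x) ?_
  have := (Polynomial.mem_roots'.1 hz).2
  rwa [Polynomial.IsRoot, Polynomial.eval_map_algebraMap] at this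

section trans
variable {F K0 K : Type*} [Field F] [Field K0] [Field K] {s : ℕ}
  [Algebra (MvPolynomial (Fin s) F) K0] [IsFractionRing (MvPolynomial (Fin s) F) K0]
  [Algebra K0 K] [FiniteDimensional K0 K] [Normal K0 K]
  [Algebra (MvPolynomial (Fin s) F) K] [IsScalarTower (MvPolynomial (Fin s) F) K0 K]
  [Algebra F K] [IsScalarTower F (MvPolynomial (Fin s) F) K]

lemma trans_P1 (v : AbsoluteValue K0 ℝ) (w : AbsoluteValue K ℝ)
    (hw : ∀ x, w (algebraMap K0 K x) = v x)
    (hv : ∀ p : MvPolynomial (Fin s) F, p ≠ 0 → 1 ≤ v (algebraMap _ K0 p)) (x : K)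
    (hx : IsIntegral (MvPolynomial (Fin s) F) x) (h0 : x ≠ 0) :
    1 ≤ ∏ τ : K ≃ₐ[K0] K, w (τ x) := by
  classical
  set y : K := ∏ τ : K ≃ₐ[K0] K, τ x with hy
  have hy0 : y ≠ 0 := Finset.prod_ne_zero_iff.2 fun τ _ => by simpa using h0
  have hyi : IsIntegral (MvPolynomial (Fin s) F) y := IsIntegral.prod _ fun τ _ =>
    hx.map ((τ : K →ₐ[K0] K).restrictScalars (MvPolynomial (Fin s) F))
  have hfix : ∀ τ : K ≃ₐ[K0] K, τ y = y := by
    intro τ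
    rw [hy, map_prod]
    exact Fintype.prod_equiv (Equiv.mulLeft τ) _ _ fun σ => rfl
  rw [← map_prod, ← hy]
  have hroots : ∀ z ∈ ((minpoly K0 y).map (algebraMap K0 K)).roots, z = y := by
    intro z hz
    obtain ⟨τ, rfl⟩ := root_conj y z hz
    exact hfix τ
  have hsp := Normal.splits (F := K0) (inferInstance : Normal K0 K) y
  have hmon : ((minpoly K0 y).map (algebraMap K0 K)).Monic :=
    (minpoly.monic (Algebra.IsIntegral.isIntegral y)).map _
  have hc := hsp.coeff_zero_eq_prod_roots_of_monic hmon
  rw [Multiset.eq_replicate_of_mem hroots, Multiset.prod_replicate] at hc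
  have h1 := congrArg w hc
  rw [Polynomial.coeff_map, hw, map_mul, map_pow, map_pow, AbsoluteValue.map_neg, map_one, one_pow,
    one_mul, minpoly.isIntegrallyClosed_eq_field_fractions' K0 hyi, Polynomial.coeff_map] at h1
  have h2 := hv ((minpoly (MvPolynomial (Fin s) F) y).coeff 0) (by
    intro h3
    have h4 := minpoly.coeff_zero_ne_zero (A := K0) (Algebra.IsIntegral.isIntegral y) hy0
    rw [minpoly.isIntegrallyClosed_eq_field_fractions' K0 hyi, Polynomial.coeff_map, h3] at h4
    exact h4 (map_zero _))
  rw [h1] at h2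
  by_contra hlt
  push Not at hlt
  by_cases hd : Multiset.card (((minpoly K0 y).map (algebraMap K0 K)).roots) = 0
  · have : ((minpoly K0 y).map (algebraMap K0 K)).natDegree = 0 := by
      rw [← hd, hsp.natDegree_eq_card_roots]
    rw [Polynomial.natDegree_map] at this
    have := minpoly.natDegree_pos (A := K0) (Algebra.IsIntegral.isIntegral y : IsIntegral K0 y)
    omega
  · have := pow_lt_one₀ (w.nonneg y) hlt hd
    rw [minpoly.isIntegrallyClosed_eq_field_fractions' K0 hyi] at this
    linarith

lemma trans_P3 (v : AbsoluteValue K0 ℝ) (w : AbsoluteValue K ℝ)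
    (hw : ∀ x, w (algebraMap K0 K x) = v x) (B : ℝ)
    (hv : ∀ p : MvPolynomial (Fin s) F, v (algebraMap _ K0 p) ≤
      max B 1 ^ (Module.finrank K0 K) * (Module.finrank K0 K).choose (Module.finrank K0 K / 2) →
      p ∈ Set.range (MvPolynomial.C : F →+* MvPolynomial (Fin s) F)) (x : K)
    (hx : IsIntegral (MvPolynomial (Fin s) F) x) (hB : ∀ τ : K ≃ₐ[K0] K, w (τ x) ≤ B) :
    IsAlgebraic F x := by
  have hcoef : ∀ i, w (((minpoly K0 x).map (algebraMap K0 K)).coeff i) ≤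
      max B 1 ^ (Module.finrank K0 K) * (Module.finrank K0 K).choose (Module.finrank K0 K / 2) := by
    let _ : NormedField K := w.toNormedField
    exact Polynomial.coeff_bdd_of_roots_le (algebraMap K0 K)
      (minpoly.monic (Algebra.IsIntegral.isIntegral x))
      (Normal.splits (F := K0) (inferInstance : Normal K0 K) x) (minpoly.natDegree_le x)
      (fun z hz => by
        obtain ⟨τ, rfl⟩ := root_conj x z hz
        exact hB τ)
  have hlift : minpoly (MvPolynomial (Fin s) F) x ∈
      Polynomial.lifts (MvPolynomial.C : F →+* MvPolynomial (Fin s) F) := by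
    rw [Polynomial.lifts_iff_coeff_lifts]
    intro i
    refine hv _ ?_
    have := hcoef i
    rwa [Polynomial.coeff_map, hw, minpoly.isIntegrallyClosed_eq_field_fractions' K0 hx,
      Polynomial.coeff_map] at this
  obtain ⟨q, hq⟩ := (Polynomial.mem_lifts _).1 hlift
  refine ⟨q, ?_, ?_⟩
  · rintro rfl
    rw [Polynomial.map_zero] at hq
    exact minpoly.ne_zero hx hq.symm
  · have h1 := minpoly.aeval (MvPolynomial (Fin s) F) x
    rw [← hq, ← MvPolynomial.algebraMap_eq, Polynomial.aeval_map_algebraMap] at h1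
    exact h1

theorem UNA_trans (F K0 : Type*) [Field F] [Field K0] {s : ℕ}
    [Algebra (MvPolynomial (Fin s) F) K0] [IsFractionRing (MvPolynomial (Fin s) F) K0]
    [Algebra K0 K] [FiniteDimensional K0 K] [Normal K0 K]
    [Algebra (MvPolynomial (Fin s) F) K] [IsScalarTower (MvPolynomial (Fin s) F) K0 K]
    [Algebra F K] [IsScalarTower F (MvPolynomial (Fin s) F) K]
    {Γ G : Type*} [Group Γ] [Group G] {n : ℕ} {p : Γ →* G} {ρ : Γ →* Matrix (Fin n) (Fin n) K}
    (h : Rep p ρ) (hn : 2 ≤ n) (hintg : ∀ γ i j, IsIntegral (MvPolynomial (Fin s) F) (ρ γ i j))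
    (g0 : Γ) (hg0 : ¬ IsAlgebraic F (ρ g0).trace) : UNA G := by
  set M : ℝ := max (4 * n : ℝ) 1 ^ (Module.finrank K0 K) *
    (Module.finrank K0 K).choose (Module.finrank K0 K / 2) with hM
  have hM0 : 0 ≤ M := by positivity
  let Q : ℝ≥0 := ⟨M + 2, by positivity⟩
  have hQ : (1 : ℝ≥0) < Q := by
    rw [← NNReal.coe_lt_coe]; show (1 : ℝ) < M + 2; linarith
  have hQ' : (Q : ℝ) = M + 2 := rfl
  obtain ⟨v, hna, hv⟩ := exists_degabs (Fin s) F K0 Q hQ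
  obtain ⟨w, hw⟩ := ext_absval (K := K) v hna
  let va : (K ≃ₐ[K0] K) → AbsoluteValue K ℝ := fun τ => w.comp (f := (τ : K →+* K)) τ.injective
  have hva : ∀ τ x, va τ x = w (τ x) := fun τ x => rfl
  refine UNA_alg h hn va (integralClosure (MvPolynomial (Fin s) F) K).toSubring hintg ?_
    (algebraicClosure F K).toSubfield ?_ g0 (fun hc => hg0 (mem_algebraicClosure_iff.1 hc))
  · intro x hx h0
    refine trans_P1 v w hw ?_ x hx h0
    intro q hq
    rw [hv q hq]
    exact one_le_pow₀ (by exact_mod_cast hQ.le)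
  · intro x hx hB
    refine mem_algebraicClosure_iff.2 (trans_P3 v w hw (4 * n) ?_ x hx hB)
    intro q hq
    by_cases hq0 : q = 0
    · exact ⟨0, by simp [hq0]⟩
    rw [hv q hq0, ← hM] at hq
    have hdeg : q.totalDegree = 0 := by
      by_contra hne
      have : (Q : ℝ) ^ 1 ≤ (Q : ℝ) ^ q.totalDegree :=
        pow_le_pow_right₀ (by exact_mod_cast hQ.le) (by omega)
      rw [pow_one] at this
      linarith
    exact ⟨_, (MvPolynomial.totalDegree_eq_zero_iff_eq_C.1 hdeg).symm⟩
end trans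

end UKC


namespace UKC

theorem core_trans (F : Type*) [Field F] {s : ℕ} {O : Type*} [CommRing O] [IsDomain O]
    [Algebra F O] [Algebra (MvPolynomial (Fin s) F) O] [IsScalarTower F (MvPolynomial (Fin s) F) O]
    [Module.Finite (MvPolynomial (Fin s) F) O] [FaithfulSMul (MvPolynomial (Fin s) F) O]
    {Γ G : Type*} [Group Γ] [Group G] {n : ℕ} {p : Γ →* G} {ρ : Γ →* Matrix (Fin n) (Fin n) O}
    (h : Rep p ρ) (hn : 2 ≤ n) (g0 : Γ) (hg0 : ¬ IsAlgebraic F (ρ g0).trace) : UNA G := by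
  let P := MvPolynomial (Fin s) F
  let L := FractionRing O
  have : FaithfulSMul P L := FaithfulSMul.trans P O L
  let K0 := FractionRing P
  let _ : Algebra K0 L := FractionRing.liftAlgebra P L
  have : IsScalarTower P K0 L := FractionRing.isScalarTower_liftAlgebra P L
  have : FiniteDimensional K0 L := inferInstance
  let Ω := AlgebraicClosure L
  have : Algebra.IsAlgebraic K0 Ω := Algebra.IsAlgebraic.trans K0 L Ω
  have : IsAlgClosure K0 Ω := ⟨inferInstance, inferInstance⟩
  have : Normal K0 Ω := IsAlgClosure.normal K0 Ω
  let N := IntermediateField.normalClosure K0 L Ω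
  have : FiniteDimensional K0 N := inferInstance
  have : Normal K0 N := inferInstance
  have : IsScalarTower K0 L N := inferInstance
  let φ : O →+* N := (algebraMap L N).comp (algebraMap O L)
  let _ : Algebra P N := (φ.comp (algebraMap P O)).toAlgebra
  have : IsScalarTower P K0 N := IsScalarTower.of_algebraMap_eq fun x => by
    rw [IsScalarTower.algebraMap_apply K0 L N, ← IsScalarTower.algebraMap_apply P K0 L,
      IsScalarTower.algebraMap_apply P O L]
    rfl
  let _ : Algebra F N := (φ.comp (algebraMap F O)).toAlgebra
  have : IsScalarTower F P N := IsScalarTower.of_algebraMap_eq fun x => by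
    show φ (algebraMap F O x) = φ (algebraMap P O (algebraMap F P x))
    rw [← IsScalarTower.algebraMap_apply F P O]
  have hφ : Function.Injective φ := (algebraMap L N).injective.comp (IsFractionRing.injective O L)
  have h2 := h.map φ (fun w hw => (map_ne_zero_iff φ hφ).2 hw)
  let φP : O →ₐ[P] N := { φ with commutes' := fun _ => rfl }
  let φF : O →ₐ[F] N := { φ with commutes' := fun _ => rfl }
  refine UNA_trans F K0 (s := s) h2 hn (fun γ i j => ?_) g0 ?_
  · exact (Algebra.IsIntegral.isIntegral (R := P) (ρ γ i j)).map φP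
  · have e : ((ρ g0).map φ).trace = φ (ρ g0).trace :=
      (AddMonoidHom.map_trace φ.toAddMonoidHom (ρ g0)).symm
    intro h3
    have h4 : IsAlgebraic F ((ρ g0).map φ).trace := h3
    rw [e] at h4
    exact hg0 ((isAlgebraic_algHom_iff φF hφ).1 h4)

theorem core (F : Type*) [Field F] (hF : Finite F ∨ CharZero F ∧ Nonempty (F ≃+* ℚ))
    {O : Type*} [CommRing O] [IsDomain O] [Algebra F O] [Algebra.FiniteType F O]
    {Γ G : Type*} [Group Γ] [Group G] {n : ℕ} {p : Γ →* G} {ρ : Γ →* Matrix (Fin n) (Fin n) O}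
    (h : Rep p ρ) (hn : 2 ≤ n) (hfg : Group.FG Γ) : UNA G := by
  by_cases hal : ∀ g, IsAlgebraic F (ρ g).trace
  · exact UNA_alg_case F hF h hn hfg hal
  · push Not at hal
    obtain ⟨g0, hg0⟩ := hal
    obtain ⟨s, g, hg, hfin⟩ := exists_finite_inj_algHom_of_fg F O
    let _ : Algebra (MvPolynomial (Fin s) F) O := g.toRingHom.toAlgebra
    have : IsScalarTower F (MvPolynomial (Fin s) F) O :=
      IsScalarTower.of_algebraMap_eq fun x => (g.commutes x).symm
    have : Module.Finite (MvPolynomial (Fin s) F) O := hfin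
    have : FaithfulSMul (MvPolynomial (Fin s) F) O :=
      (faithfulSMul_iff_algebraMap_injective _ _).2 hg
    exact core_trans F (s := s) h hn g0 hg0

end UKC


namespace UKC

/-- an extension of a f.g. group by a finite group is f.g. -/
lemma fg_of_finite_ker {Γ G : Type*} [Group Γ] [Group G] (p : Γ →* G)
    (hs : Function.Surjective p) (hk : (p.ker : Set Γ).Finite) (hfg : Group.FG G) :
    Group.FG Γ := by
  obtain ⟨S, hS, hSf⟩ := Group.fg_iff.1 hfg
  choose q hq using hs
  refine Group.fg_iff.2 ⟨(q '' S) ∪ p.ker, ?_, (hSf.image q).union hk⟩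
  rw [eq_top_iff]
  intro x _
  set C := Subgroup.closure ((q '' S) ∪ (p.ker : Set Γ)) with hC
  have h1 : C.map p = ⊤ := by
    rw [eq_top_iff, ← hS, Subgroup.closure_le]
    intro s hs
    exact ⟨q s, Subgroup.subset_closure (Or.inl ⟨s, hs, rfl⟩), hq s⟩
  obtain ⟨c, hc, hcx⟩ : p x ∈ C.map p := by rw [h1]; trivial
  have : c⁻¹ * x ∈ C := Subgroup.subset_closure (Or.inr (by
    show c⁻¹ * x ∈ p.ker
    rw [MonoidHom.mem_ker]; simp [hcx]))
  simpa using C.mul_mem hc this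

/-- descend to a finitely generated domain over the prime field -/
theorem UNA_of_rep {Ω : Type*} [Field Ω] {Γ G : Type*} [Group Γ] [Group G] {n : ℕ} {p : Γ →* G}
    {ρ : Γ →* Matrix (Fin n) (Fin n) Ω} (h : Rep p ρ) (hn : 2 ≤ n) (hfg : Group.FG Γ)
    (F : Type) [Field F] (hF : Finite F ∨ CharZero F ∧ Nonempty (F ≃+* ℚ)) [Algebra F Ω] :
    UNA G := by
  obtain ⟨T, hT, hTf⟩ := Group.fg_iff.1 hfg
  let E : Set Ω := ⋃ t ∈ T, ⋃ i, ⋃ j, {ρ t i j, ρ t⁻¹ i j}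
  have hE : E.Finite := hTf.biUnion fun t _ => Set.finite_iUnion fun i => Set.finite_iUnion fun j =>
    Set.toFinite _
  let O := Algebra.adjoin F E
  have hmem : ∀ γ i j, ρ γ i j ∈ O := by
    refine entries_mem ρ T hT O.toSubring ?_
    intro t ht i j
    constructor
    · refine Algebra.subset_adjoin ?_
      simp only [E, Set.mem_iUnion]
      exact ⟨t, ht, i, j, Or.inl rfl⟩
    · refine Algebra.subset_adjoin ?_
      simp only [E, Set.mem_iUnion]
      exact ⟨t, ht, i, j, Or.inr rfl⟩
  have : Algebra.FiniteType F O := O.fg_iff_finiteType.1 (Subalgebra.fg_def.2 ⟨E, hE, rfl⟩)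
  let ι : O →+* Ω := O.val.toRingHom
  have hι : Function.Injective ι := Subtype.val_injective
  have hιm : Function.Injective (ι.mapMatrix : Matrix (Fin n) (Fin n) O →+* _) :=
    Matrix.map_injective hι
  let r : Γ → Matrix (Fin n) (Fin n) O := fun γ => Matrix.of fun i j => ⟨ρ γ i j, hmem γ i j⟩
  have hr : ∀ γ, (ι.mapMatrix : Matrix (Fin n) (Fin n) O →+* Matrix (Fin n) (Fin n) Ω) (r γ) = ρ γ :=
    fun γ => rfl
  let ρ' : Γ →* Matrix (Fin n) (Fin n) O :=
    { toFun := r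
      map_one' := hιm (by rw [hr, map_one, map_one])
      map_mul' := fun a b => hιm (by rw [hr, map_mul, map_mul, hr, hr]) }
  have hρ' : ∀ γ, ι.mapMatrix (ρ' γ) = ρ γ := fun γ => rfl
  have hR : Rep p ρ' := 
    { surj := h.surj
      kerfin := h.kerfin
      det := fun γ => hι (by rw [RingHom.map_det, hρ', h.det, map_one])
      scal := fun z hz => by
        obtain ⟨c, hc⟩ := h.scal z hz
        let i0 : Fin n := ⟨0, by omega⟩
        have hcO : c ∈ O := by
          have := hmem z i0 i0
          rw [hc] at this
          simpa using this
        refine ⟨⟨c, hcO⟩, hιm ?_⟩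
        rw [hρ', hc]
        ext i j
        by_cases hij : i = j
        · subst hij; simp [ι]
        · simp [ι, hij]
      gram := fun H hH => by
        obtain ⟨w, hw, hd⟩ := h.gram H hH
        refine ⟨w, hw, fun h0 => hd ?_⟩
        have := congrArg ι h0
        rw [RingHom.map_det, map_zero] at this
        rw [← this]
        congr 1
        ext i l
        show (ρ (w i) * ρ (w l)).trace = ι (ρ' (w i) * ρ' (w l)).trace
        rw [← hρ', ← hρ', ← map_mul]
        exact (AddMonoidHom.map_trace ι.toAddMonoidHom _).symm }
  exact core F hF hR hn hfg

theorem UNA_of_rep' {Ω : Type*} [Field Ω] {Γ G : Type*} [Group Γ] [Group G] {n : ℕ} {p : Γ →* G}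
    {ρ : Γ →* Matrix (Fin n) (Fin n) Ω} (h : Rep p ρ) (hn : 2 ≤ n) (hfg : Group.FG Γ) :
    UNA G := by
  obtain ⟨q, hq⟩ := CharP.exists Ω
  rcases CharP.char_is_prime_or_zero Ω q with hp | rfl
  · have : Fact q.Prime := ⟨hp⟩
    let _ : Algebra (ZMod q) Ω := ZMod.algebra Ω q
    exact UNA_of_rep h hn hfg (ZMod q) (Or.inl inferInstance)
  · have : CharZero Ω := CharP.charP_to_charZero Ω
    exact UNA_of_rep h hn hfg ℚ (Or.inr ⟨inferInstance, ⟨RingEquiv.refl ℚ⟩⟩)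

/-- the SL-lift -/
def slLift {Ω G : Type*} [Field Ω] [Group G] {n : ℕ} (ρ : G →* Matrix (Fin n) (Fin n) Ω) :
    Subgroup (G × Matrix.SpecialLinearGroup (Fin n) Ω) where
  carrier := {x | ∃ c : Ωˣ, ρ x.1 = (c : Ω) • (x.2 : Matrix (Fin n) (Fin n) Ω)}
  one_mem' := ⟨1, by simp⟩
  mul_mem' := by
    rintro a b ⟨c, hc⟩ ⟨d, hd⟩
    refine ⟨c * d, ?_⟩
    simp [hc, hd, smul_smul, mul_comm]
  inv_mem' := by
    rintro a ⟨c, hc⟩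
    refine ⟨c⁻¹, ?_⟩
    have h1 : ρ a⁻¹.1 * ρ a.1 = 1 := by rw [← map_mul]; simp
    rw [hc] at h1
    have h2 : (a.2 : Matrix (Fin n) (Fin n) Ω) * (a⁻¹.2 : Matrix (Fin n) (Fin n) Ω) = 1 :=
      congrArg (fun z : Matrix.SpecialLinearGroup (Fin n) Ω => (z : Matrix (Fin n) (Fin n) Ω))
        (mul_inv_cancel a.2)
    calc ρ a⁻¹.1 = ρ a⁻¹.1 * ((a.2 : Matrix (Fin n) (Fin n) Ω) * (a⁻¹.2 : Matrix (Fin n) (Fin n) Ω)) := by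
          rw [h2, mul_one]
      _ = ((c⁻¹ : Ωˣ) : Ω) • (ρ a⁻¹.1 * ((c : Ω) • (a.2 : Matrix (Fin n) (Fin n) Ω))) *
            (a⁻¹.2 : Matrix (Fin n) (Fin n) Ω) := by
          rw [Matrix.mul_smul, smul_smul, ← Units.val_mul, inv_mul_cancel, Units.val_one, one_smul,
            mul_assoc]
      _ = _ := by rw [h1, Matrix.smul_mul, one_mul]

theorem UNA_irr {Ω G : Type*} [Field Ω] [IsAlgClosed Ω] [Group G] (hfg : Group.FG G) {n : ℕ}
    (hn : 2 ≤ n) (ρ : G →* Matrix (Fin n) (Fin n) Ω)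
    (hspan : ∀ H : Subgroup G, H.FiniteIndex → Submodule.span Ω (ρ '' (H : Set G)) = ⊤) :
    UNA G := by
  let Γ := slLift ρ
  let p : Γ →* G := (MonoidHom.fst _ _).comp Γ.subtype
  let ρ' : Γ →* Matrix (Fin n) (Fin n) Ω :=
    SpecialLinearGroup.coeMonoidHom.comp ((MonoidHom.snd _ _).comp Γ.subtype)
  have hΓ : ∀ x : Γ, ∃ c : Ωˣ, ρ (p x) = (c : Ω) • ρ' x := fun x => x.2
  have hdet : ∀ x, (ρ' x).det = 1 := fun x => (x : G × SpecialLinearGroup (Fin n) Ω).2.2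
  have hsurj : Function.Surjective p := by
    intro γ
    have hu : IsUnit (ρ γ).det := (Matrix.isUnit_iff_isUnit_det _).1 ((Group.isUnit γ).map ρ)
    obtain ⟨c, hc⟩ := IsAlgClosed.exists_pow_nat_eq (ρ γ).det (by omega : 0 < n)
    have hc0 : c ≠ 0 := by
      rintro rfl
      rw [zero_pow (by omega)] at hc
      exact hu.ne_zero hc.symm
    let x : SpecialLinearGroup (Fin n) Ω := ⟨c⁻¹ • ρ γ, by
      rw [det_smul, Fintype.card_fin, ← hc, ← mul_pow, inv_mul_cancel₀ hc0, one_pow]⟩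
    refine ⟨⟨(γ, x), ⟨Units.mk0 c hc0, ?_⟩⟩, rfl⟩
    show ρ γ = c • (c⁻¹ • ρ γ)
    rw [smul_smul, mul_inv_cancel₀ hc0, one_smul]
  have hscal : ∀ z ∈ p.ker, ∃ c : Ω, c ^ n = 1 ∧ ρ' z = c • 1 := by
    intro z hz
    obtain ⟨c, hc⟩ := hΓ z
    rw [MonoidHom.mem_ker.1 hz, map_one] at hc
    have h1 : ρ' z = ((c⁻¹ : Ωˣ) : Ω) • (1 : Matrix (Fin n) (Fin n) Ω) := by
      rw [hc, smul_smul, ← Units.val_mul, inv_mul_cancel, Units.val_one, one_smul]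
    refine ⟨_, ?_, h1⟩
    have := hdet z
    rw [h1, det_smul, Fintype.card_fin, det_one, mul_one] at this
    exact this
  have hker : (p.ker : Set Γ).Finite := by
    have hroots : {c : Ω | c ^ n = 1}.Finite := by
      refine (Polynomial.nthRootsFinset n (1 : Ω)).finite_toSet.subset ?_
      intro c hc
      exact (Polynomial.mem_nthRootsFinset (by omega) _).2 hc
    have hi : Set.InjOn ρ' (p.ker : Set Γ) := by
      intro a ha b hb hab
      refine Subtype.ext (Prod.ext ?_ (Subtype.ext hab))
      exact (MonoidHom.mem_ker.1 ha).trans (MonoidHom.mem_ker.1 hb).symm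
    refine Set.Finite.of_finite_image ?_ hi
    refine (hroots.image fun c => c • (1 : Matrix (Fin n) (Fin n) Ω)).subset ?_
    rintro _ ⟨z, hz, rfl⟩
    obtain ⟨c, hc, hc'⟩ := hscal z hz
    exact ⟨c, hc, hc'.symm⟩
  have hR : Rep p ρ' :=
    { surj := hsurj
      kerfin := hker
      det := hdet
      scal := fun z hz => (hscal z hz).imp fun c hc => hc.2
      gram := fun H hH => by
        have hH2 : (H.map p).FiniteIndex := ⟨fun h0 => hH.1 (Nat.eq_zero_of_zero_dvd
          (h0 ▸ H.index_map_dvd hsurj))⟩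
        have hsp : Submodule.span Ω (Set.image ρ' (H : Set Γ)) = ⊤ := by
          rw [eq_top_iff, ← hspan _ hH2, Submodule.span_le]
          rintro _ ⟨_, ⟨x, hx, rfl⟩, rfl⟩
          obtain ⟨c, hc⟩ := hΓ x
          rw [hc]
          exact Submodule.smul_mem _ _ (Submodule.subset_span ⟨x, hx, rfl⟩)
        obtain ⟨w, hw, hli⟩ := exists_basis_in_set (ι := Fin n × Fin n)
          (by simp [Module.finrank_matrix]) _ hsp
        choose w' hw' hw'' using hw
        obtain rfl : (fun i => ρ' (w' i)) = w := funext hw''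
        exact ⟨w', hw', gram_ne _ hli
          (hli.span_eq_top_of_card_eq_finrank' (by simp [Module.finrank_matrix]))⟩ }
  exact UNA_of_rep' hR hn (fg_of_finite_ker p hsurj hker hfg)

end UKC


namespace UKC

lemma burnside {Ω V : Type*} [Field Ω] [IsAlgClosed Ω] [AddCommGroup V] [Module Ω V]
    [FiniteDimensional Ω V] [Nontrivial V] (A : Subalgebra Ω (Module.End Ω V))
    (hA : ∀ W : Submodule Ω V, (∀ a ∈ A, W ≤ W.comap a) → W = ⊥ ∨ W = ⊤) : A = ⊤ := by
  have hT : IsScalarTower Ω A V := ⟨fun x y z => rfl⟩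
  have hS : IsSimpleModule A V := by
    refine (isSimpleModule_iff_toSpanSingleton_surjective).2 ⟨inferInstance, ?_⟩
    intro m hm x
    let W : Submodule Ω V := (Submodule.span A {m}).restrictScalars Ω
    have hmW : m ∈ W := Submodule.mem_span_singleton_self m
    rcases hA W (fun a ha v hv => (Submodule.span A {m}).smul_mem ⟨a, ha⟩ hv) with h | h
    · exact absurd (by rw [h] at hmW; exact hmW) hm
    · have : x ∈ W := by rw [h]; trivial
      obtain ⟨a, ha⟩ := Submodule.mem_span_singleton.1 (this : x ∈ Submodule.span A {m})
      exact ⟨a, ha⟩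
  have hb := IsSimpleModule.algebraMap_end_bijective_of_isAlgClosed (A := A) (V := V) Ω
  rw [eq_top_iff]
  intro f _
  let f' : Module.End (Module.End A V) V :=
    { toFun := f
      map_add' := map_add f
      map_smul' := fun g v => by
        obtain ⟨c, rfl⟩ := hb.2 g
        exact map_smul f c v }
  obtain ⟨s, hs⟩ := (Module.finite_def.1 (inferInstance : Module.Finite Ω V))
  obtain ⟨r, hr⟩ := jacobson_density (R := A) f' s
  have : f = r := LinearMap.ext_on hs fun x hx => hr x hx
  rw [this]
  exact r.2

/-- derived series inside the ambient group -/
def DS {G : Type*} [Group G] (H : Subgroup G) : ℕ → Subgroup G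
  | 0 => H
  | k + 1 => ⁅DS H k, DS H k⁆

section
variable {G : Type*} [Group G]

lemma DS_mono {H H' : Subgroup G} (h : H ≤ H') (k : ℕ) : DS H k ≤ DS H' k := by
  induction k with
  | zero => exact h
  | succ k ih => exact Subgroup.commutator_mono ih ih

lemma DS_succ_le (H : Subgroup G) (k : ℕ) : DS H (k + 1) ≤ DS H k := by
  show ⁅DS H k, DS H k⁆ ≤ DS H k
  rw [Subgroup.commutator_le]
  intro a ha b hb
  rw [commutatorElement_def]
  exact mul_mem (mul_mem (mul_mem ha hb) (inv_mem ha)) (inv_mem hb)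

lemma DS_anti (H : Subgroup G) {k l : ℕ} (h : k ≤ l) : DS H l ≤ DS H k :=
  antitone_nat_of_succ_le (DS_succ_le H) h

lemma DS_map {G' : Type*} [Group G'] (f : G →* G') (H : Subgroup G) (k : ℕ) :
    (DS H k).map f = DS (H.map f) k := by
  induction k with
  | zero => rfl
  | succ k ih => 
    show Subgroup.map f ⁅DS H k, DS H k⁆ = ⁅DS (H.map f) k, DS (H.map f) k⁆
    rw [Subgroup.map_commutator, ih]

lemma DS_top (k : ℕ) : DS (⊤ : Subgroup G) k = derivedSeries G k := by
  induction k with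
  | zero => rfl
  | succ k ih => 
    show ⁅DS (⊤ : Subgroup G) k, DS (⊤ : Subgroup G) k⁆ = _
    rw [ih]; rfl

/-- the image of the representation is virtually solvable -/
def VS {M : Type*} [Monoid M] (ρ : G →* M) : Prop :=
  ∃ H : Subgroup G, H.FiniteIndex ∧ ∃ k, ∀ g ∈ DS H k, ρ g = 1

lemma VS_of_sub {M : Type*} [Monoid M] (ρ : G →* M) (H : Subgroup G) (hH : H.FiniteIndex)
    (h : VS (ρ.comp H.subtype)) : VS ρ := by
  obtain ⟨J, hJ, k, hk⟩ := h
  refine ⟨J.map H.subtype, ?_, k, ?_⟩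
  · constructor
    rw [Subgroup.index_map_subtype]
    exact mul_ne_zero hJ.1 hH.1
  · rw [← DS_map]
    rintro _ ⟨g, hg, rfl⟩
    exact hk g hg

lemma VS_solv {M : Type*} [Monoid M] (ρ : G →* M) (hi : Function.Injective ρ) (h : VS ρ) :
    ∃ H : Subgroup G, H.FiniteIndex ∧ IsSolvable H := by
  obtain ⟨H, hH, k, hk⟩ := h
  refine ⟨H, hH, ⟨k, ?_⟩⟩
  rw [eq_bot_iff, ← DS_top]
  intro x hx
  have h1 : (x : G) ∈ DS H k := by
    have : (x : G) ∈ (DS (⊤ : Subgroup H) k).map H.subtype := ⟨x, hx, rfl⟩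
    rw [DS_map, ← MonoidHom.range_eq_map, Subgroup.range_subtype] at this
    exact this
  have h2 := hi ((hk _ h1).trans (map_one ρ).symm)
  exact Subtype.ext h2

end

section
variable {Ω V G : Type*} [Field Ω] [AddCommGroup V] [Module Ω V] [Group G]

lemma VS_ext (ρ : G →* Module.End Ω V) (W : Submodule Ω V)
    (ρ1 : G →* Module.End Ω W) (ρ2 : G →* Module.End Ω (V ⧸ W))
    (h1 : ∀ g (w : W), (ρ1 g w : V) = ρ g w) (h2 : ∀ g v, ρ2 g (W.mkQ v) = W.mkQ (ρ g v))
    (v1 : VS ρ1) (v2 : VS ρ2) : VS ρ := by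
  obtain ⟨H1, f1, k1, e1⟩ := v1
  obtain ⟨H2, f2, k2, e2⟩ := v2
  refine ⟨H1 ⊓ H2, inferInstance, max k1 k2 + 1, ?_⟩
  have t1 : ∀ g ∈ DS (H1 ⊓ H2) (max k1 k2), ∀ w ∈ W, ρ g w = w := by
    intro g hg w hw
    have := h1 g ⟨w, hw⟩
    rw [e1 g (DS_anti _ (le_max_left _ _) (DS_mono inf_le_left _ hg))] at this
    exact this.symm
  have t2 : ∀ g ∈ DS (H1 ⊓ H2) (max k1 k2), ∀ v, ρ g v - v ∈ W := by
    intro g hg v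
    have := h2 g v
    rw [e2 g (DS_anti _ (le_max_right _ _) (DS_mono inf_le_right _ hg))] at this
    have h3 : W.mkQ (ρ g v - v) = 0 := by rw [map_sub, ← this]; simp
    exact (Submodule.Quotient.mk_eq_zero W).1 h3
  have key : DS (H1 ⊓ H2) (max k1 k2 + 1) ≤ ρ.toHomUnits.ker := by
    show ⁅_, _⁆ ≤ _
    rw [Subgroup.commutator_le]
    intro a ha b hb
    have hab : ρ a * ρ b = ρ b * ρ a := by
      ext v
      have q1 := t1 a ha _ (t2 b hb v)
      have q2 := t1 b hb _ (t2 a ha v)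
      rw [map_sub] at q1 q2
      show ρ a (ρ b v) = ρ b (ρ a v)
      rw [sub_eq_iff_eq_add] at q1 q2
      rw [q1, q2]; abel
    have hab' : ρ.toHomUnits a * ρ.toHomUnits b = ρ.toHomUnits b * ρ.toHomUnits a :=
      Units.ext hab
    rw [MonoidHom.mem_ker, map_commutatorElement, commutatorElement_eq_one_iff_mul_comm]
    exact hab'
  intro g hg
  exact congrArg Units.val (MonoidHom.mem_ker.1 (key hg))

lemma VS_one [FiniteDimensional Ω V] (ρ : G →* Module.End Ω V) (h : Module.finrank Ω V ≤ 1) :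
    VS ρ := by
  refine ⟨⊤, inferInstance, 1, ?_⟩
  have key : DS (⊤ : Subgroup G) 1 ≤ ρ.toHomUnits.ker := by
    show ⁅_, _⁆ ≤ _
    rw [Subgroup.commutator_le]
    intro a ha b hb
    have hab : ρ a * ρ b = ρ b * ρ a := by
      obtain ⟨v, hv⟩ := finrank_le_one_iff.1 h
      obtain ⟨x, hx⟩ := hv (ρ a v)
      obtain ⟨y, hy⟩ := hv (ρ b v)
      ext u
      obtain ⟨c, rfl⟩ := hv u
      simp [← hx, ← hy, smul_smul, mul_comm]
    have hab' : ρ.toHomUnits a * ρ.toHomUnits b = ρ.toHomUnits b * ρ.toHomUnits a :=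
      Units.ext hab
    rw [MonoidHom.mem_ker, map_commutatorElement, commutatorElement_eq_one_iff_mul_comm]
    exact hab'
  intro g hg
  exact congrArg Units.val (MonoidHom.mem_ker.1 (key hg))
end

end UKC


namespace UKC
universe u v w

lemma span_top {Ω V G : Type*} [Field Ω] [IsAlgClosed Ω] [AddCommGroup V] [Module Ω V]
    [FiniteDimensional Ω V] [Nontrivial V] [Group G] (ρ : G →* Module.End Ω V) (H : Subgroup G)
    (hA : ∀ W : Submodule Ω V, (∀ h ∈ H, W ≤ W.comap (ρ h)) → W = ⊥ ∨ W = ⊤) :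
    Submodule.span Ω (ρ '' (H : Set G)) = ⊤ := by
  have h1 : Algebra.adjoin Ω (ρ '' (H : Set G)) = ⊤ := by
    refine burnside _ fun W hW => hA W fun h hh => hW _ (Algebra.subset_adjoin ⟨h, hh, rfl⟩)
  have h2 : (ρ '' (H : Set G)) = ((H.toSubmonoid.map ρ : Submonoid (Module.End Ω V)) : Set _) := rfl
  have h3 := Algebra.adjoin_eq_span Ω (ρ '' (H : Set G))
  rw [h1, h2, Submonoid.closure_eq, ← h2] at h3
  rw [← h3]; rfl

theorem UNA_main (Ω : Type w) [Field Ω] [IsAlgClosed Ω] (d : ℕ) :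
    ∀ (G : Type u) (V : Type v) [Group G] [AddCommGroup V] [Module Ω V] [FiniteDimensional Ω V]
      (ρ : G →* Module.End Ω V), Module.finrank Ω V = d → Group.FG G → ¬ VS ρ → UNA G := by
  induction d using Nat.strong_induction_on with
  | _ d ih =>
  intro G V _ _ _ _ ρ hd hfg hvs
  by_cases hred : ∃ H : Subgroup G, H.FiniteIndex ∧ ∃ W : Submodule Ω V, W ≠ ⊥ ∧ W ≠ ⊤ ∧
      ∀ h ∈ H, W ≤ W.comap (ρ h)
  · obtain ⟨H, hH, W, hb, ht, hW⟩ := hred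
    refine UNA.of_finiteIndex H ?_
    have hHfg : Group.FG H := inferInstance
    let ρ1 : H →* Module.End Ω W :=
      { toFun := fun h => (ρ h).restrict (hW h h.2)
        map_one' := by ext w; simp
        map_mul' := fun a b => by ext w; simp }
    let ρ2 : H →* Module.End Ω (V ⧸ W) :=
      { toFun := fun h => W.mapQ W (ρ h) (hW h h.2)
        map_one' := by ext v; simp
        map_mul' := fun a b => by ext v; simp }
    have hlt1 : Module.finrank Ω W < d := hd ▸ Submodule.finrank_lt ht
    have hlt2 : Module.finrank Ω (V ⧸ W) < d := by
      have h1 := W.finrank_quotient_add_finrank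
      have h2 : 0 < Module.finrank Ω W := by
        have := Submodule.nontrivial_iff_ne_bot.2 hb
        exact Module.finrank_pos
      omega
    by_cases v1 : VS ρ1
    · by_cases v2 : VS ρ2
      · exact absurd (VS_of_sub ρ H hH (VS_ext (ρ.comp H.subtype) W ρ1 ρ2 (fun _ _ => rfl)
          (fun _ _ => rfl) v1 v2)) hvs
      · exact ih _ hlt2 H (V ⧸ W) ρ2 rfl hHfg v2
    · exact ih _ hlt1 H W ρ1 rfl hHfg v1
  · push Not at hred
    have h2 : 2 ≤ d := by
      by_contra h
      exact hvs (VS_one ρ (by omega))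
    have : Nontrivial V := Module.nontrivial_of_finrank_pos (R := Ω) (by omega)
    have hsp : ∀ H : Subgroup G, H.FiniteIndex → Submodule.span Ω (ρ '' (H : Set G)) = ⊤ := by
      intro H hH
      refine span_top ρ H fun W hW => ?_
      by_contra hc
      push Not at hc
      obtain ⟨h, hh, hn⟩ := hred H hH W hc.1 hc.2
      exact hn (hW h hh)
    let b := Module.finBasisOfFinrankEq Ω V hd
    let e := LinearMap.toMatrixAlgEquiv b
    refine UNA_irr hfg h2 (e.toAlgHom.toRingHom.toMonoidHom.comp ρ) fun H hH => ?_
    have h3 := congrArg (Submodule.map e.toLinearMap) (hsp H hH)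
    rw [Submodule.map_span, ← Set.image_comp, Submodule.map_top] at h3
    exact h3.trans (LinearMap.range_eq_top.2 e.surjective)

theorem UNA_linear {K : Type*} [Field K] {n : ℕ}
    (Γ : Subgroup (GL (Fin n) K)) (hfg : Group.FG Γ)
    (hns : ¬ ∃ H : Subgroup Γ, H.FiniteIndex ∧ Group.IsSolvable ↥H) : UNA Γ := by
  let Ω := AlgebraicClosure K
  let ρ : Γ →* Module.End Ω (Fin n → Ω) :=
    (Matrix.toLinAlgEquiv' (R := Ω) (n := Fin n)).toAlgHom.toRingHom.toMonoidHom.comp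
      ((algebraMap K Ω).mapMatrix.toMonoidHom.comp ((Units.coeHom _).comp Γ.subtype))
  have hρ : Function.Injective ρ := by
    refine Matrix.toLinAlgEquiv'.injective.comp ?_
    refine (Matrix.map_injective (algebraMap K Ω).injective).comp ?_
    exact Units.val_injective.comp Subtype.val_injective
  exact UNA_main Ω n Γ (Fin n → Ω) ρ (by simp) hfg fun h => hns (VS_solv ρ hρ h)

end UKC

theorem uniform_kazhdan_constant {K : Type*} [Field K] {n : ℕ}
    (Γ : Subgroup (GL (Fin n) K)) (hfg : Group.FG Γ)
    (hns : ¬ ∃ H : Subgroup Γ, H.FiniteIndex ∧ IsSolvable ↥H) :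
    ∃ ε : ℝ, 0 < ε ∧
      ∀ S : Finset Γ, (1 : Γ) ∈ S → (∀ s ∈ S, s⁻¹ ∈ S) →
        Subgroup.closure (S : Set Γ) = ⊤ →
        ∀ f : Γ → ℂ, Memℓp f 2 →
          ∃ s ∈ S, ε ^ 2 * ∑' x : Γ, ‖f x‖ ^ 2 ≤ ∑' x : Γ, ‖f (s⁻¹ * x) - f x‖ ^ 2 := by
  exact (UKC.UNA_linear Γ hfg hns).kazhdan
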